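/- arXiv:1911.04691 — 3 statements merged into one kernel-verified Lean document; each statement's English description precedes it below -/
import Mathlib

section
/- Let (X,T) be a minimal topological dynamical system. The following statements are equivalent: (1) every pair is an Ind_ap-pair, i.e. Ind_ap(X,T) = X × X; (2) (X,T) is weakly mixing, i.e. the product system (X × X, T × T) is topologically transitive; (3) AP^[d](X,T) = X × X for some d ≥ 2. -/
/-! Write `N(A, B)` for the set of `n` with `T ^ n A ∩ B` nonempty.

Weak mixing implies the other two conditions. By Furstenberg's intersection lemma
(`exists_hit_subset`) and minimality the sets `N(A, B)` are thickly syndetic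
(`thicklySyndetic_hit`). Thickly syndetic sets are closed under finite intersections and under
`S ↦ {k | c * k ∈ S}`, so one `k` satisfies finitely many conditions `c * k ∈ N(A, B)` with various
`c ≥ 1`. An induction on the length then shows that the tuples `(x, T ^ n x, …, T ^ (m * n) x)` visit
every box `U 0 × ⋯ × U m` (`exists_progression`), and a variant of Furstenberg's lemma gives a common
`n` for finitely many boxes (`exists_common_progression`). Suitable boxes give `IndAP T = univ` and
`AP T d = univ`.

If all pairs are `Ind_ap`-pairs, then `N(U, U)` meets `N(U, V)` for all nonempty open `U` and `V`,
which is Petersen's criterion for weak mixing (`weaklyMixing_of_hit`).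

Let every pair be in `AP T d`; only the condition at time `n` is used, so that all pairs are
regionally proximal. If `T × T` is not transitive, there is a closed invariant `K ≠ X × X` containing
a nonempty open set. Take an invariant probability measure `μ`. The sections `K_x` all have the same
measure, and `μ (K_x \ K_y)` is invariant, satisfies the triangle inequality and is uniformly small
for `x` near `y` (`section_diff_small`); regional proximality forces it to vanish
(`weaklyMixing_of_ap`). Hence a nonempty open set `B` contained in one section is contained in all of
them, since `μ` has full support, and by invariance and minimality `K = X × X`, a contradiction. -/

/-- The regionally proximal relation of order `d` along arithmetic progressions. -/
def AP {X : Type*} [MetricSpace X] (T : Equiv.Perm X) (d : ℕ) : Set (X × X) :=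
  {p | ∀ δ : ℝ, 0 < δ → ∃ x' y' : X, ∃ n : ℤ,
    dist p.1 x' < δ ∧ dist p.2 y' < δ ∧
    ∀ i : ℕ, 1 ≤ i → i ≤ d →
      dist ((T ^ ((i : ℤ) * n)) x') ((T ^ ((i : ℤ) * n)) y') < δ}

/-- A system is minimal if every (full) orbit is dense. -/
def IsMinimal {X : Type*} [TopologicalSpace X] (T : Equiv.Perm X) : Prop :=
  ∀ x : X, Dense (Set.range fun n : ℤ => (T ^ n) x)

/-- A system is weakly mixing if the product system `(X × X, T × T)` is topologically
transitive. -/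
def IsWeaklyMixing {X : Type*} [TopologicalSpace X] (T : Equiv.Perm X) : Prop :=
  ∀ U V : Set (X × X), IsOpen U → IsOpen V → U.Nonempty → V.Nonempty →
    ∃ n : ℤ, ((fun p : X × X => ((T ^ n) p.1, (T ^ n) p.2)) '' U ∩ V).Nonempty

/-- `Ind_ap` pairs: `(x₁, x₂)` such that for all neighborhoods `U₁ ∋ x₁`, `U₂ ∋ x₂` and
every `d ≥ 1` there is `n > 0` with `⋂_{i=1}^{d} T^{-i n} U_{t_i} ≠ ∅` for every choice
`(t_1, …, t_d) ∈ {1, 2}^d` (here `t i = false` selects `U₁` and `t i = true` selects `U₂`). -/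
def IndAP {X : Type*} [TopologicalSpace X] (T : Equiv.Perm X) : Set (X × X) :=
  {p | ∀ U₁ ∈ nhds p.1, ∀ U₂ ∈ nhds p.2, ∀ d : ℕ, 1 ≤ d →
    ∃ n : ℕ, 0 < n ∧ ∀ t : Fin d → Bool,
      (⋂ i : Fin d, (⇑(T ^ (((i : ℕ) + 1) * n)) ⁻¹' (if t i then U₂ else U₁))).Nonempty}

open MeasureTheory Filter Topology

/-! ### Iterates and minimality -/

lemma continuous_zpow_of {X : Type*} [TopologicalSpace X] {T : Equiv.Perm X}
    (hT : Continuous T) (hT' : Continuous T.symm) (n : ℤ) : Continuous ⇑(T ^ n) := by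
  have hpow : ∀ (S : Equiv.Perm X), Continuous S → ∀ k : ℕ, Continuous ⇑(S ^ k) := by
    intro S hS k
    induction k with
    | zero => simpa using continuous_id
    | succ k ih => rw [pow_succ, Equiv.Perm.coe_mul]; exact ih.comp hS
  obtain ⟨k, rfl | rfl⟩ := n.eq_nat_or_neg
  · rw [zpow_natCast]; exact hpow T hT k
  · rw [zpow_neg, zpow_natCast, ← inv_pow]; exact hpow T⁻¹ hT' k

lemma zpow_add_perm {X : Type*} (T : Equiv.Perm X) (m n : ℤ) (x : X) :
    (T ^ (m + n)) x = (T ^ m) ((T ^ n) x) := by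
  rw [zpow_add, Equiv.Perm.mul_apply]

lemma exists_zpow_mem {X : Type*} [TopologicalSpace X] {T : Equiv.Perm X}
    (hmin : IsMinimal T) {U : Set X} (hU : IsOpen U) (hne : U.Nonempty) (x : X) :
    ∃ n : ℤ, (T ^ n) x ∈ U := by
  obtain ⟨_, hy, n, rfl⟩ := (hmin x).inter_open_nonempty U hU hne
  exact ⟨n, hy⟩

/-- In a compact minimal system every nonempty open set is reached from every point within
uniformly bounded time. -/
lemma exists_finset_hit {X : Type*} [TopologicalSpace X] [CompactSpace X] {T : Equiv.Perm X}
    (hT : Continuous T) (hT' : Continuous T.symm) (hmin : IsMinimal T)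
    {U : Set X} (hU : IsOpen U) (hne : U.Nonempty) :
    ∃ J : Finset ℤ, ∀ x, ∃ j ∈ J, (T ^ j) x ∈ U := by
  obtain ⟨J, hJ⟩ := (isCompact_univ (X := X)).elim_finite_subcover
    (fun j : ℤ => ⇑(T ^ j) ⁻¹' U) (fun j => hU.preimage (continuous_zpow_of hT hT' j))
    (fun x _ => Set.mem_iUnion.2 (exists_zpow_mem hmin hU hne x))
  refine ⟨J, fun x => ?_⟩
  simpa using hJ (Set.mem_univ x)

/-! ### Times of return -/

/-- The set `N(A, B)` of times `n` at which some point of `A` is in `B`. -/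
def hit {X : Type*} (T : Equiv.Perm X) (A B : Set X) : Set ℤ :=
  {n | ∃ x ∈ A, (T ^ n) x ∈ B}

/-- Weak mixing, tested on open boxes. -/
lemma isWeaklyMixing_iff_hit {X : Type*} [TopologicalSpace X] (T : Equiv.Perm X) :
    IsWeaklyMixing T ↔ ∀ A B C D : Set X, IsOpen A → IsOpen B → IsOpen C → IsOpen D →
      A.Nonempty → B.Nonempty → C.Nonempty → D.Nonempty →
      (hit T A B ∩ hit T C D).Nonempty := by
  constructor
  · intro h A B C D hA hB hC hD nA nB nC nD
    obtain ⟨n, _, ⟨⟨x, y⟩, ⟨hx, hy⟩, rfl⟩, hx', hy'⟩ :=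
      h (A ×ˢ C) (B ×ˢ D) (hA.prod hC) (hB.prod hD) (nA.prod nC) (nB.prod nD)
    exact ⟨n, ⟨x, hx, hx'⟩, ⟨y, hy, hy'⟩⟩
  · rintro h U V hU hV ⟨⟨a, c⟩, hac⟩ ⟨⟨b, d⟩, hbd⟩
    obtain ⟨A, C, hA, hC, ha, hc, hAC⟩ := isOpen_prod_iff.1 hU a c hac
    obtain ⟨B, D, hB, hD, hb, hd, hBD⟩ := isOpen_prod_iff.1 hV b d hbd
    obtain ⟨n, ⟨x, hx, hx'⟩, ⟨y, hy, hy'⟩⟩ :=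
      h A B C D hA hB hC hD ⟨a, ha⟩ ⟨b, hb⟩ ⟨c, hc⟩ ⟨d, hd⟩
    exact ⟨n, _, ⟨(x, y), hAC ⟨hx, hy⟩, rfl⟩, hBD ⟨hx', hy'⟩⟩

/-- A set of integers is thickly syndetic if for every `M` the left end points of the intervals of
length `M` contained in it occur with bounded gaps. -/
def ThicklySyndetic (S : Set ℤ) : Prop :=
  ∀ M : ℤ, ∃ L : ℤ, ∀ a : ℤ, ∃ b, a ≤ b ∧ b ≤ a + L ∧ ∀ r, 0 ≤ r → r ≤ M → b + r ∈ S

lemma ThicklySyndetic.inter {S S' : Set ℤ} (h : ThicklySyndetic S) (h' : ThicklySyndetic S') :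
    ThicklySyndetic (S ∩ S') := by
  intro M
  obtain ⟨L', hL'⟩ := h' M
  obtain ⟨L, hL⟩ := h (L' + M)
  refine ⟨L + L', fun a => ?_⟩
  obtain ⟨b, hb1, hb2, hb⟩ := hL a
  obtain ⟨c, hc1, hc2, hc⟩ := hL' b
  refine ⟨c, by lia, by lia, fun r h0 hr => ⟨?_, hc r h0 hr⟩⟩
  have := hb (c - b + r) (by lia) (by lia)
  rwa [show b + (c - b + r) = c + r by ring] at this

lemma thicklySyndetic_biInter {ι : Type*} (s : Finset ι) (S : ι → Set ℤ)
    (h : ∀ i ∈ s, ThicklySyndetic (S i)) : ThicklySyndetic {n | ∀ i ∈ s, n ∈ S i} := by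
  classical
  induction s using Finset.induction_on with
  | empty => exact fun M => ⟨0, fun a => ⟨a, le_rfl, by lia, by simp⟩⟩
  | insert i s _ ih =>
    have := (h i (by simp)).inter (ih fun j hj => h j (by simp [hj]))
    convert this using 1
    ext n; simp

lemma ThicklySyndetic.dilate {S : Set ℤ} (h : ThicklySyndetic S) {c : ℤ} (hc : 1 ≤ c) :
    ThicklySyndetic {k | c * k ∈ S} := by
  intro M
  obtain ⟨L, hL⟩ := h (c * M + c)
  refine ⟨L + c, fun a => ?_⟩
  obtain ⟨b, hb1, hb2, hb⟩ := hL (c * a)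
  -- the least multiple of `c` that is at least `b`
  obtain ⟨k, hk1, hk2⟩ : ∃ k, b ≤ c * k ∧ c * k < b + c := by
    refine ⟨-((-b) / c), ?_, ?_⟩
    · nlinarith [Int.mul_ediv_self_le (x := -b) (k := c) (by lia)]
    · nlinarith [Int.lt_mul_ediv_self_add (x := -b) (k := c) (by lia)]
  refine ⟨k, by nlinarith, ?_, fun r h0 hr => ?_⟩
  · by_contra! hlt
    have h1 : c * (a + (L + c) + 1) ≤ c * k := by gcongr; lia
    nlinarith [show 0 ≤ L by lia]
  · have := hb (c * k - b + c * r) (by nlinarith) (by nlinarith)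
    rwa [show b + (c * k - b + c * r) = c * (k + r) by ring] at this

lemma ThicklySyndetic.exists_ge {S : Set ℤ} (h : ThicklySyndetic S) (a : ℤ) :
    ∃ n ∈ S, a ≤ n := by
  obtain ⟨L, hL⟩ := h 0
  obtain ⟨b, hb1, -, hb⟩ := hL a
  exact ⟨b, by simpa using hb 0 le_rfl le_rfl, hb1⟩

/-- Furstenberg's intersection lemma: in a weakly mixing system the sets `N(A, B)` form a filter
base. -/
lemma exists_hit_subset {X : Type*} [TopologicalSpace X] {T : Equiv.Perm X}
    (hT : Continuous T) (hT' : Continuous T.symm) (hwm : IsWeaklyMixing T) [Nonempty X]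
    {ι : Type*} (s : Finset ι) (A B : ι → Set X)
    (hA : ∀ i ∈ s, IsOpen (A i) ∧ (A i).Nonempty) (hB : ∀ i ∈ s, IsOpen (B i) ∧ (B i).Nonempty) :
    ∃ C D : Set X, IsOpen C ∧ C.Nonempty ∧ IsOpen D ∧ D.Nonempty ∧
      ∀ i ∈ s, hit T C D ⊆ hit T (A i) (B i) := by
  classical
  induction s using Finset.induction_on with
  | empty => exact ⟨.univ, .univ, isOpen_univ, Set.univ_nonempty, isOpen_univ, Set.univ_nonempty,
      by simp⟩
  | insert i s _ ih =>
    obtain ⟨C, D, hC, nC, hD, nD, hCD⟩ :=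
      ih (fun j hj => hA j (by simp [hj])) (fun j hj => hB j (by simp [hj]))
    obtain ⟨hAi, nAi⟩ := hA i (by simp)
    obtain ⟨hBi, nBi⟩ := hB i (by simp)
    obtain ⟨n, ⟨x, hx, hx'⟩, ⟨y, hy, hy'⟩⟩ :=
      (isWeaklyMixing_iff_hit T).1 hwm C (A i) D (B i) hC hAi hD hBi nC nAi nD nBi
    refine ⟨C ∩ ⇑(T ^ n) ⁻¹' A i, D ∩ ⇑(T ^ n) ⁻¹' B i,
      hC.inter (hAi.preimage (continuous_zpow_of hT hT' n)), ⟨x, hx, hx'⟩,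
      hD.inter (hBi.preimage (continuous_zpow_of hT hT' n)), ⟨y, hy, hy'⟩, ?_⟩
    rintro j hj k ⟨z, ⟨hz1, hz2⟩, hz3, hz4⟩
    rcases Finset.mem_insert.1 hj with rfl | hj
    · refine ⟨_, hz2, ?_⟩
      rw [← zpow_add_perm, add_comm, zpow_add_perm]
      exact hz4
    · exact hCD j hj ⟨z, hz1, hz3⟩

/-- In a minimal weakly mixing system the sets `N(A, B)` are thickly syndetic. -/
lemma thicklySyndetic_hit {X : Type*} [TopologicalSpace X] [CompactSpace X] {T : Equiv.Perm X}
    (hT : Continuous T) (hT' : Continuous T.symm) (hmin : IsMinimal T) (hwm : IsWeaklyMixing T)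
    {A B : Set X} (hA : IsOpen A) (nA : A.Nonempty) (hB : IsOpen B) (nB : B.Nonempty) :
    ThicklySyndetic (hit T A B) := by
  intro M
  have : Nonempty X := nA.to_type
  obtain ⟨C, D, hC, ⟨x, hx⟩, hD, nD, hCD⟩ := exists_hit_subset hT hT' hwm (Finset.Icc 0 M)
    (fun _ => A) (fun r => ⇑(T ^ r) ⁻¹' B) (fun _ _ => ⟨hA, nA⟩)
    (fun r _ => ⟨hB.preimage (continuous_zpow_of hT hT' r),
      nB.preimage (T ^ r).surjective⟩)
  obtain ⟨J, hJ⟩ := exists_finset_hit hT hT' hmin hD nD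
  obtain ⟨K, hK⟩ : ∃ K : ℤ, ∀ j ∈ J, |j| ≤ K := by
    obtain ⟨K, hK⟩ := (J.image fun j => |j|).bddAbove
    exact ⟨K, fun j hj => hK (by simpa using ⟨j, hj, rfl⟩)⟩
  refine ⟨2 * K, fun a => ?_⟩
  obtain ⟨j, hj, hxj⟩ := hJ ((T ^ (a + K)) x)
  have := abs_le.1 (hK j hj)
  refine ⟨j + (a + K), by lia, by lia, fun r h0 hr => ?_⟩
  obtain ⟨y, hy, hy'⟩ := hCD r (by simp [h0, hr])
    (show j + (a + K) ∈ hit T C D from ⟨x, hx, by rwa [zpow_add_perm]⟩)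
  refine ⟨y, hy, ?_⟩
  rw [add_comm, zpow_add_perm]
  exact hy'

/-! ### Multiple transitivity along arithmetic progressions -/

/-- The open sets `U i` shrink to `V i` so that, for each `j ∈ J`, one `k ≥ 0` moves `V i` into
`U i` by `T ^ (i * k + j)` simultaneously for all `1 ≤ i ≤ m`. -/
lemma exists_shrink {X : Type*} [TopologicalSpace X] [CompactSpace X] {T : Equiv.Perm X}
    (hT : Continuous T) (hT' : Continuous T.symm) (hmin : IsMinimal T) (hwm : IsWeaklyMixing T)
    (m : ℕ) (U : ℕ → Set X) (hU : ∀ i, IsOpen (U i)) (nU : ∀ i, (U i).Nonempty) (J : Finset ℤ) :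
    ∃ V : ℕ → Set X, (∀ i, IsOpen (V i)) ∧ (∀ i, (V i).Nonempty) ∧
      ∀ j ∈ J, ∃ k : ℤ, 0 ≤ k ∧ ∀ i : ℕ, 1 ≤ i → i ≤ m → ∀ x ∈ V i,
        (T ^ ((i : ℤ) * k + j)) x ∈ U i := by
  classical
  induction J using Finset.induction_on with
  | empty => exact ⟨U, hU, nU, by simp⟩
  | insert j J _ ih =>
    obtain ⟨V, hV, nV, hJ⟩ := ih
    obtain ⟨k, hk, hk0⟩ := (thicklySyndetic_biInter (Finset.Icc 1 m)
      (fun i : ℕ => {k | (i : ℤ) * k ∈ hit T (V i) (⇑(T ^ j) ⁻¹' U i)})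
      (fun i hi => (thicklySyndetic_hit hT hT' hmin hwm (hV i) (nV i)
        ((hU i).preimage (continuous_zpow_of hT hT' j))
        ((nU i).preimage (T ^ j).surjective)).dilate
        (by exact_mod_cast (Finset.mem_Icc.1 hi).1))).exists_ge 0
    refine ⟨fun i => if 1 ≤ i ∧ i ≤ m then V i ∩ ⇑(T ^ ((i : ℤ) * k + j)) ⁻¹' U i else V i,
      fun i => ?_, fun i => ?_, ?_⟩
    · dsimp only; split_ifs
      · exact (hV i).inter ((hU i).preimage (continuous_zpow_of hT hT' _))
      · exact hV i
    · dsimp only; split_ifs with hi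
      · obtain ⟨x, hx, hx'⟩ := hk i (Finset.mem_Icc.2 hi)
        refine ⟨x, hx, ?_⟩
        rw [Set.mem_preimage, add_comm, zpow_add_perm]
        exact hx'
      · exact nV i
    · intro j' hj'
      rcases Finset.mem_insert.1 hj' with rfl | hj'
      · refine ⟨k, hk0, fun i h1 h2 x hx => ?_⟩
        dsimp only at hx
        rw [if_pos ⟨h1, h2⟩] at hx
        exact hx.2
      · obtain ⟨k', hk', h⟩ := hJ j' hj'
        refine ⟨k', hk', fun i h1 h2 x hx => h i h1 h2 x ?_⟩
        dsimp only at hx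
        rw [if_pos ⟨h1, h2⟩] at hx
        exact hx.1

/-- A minimal weakly mixing system is multiply transitive along arithmetic progressions. The
induction step shrinks `U 1, …, U (m + 1)`, visits the shrunken sets along a progression started at
some point `y`, and then uses minimality to move `y` into `U 0` by one of finitely many `T ^ j`; the
shift `k` attached to `j` corrects the step. -/
lemma exists_progression {X : Type*} [TopologicalSpace X] [CompactSpace X] {T : Equiv.Perm X}
    (hT : Continuous T) (hT' : Continuous T.symm) (hmin : IsMinimal T) (hwm : IsWeaklyMixing T)
    (m : ℕ) : ∀ (U : ℕ → Set X), (∀ i, IsOpen (U i)) → (∀ i, (U i).Nonempty) → ∀ a : ℤ,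
    ∃ n, a ≤ n ∧ ∃ x, ∀ i : ℕ, i ≤ m → (T ^ ((i : ℤ) * n)) x ∈ U i := by
  induction m with
  | zero =>
    intro U hU nU a
    obtain ⟨x, hx⟩ := nU 0
    refine ⟨a, le_rfl, x, fun i hi => ?_⟩
    obtain rfl : i = 0 := by lia
    simpa using hx
  | succ m ih =>
    intro U hU nU a
    obtain ⟨J, hJ⟩ := exists_finset_hit hT hT' hmin (hU 0) (nU 0)
    obtain ⟨V, hV, nV, hVJ⟩ := exists_shrink hT hT' hmin hwm (m + 1) U hU nU J
    obtain ⟨n, hn, x, hx⟩ := ih (fun i => V (i + 1)) (fun i => hV _) (fun i => nV _) a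
    -- `y = T ^ (-n) x` satisfies `T ^ (i * n) y ∈ V i` for `1 ≤ i ≤ m + 1`
    obtain ⟨j, hj, hxj⟩ := hJ ((T ^ (-n)) x)
    obtain ⟨k, hk, hkV⟩ := hVJ j hj
    refine ⟨n + k, by lia, (T ^ j) ((T ^ (-n)) x), fun i hi => ?_⟩
    rcases i with _ | i
    · simpa using hxj
    · have := hkV (i + 1) (by lia) hi _ (hx i (by lia))
      rw [← zpow_add_perm] at this ⊢
      rw [← zpow_add_perm]
      convert this using 3
      push_cast; ring

/-- Finitely many tuples of open sets are all visited along a common step `n ≥ a`. -/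
lemma exists_common_progression {X : Type*} [TopologicalSpace X] [CompactSpace X] [Nonempty X]
    {T : Equiv.Perm X} (hT : Continuous T) (hT' : Continuous T.symm) (hmin : IsMinimal T)
    (hwm : IsWeaklyMixing T) (m : ℕ) {ι : Type*} (s : Finset ι) (U : ι → ℕ → Set X)
    (hU : ∀ σ i, IsOpen (U σ i)) (nU : ∀ σ i, (U σ i).Nonempty) (a : ℤ) :
    ∃ n, a ≤ n ∧ ∀ σ ∈ s, ∃ x, ∀ i : ℕ, i ≤ m → (T ^ ((i : ℤ) * n)) x ∈ U σ i := by
  classical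
  -- as in Furstenberg's intersection lemma, one tuple `W` controls all the tuples `U σ`
  obtain ⟨W, hW, nW, h⟩ : ∃ W : ℕ → Set X, (∀ i, IsOpen (W i)) ∧ (∀ i, (W i).Nonempty) ∧
      ∀ σ ∈ s, ∃ k : ℤ, ∀ i : ℕ, i ≤ m → ∀ x ∈ W i, (T ^ k) x ∈ U σ i := by
    induction s using Finset.induction_on with
    | empty => exact ⟨fun _ => .univ, fun _ => isOpen_univ, fun _ => Set.univ_nonempty, by simp⟩
    | insert σ s _ ih =>
      obtain ⟨W, hW, nW, h⟩ := ih
      obtain ⟨k, hk, -⟩ := (thicklySyndetic_biInter (Finset.range (m + 1))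
        (fun i : ℕ => hit T (W i) (U σ i)) (fun i _ =>
          thicklySyndetic_hit hT hT' hmin hwm (hW i) (nW i) (hU σ i) (nU σ i))).exists_ge 0
      refine ⟨fun i => if i ≤ m then W i ∩ ⇑(T ^ k) ⁻¹' U σ i else W i,
        fun i => ?_, fun i => ?_, ?_⟩
      · dsimp only; split_ifs
        · exact (hW i).inter ((hU σ i).preimage (continuous_zpow_of hT hT' _))
        · exact hW i
      · dsimp only; split_ifs with hi
        · exact hk i (by simp; lia)
        · exact nW i
      · intro τ hτ
        rcases Finset.mem_insert.1 hτ with rfl | hτ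
        · refine ⟨k, fun i hi x hx => ?_⟩
          dsimp only at hx
          rw [if_pos hi] at hx
          exact hx.2
        · obtain ⟨k', hk'⟩ := h τ hτ
          refine ⟨k', fun i hi x hx => hk' i hi x ?_⟩
          dsimp only at hx
          rw [if_pos hi] at hx
          exact hx.1
  obtain ⟨n, hn, x, hx⟩ := exists_progression hT hT' hmin hwm m W hW nW a
  refine ⟨n, hn, fun σ hσ => ?_⟩
  obtain ⟨k, hk⟩ := h σ hσ
  refine ⟨(T ^ k) x, fun i hi => ?_⟩
  rw [← zpow_add_perm, add_comm, zpow_add_perm]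
  exact hk i hi _ (hx i hi)

/-- The sets in the definition of `IndAP` start at time `n`, so the tuple of open sets belonging to a
choice `t` has the whole space at index `0`; all choices are handled by a common step. -/
lemma indAP_of_weaklyMixing {X : Type*} [TopologicalSpace X] [CompactSpace X]
    {T : Equiv.Perm X} (hT : Continuous T) (hT' : Continuous T.symm) (hmin : IsMinimal T)
    (hwm : IsWeaklyMixing T) : IndAP T = Set.univ := by
  refine Set.eq_univ_of_forall ?_
  rintro ⟨x₁, x₂⟩ U₁ hU₁ U₂ hU₂ d hd
  have : Nonempty X := ⟨x₁⟩
  obtain ⟨O₁, hO₁, oO₁, hx₁⟩ := mem_nhds_iff.1 hU₁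
  obtain ⟨O₂, hO₂, oO₂, hx₂⟩ := mem_nhds_iff.1 hU₂
  obtain ⟨n, hn, h⟩ := exists_common_progression hT hT' hmin hwm d
    (Finset.univ : Finset (Fin d → Bool))
    (fun t i => if h : i - 1 < d then (if t ⟨i - 1, h⟩ then O₂ else O₁) else .univ)
    (fun t i => by split_ifs <;> first | assumption | exact isOpen_univ)
    (fun t i => by
      split_ifs
      exacts [⟨x₂, hx₂⟩, ⟨x₁, hx₁⟩, Set.univ_nonempty]) 1
  lift n to ℕ using by lia
  refine ⟨n, by lia, fun t => ?_⟩
  obtain ⟨x, hx⟩ := h t (Finset.mem_univ t)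
  refine ⟨x, Set.mem_iInter.2 fun i => ?_⟩
  have := hx (i + 1) (by lia)
  rw [dif_pos (by simp)] at this
  simp only [Nat.add_sub_cancel, Fin.eta] at this
  rw [Set.mem_preimage, ← zpow_natCast]
  push_cast at this ⊢
  split_ifs at this ⊢ with ht
  · exact hO₂ this
  · exact hO₁ this

/-- In a weakly mixing minimal system a common step takes a point near `x` and a point near `y` to
the same small ball at all the times `n, …, d * n`. -/
lemma ap_of_weaklyMixing {X : Type*} [MetricSpace X] [CompactSpace X]
    {T : Equiv.Perm X} (hT : Continuous T) (hT' : Continuous T.symm) (hmin : IsMinimal T)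
    (hwm : IsWeaklyMixing T) (d : ℕ) : AP T d = Set.univ := by
  refine Set.eq_univ_of_forall ?_
  rintro ⟨x, y⟩ δ hδ
  have : Nonempty X := ⟨x⟩
  obtain ⟨n, -, h⟩ := exists_common_progression hT hT' hmin hwm d (Finset.univ : Finset Bool)
    (fun t i => if i = 0 then Metric.ball (if t then y else x) δ else Metric.ball x (δ / 2))
    (fun t i => by split_ifs <;> exact Metric.isOpen_ball)
    (fun t i => by
      split_ifs <;> exact Metric.nonempty_ball.2 (by positivity)) 0
  obtain ⟨x', hx'⟩ := h false (Finset.mem_univ _)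
  obtain ⟨y', hy'⟩ := h true (Finset.mem_univ _)
  refine ⟨x', y', n, ?_, ?_, fun i h1 h2 => ?_⟩
  · simpa [dist_comm] using hx' 0 (by lia)
  · simpa [dist_comm] using hy' 0 (by lia)
  · have h3 := hx' i h2
    have h4 := hy' i h2
    rw [if_neg (by lia), Metric.mem_ball] at h3 h4
    linarith [dist_triangle_right ((T ^ ((i : ℤ) * n)) x') ((T ^ ((i : ℤ) * n)) y') x]

/-! ### Independence pairs and weak mixing -/

/-- Petersen's criterion: for weak mixing it is enough that `N(U, U)` meets `N(U, V)`. -/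
lemma weaklyMixing_of_hit {X : Type*} [TopologicalSpace X] {T : Equiv.Perm X}
    (hT : Continuous T) (hT' : Continuous T.symm)
    (h : ∀ U V : Set X, IsOpen U → IsOpen V → U.Nonempty → V.Nonempty →
      (hit T U U ∩ hit T U V).Nonempty) : IsWeaklyMixing T := by
  have hpre : ∀ {U : Set X}, IsOpen U → ∀ n : ℤ, IsOpen (⇑(T ^ n) ⁻¹' U) :=
    fun hU n => hU.preimage (continuous_zpow_of hT hT' n)
  have key : ∀ U V W : Set X, IsOpen U → IsOpen V → IsOpen W → U.Nonempty → V.Nonempty →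
      W.Nonempty → (hit T U V ∩ hit T U W).Nonempty := by
    intro U V W hU hV hW nU nV nW
    obtain ⟨a, -, z, hz, hz'⟩ := h U V hU hV nU nV
    obtain ⟨n, ⟨x, hx, hx'⟩, ⟨y, hy, hy'⟩⟩ := h (U ∩ ⇑(T ^ a) ⁻¹' V) (⇑(T ^ a) ⁻¹' W)
      (hU.inter (hpre hV a)) (hpre hW a) ⟨z, hz, hz'⟩ (nW.preimage (T ^ a).surjective)
    refine ⟨a + n, ⟨x, hx.1, ?_⟩, ⟨y, hy.1, ?_⟩⟩
    · rw [zpow_add_perm]; exact hx'.2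
    · rw [zpow_add_perm]; exact hy'
  rw [isWeaklyMixing_iff_hit]
  intro A B C D hA hB hC hD nA nB nC nD
  obtain ⟨b, -, z, hz, hz'⟩ := h A C hA hC nA nC
  obtain ⟨n, ⟨x, hx, hx'⟩, ⟨y, hy, hy'⟩⟩ := key (A ∩ ⇑(T ^ b) ⁻¹' C) B (⇑(T ^ b) ⁻¹' D)
    (hA.inter (hpre hC b)) hB (hpre hD b) ⟨z, hz, hz'⟩ nB (nD.preimage (T ^ b).surjective)
  refine ⟨n, ⟨x, hx.1, hx'⟩, ⟨(T ^ b) y, hy.2, ?_⟩⟩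
  rw [← zpow_add_perm, add_comm, zpow_add_perm]
  exact hy'

/-- For an `Ind_ap`-pair and `d = 2`, the choices `(1, 1)` and `(1, 2)` put the step `n` in
`N(U, U)` and in `N(U, V)`. -/
lemma weaklyMixing_of_indAP {X : Type*} [TopologicalSpace X]
    {T : Equiv.Perm X} (hT : Continuous T) (hT' : Continuous T.symm)
    (h : IndAP T = Set.univ) : IsWeaklyMixing T := by
  refine weaklyMixing_of_hit hT hT' ?_
  rintro U V hU hV ⟨u, hu⟩ ⟨v, hv⟩
  have huv : (u, v) ∈ IndAP T := h ▸ Set.mem_univ _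
  obtain ⟨n, -, hn⟩ := huv U (hU.mem_nhds hu) V (hV.mem_nhds hv) 2 (by lia)
  have key : ∀ b : Bool, (n : ℤ) ∈ hit T U (if b then V else U) := by
    intro b
    obtain ⟨x, hx⟩ := hn ![false, b]
    rw [Set.mem_iInter] at hx
    have h0 := hx 0
    have h1 := hx 1
    simp only [Fin.val_zero, Fin.val_one, Set.mem_preimage, zero_add, one_mul, one_add_one_eq_two,
      Matrix.cons_val_zero, Matrix.cons_val_one, Bool.false_eq_true, if_false] at h0 h1
    refine ⟨_, h0, ?_⟩
    rwa [zpow_natCast, ← Equiv.Perm.mul_apply, ← pow_add, ← two_mul]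
  exact ⟨n, by simpa using key false, by simpa using key true⟩

/-! ### Regional proximality and weak mixing -/

lemma measure_sdiff_triangle {X : Type*} [MeasurableSpace X] (μ : Measure X) (A B C : Set X) :
    μ (A \ C) ≤ μ (A \ B) + μ (B \ C) := by
  refine (measure_mono fun y hy => ?_).trans (measure_union_le _ _)
  by_cases hb : y ∈ B
  exacts [Or.inr ⟨hb, hy.2⟩, Or.inl ⟨hy.1, hb⟩]

/-- Krylov–Bogolyubov: a homeomorphism of a nonempty compact metric space preserves a Borel
probability measure. -/
lemma exists_invariant_measure {X : Type*} [MetricSpace X] [CompactSpace X] [Nonempty X]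
    [MeasurableSpace X] [BorelSpace X] {T : Equiv.Perm X} (hT : Continuous T) :
    ∃ μ : Measure X, IsProbabilityMeasure μ ∧ μ.map T = μ := by
  obtain ⟨z⟩ := ‹Nonempty X›
  -- the empirical measures of the orbit of `z`
  let ν : ℕ → Measure X := fun N =>
    ((N : ENNReal) + 1)⁻¹ • ∑ k ∈ Finset.range (N + 1), Measure.dirac ((T ^ k) z)
  have hν : ∀ N, IsProbabilityMeasure (ν N) := fun N => ⟨by
    simp only [ν, Measure.smul_apply, Measure.finsetSum_apply, measure_univ, Finset.sum_const,
      Finset.card_range, smul_eq_mul, nsmul_eq_mul, mul_one]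
    push_cast
    exact ENNReal.inv_mul_cancel (by simp) (by simp)⟩
  have hint : ∀ N (f : BoundedContinuousFunction X ℝ), ∫ x, f x ∂(ν N) =
      ((N : ℝ) + 1)⁻¹ * ∑ k ∈ Finset.range (N + 1), f ((T ^ k) z) := by
    intro N f
    simp only [ν]
    rw [integral_smul_measure, integral_finsetSum_measure (fun i _ => f.integrable _)]
    simp only [integral_dirac, ENNReal.toReal_inv, smul_eq_mul]
    rw [ENNReal.toReal_add (by simp) (by simp)]
    simp
  let P : ℕ → ProbabilityMeasure X := fun N => ⟨ν N, hν N⟩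
  let F : Ultrafilter ℕ := hyperfilter ℕ
  obtain ⟨μ, -, hμ⟩ := isCompact_univ.ultrafilter_le_nhds (F.map P) (by simp)
  have hlim : Tendsto P F (𝓝 μ) := hμ
  rw [ProbabilityMeasure.tendsto_iff_forall_integral_tendsto] at hlim
  refine ⟨μ, inferInstance, ?_⟩
  have : IsProbabilityMeasure ((μ : Measure X).map T) :=
    Measure.isProbabilityMeasure_map hT.aemeasurable
  refine ext_of_forall_integral_eq_of_IsFiniteMeasure fun f => ?_
  rw [integral_map hT.aemeasurable f.continuous.aestronglyMeasurable]
  let g : BoundedContinuousFunction X ℝ := f.compContinuous ⟨T, hT⟩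
  have h1 := (hlim g).sub (hlim f)
  have h2 : Tendsto (fun N : ℕ => ∫ x, g x ∂(ν N) - ∫ x, f x ∂(ν N)) F (𝓝 0) := by
    refine Tendsto.mono_left ?_ (hyperfilter_le_cofinite.trans_eq Nat.cofinite_eq_atTop)
    refine squeeze_zero_norm (a := fun N : ℕ => 2 * ‖f‖ * (1 / ((N : ℝ) + 1))) (fun N => ?_) ?_
    · have hsum : ∑ k ∈ Finset.range (N + 1), g ((T ^ k) z) -
          ∑ k ∈ Finset.range (N + 1), f ((T ^ k) z) = f ((T ^ (N + 1)) z) - f z := by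
        have : ∀ k, g ((T ^ k) z) = f ((T ^ (k + 1)) z) := fun k => by
          rw [pow_succ', Equiv.Perm.mul_apply]; rfl
        simp only [this]
        rw [← Finset.sum_sub_distrib, Finset.sum_range_sub (fun k => f ((T ^ k) z))]
        simp
      rw [hint, hint, ← mul_sub, hsum, norm_mul, mul_comm, norm_inv, one_div,
        Real.norm_of_nonneg (by positivity : (0 : ℝ) ≤ N + 1)]
      gcongr
      calc _ ≤ ‖f ((T ^ (N + 1)) z)‖ + ‖f z‖ := norm_sub_le _ _
        _ ≤ ‖f‖ + ‖f‖ := add_le_add (f.norm_coe_le_norm _) (f.norm_coe_le_norm _)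
        _ = 2 * ‖f‖ := by ring
    · simpa using tendsto_one_div_add_atTop_nhds_zero_nat.const_mul (2 * ‖f‖)
  exact sub_eq_zero.1 (tendsto_nhds_unique h1 h2)

/-- Let `K ⊆ X × X` be closed, with `x ↦ μ K_x` constant along orbits. This function is upper
semicontinuous, because nearby sections lie in any given neighbourhood of `K_x`; by minimality it is
constant. Hence `K_u` is not only almost contained in `K_x` for `u` near `x` but also almost equal
to it, and compactness makes this uniform. -/
lemma section_diff_small {X : Type*} [MetricSpace X] [CompactSpace X]
    [MeasurableSpace X] [BorelSpace X] {T : Equiv.Perm X} (hmin : IsMinimal T)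
    (μ : Measure X) [IsProbabilityMeasure μ] {K : Set (X × X)} (hK : IsClosed K)
    (hinv : ∀ (n : ℤ) x, μ {y | ((T ^ n) x, y) ∈ K} = μ {y | (x, y) ∈ K})
    {ε : ENNReal} (hε : 0 < ε) :
    ∃ δ > 0, ∀ u v : X, dist u v < δ → μ ({y | (u, y) ∈ K} \ {y | (v, y) ∈ K}) ≤ ε := by
  set S : X → Set X := fun x => {y | (x, y) ∈ K} with hS
  have hSc : ∀ x, IsClosed (S x) := fun x => hK.preimage (Continuous.prodMk_right x)
  have hSm : ∀ x, MeasurableSet (S x) := fun x => (hSc x).measurableSet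
  -- upper semicontinuity of the sections, as sets
  have usc : ∀ x, ∀ O : Set X, IsOpen O → S x ⊆ O → ∃ N, IsOpen N ∧ x ∈ N ∧
      ∀ u ∈ N, S u ⊆ O := by
    intro x O hO hxO
    refine ⟨(Prod.fst '' (K ∩ Prod.snd ⁻¹' Oᶜ))ᶜ, ?_, ?_, ?_⟩
    · exact (isClosedMap_fst_of_compactSpace _
        (hK.inter (hO.isClosed_compl.preimage continuous_snd))).isOpen_compl
    · rintro ⟨⟨a, y⟩, ⟨ha, hy⟩, rfl⟩
      exact hy (hxO ha)
    · intro u hu y hy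
      by_contra hyO
      exact hu ⟨(u, y), ⟨hy, hyO⟩, rfl⟩
  have usc' : ∀ x, ∀ η : ENNReal, 0 < η → ∃ O N : Set X, IsOpen O ∧ S x ⊆ O ∧
      μ O < μ (S x) + η ∧ IsOpen N ∧ x ∈ N ∧ ∀ u ∈ N, S u ⊆ O := by
    intro x η hη
    obtain ⟨O, hO, oO, hμO⟩ := (S x).exists_isOpen_lt_add (measure_ne_top μ _) hη.ne'
    obtain ⟨N, oN, hxN, hN⟩ := usc x O oO hO
    exact ⟨O, N, oO, hO, hμO, oN, hxN, hN⟩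
  have hle : ∀ x z, μ (S z) ≤ μ (S x) := by
    intro x z
    refine ENNReal.le_of_forall_pos_le_add fun η hη _ => ?_
    obtain ⟨O, N, -, -, hμO, oN, hxN, hN⟩ := usc' x η (by exact_mod_cast hη)
    obtain ⟨n, hn⟩ := exists_zpow_mem hmin oN ⟨x, hxN⟩ z
    rw [← hinv n z]
    exact (measure_mono (hN _ hn)).trans hμO.le
  have heq : ∀ x z, μ (S x) = μ (S z) := fun x z => le_antisymm (hle z x) (hle x z)
  have hswap : ∀ x z, μ (S x \ S z) = μ (S z \ S x) := by
    intro x z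
    have h1 := measure_sdiff_add_inter (μ := μ) (s := S x) (hSm z)
    have h2 := measure_sdiff_add_inter (μ := μ) (s := S z) (hSm x)
    rw [Set.inter_comm] at h2
    exact (ENNReal.add_left_inj (measure_ne_top μ (S x ∩ S z))).1
      (h1.trans ((heq x z).trans h2.symm))
  have htri : ∀ a b c, μ (S a \ S c) ≤ μ (S a \ S b) + μ (S b \ S c) :=
    fun _ _ _ => measure_sdiff_triangle μ _ _ _
  have hhalf : 0 < ε / 2 := ENNReal.half_pos hε.ne'
  have hloc : ∀ x, ∃ N, IsOpen N ∧ x ∈ N ∧ ∀ u ∈ N, μ (S u \ S x) ≤ ε / 2 := by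
    intro x
    obtain ⟨O, N, oO, hO, hμO, oN, hxN, hN⟩ := usc' x (ε / 2) hhalf
    refine ⟨N, oN, hxN, fun u hu => ?_⟩
    calc μ (S u \ S x) ≤ μ (O \ S x) := measure_mono (Set.sdiff_subset_sdiff_left (hN u hu))
      _ = μ O - μ (S x) := measure_sdiff hO (hSm x).nullMeasurableSet (measure_ne_top μ _)
      _ ≤ ε / 2 := tsub_le_iff_left.2 hμO.le
  choose N oN hxN hN using hloc
  obtain ⟨δ, hδ, h⟩ := lebesgue_number_lemma_of_metric isCompact_univ oN
    (fun x _ => Set.mem_iUnion.2 ⟨x, hxN x⟩)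
  refine ⟨δ, hδ, fun u v huv => ?_⟩
  obtain ⟨x, hx⟩ := h u (Set.mem_univ u)
  calc μ (S u \ S v) ≤ μ (S u \ S x) + μ (S x \ S v) := htri _ _ _
    _ = μ (S u \ S x) + μ (S v \ S x) := by rw [hswap x v]
    _ ≤ ε / 2 + ε / 2 := add_le_add (hN x u (hx (Metric.mem_ball_self hδ)))
        (hN x v (hx (by rwa [Metric.mem_ball, dist_comm])))
    _ = ε := ENNReal.add_halves ε

/-- If every pair is regionally proximal, then the system is weakly mixing: otherwise a closed
invariant set `K` with interior, other than `X × X`, would have almost everywhere equal sections. -/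
lemma weaklyMixing_of_ap {X : Type*} [MetricSpace X] [CompactSpace X]
    {T : Equiv.Perm X} (hT : Continuous T) (hT' : Continuous T.symm) (hmin : IsMinimal T)
    {d : ℕ} (hd : 1 ≤ d) (h : AP T d = Set.univ) : IsWeaklyMixing T := by
  intro U V hU hV nU nV
  by_contra! hUV
  -- the closed invariant set of the points whose orbit avoids `V`
  set K : Set (X × X) := {p | ∀ n : ℤ, ((T ^ n) p.1, (T ^ n) p.2) ∉ V} with hKdef
  have hc := continuous_zpow_of hT hT'
  have hK : IsClosed K := by
    simp only [hKdef, Set.ofPred_forall]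
    refine isClosed_iInter fun n => ?_
    exact (hV.preimage (((hc n).comp continuous_fst).prodMk
      ((hc n).comp continuous_snd))).isClosed_compl
  have hUK : U ⊆ K := fun p hp n hn =>
    (Set.disjoint_iff_inter_eq_empty.2 (hUV n)).notMem_of_mem_left ⟨p, hp, rfl⟩ hn
  have hKinv : ∀ (n : ℤ) x y, (x, y) ∈ K → ((T ^ n) x, (T ^ n) y) ∈ K := by
    intro n x y hxy k
    simpa only [zpow_add_perm] using hxy (k + n)
  have hKinv' : ∀ (n : ℤ) x y, ((T ^ n) x, (T ^ n) y) ∈ K ↔ (x, y) ∈ K := by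
    refine fun n x y => ⟨fun hxy => ?_, hKinv n x y⟩
    have := hKinv (-n) _ _ hxy
    simpa only [← zpow_add_perm, neg_add_cancel, zpow_zero, Equiv.Perm.one_apply] using this
  obtain ⟨⟨u₀, v₀⟩, h₀⟩ := nU
  have : Nonempty X := ⟨u₀⟩
  borelize X
  obtain ⟨μ, hμ, hμT⟩ := exists_invariant_measure hT
  have hmp1 : MeasurePreserving T μ μ := ⟨hT.measurable, hμT⟩
  have hμpow : ∀ (n : ℤ) (A : Set X), MeasurableSet A → μ (⇑(T ^ n) ⁻¹' A) = μ A := by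
    have hnat : ∀ (k : ℕ) (A : Set X), MeasurableSet A →
        μ (⇑(T ^ (k : ℤ)) ⁻¹' A) = μ A := by
      intro k A hA
      have := (hmp1.iterate k).measure_preimage hA.nullMeasurableSet
      rwa [← Equiv.Perm.coe_pow] at this
    intro n A hA
    obtain ⟨k, rfl | rfl⟩ := n.eq_nat_or_neg
    · exact hnat k A hA
    · rw [← hnat k _ ((hc _).measurable hA), ← Set.preimage_comp, ← Equiv.Perm.coe_mul,
        ← zpow_add, neg_add_cancel, zpow_zero, Equiv.Perm.coe_one, Set.preimage_id]
  set S : X → Set X := fun x => {y | (x, y) ∈ K} with hS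
  have hSm : ∀ x, MeasurableSet (S x) := fun x =>
    (hK.preimage (Continuous.prodMk_right x)).measurableSet
  have hSpre : ∀ (n : ℤ) x, ⇑(T ^ n) ⁻¹' S ((T ^ n) x) = S x := fun n x =>
    Set.ext fun y => hKinv' n x y
  have hSinv : ∀ (n : ℤ) x, μ (S ((T ^ n) x)) = μ (S x) := fun n x => by
    rw [← hSpre n x, hμpow n _ (hSm _)]
  have hSdiff : ∀ (n : ℤ) x y, μ (S ((T ^ n) x) \ S ((T ^ n) y)) = μ (S x \ S y) :=
    fun n x y => by
      rw [← hSpre n x, ← hSpre n y, ← Set.preimage_sdiff, hμpow n _ ((hSm _).diff (hSm _))]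
  have htri : ∀ a b c, μ (S a \ S c) ≤ μ (S a \ S b) + μ (S b \ S c) :=
    fun _ _ _ => measure_sdiff_triangle μ _ _ _
  -- regional proximality makes all sections agree almost everywhere
  have hzero : ∀ x y, μ (S x \ S y) = 0 := by
    intro x y
    by_contra hne
    have hε : 0 < μ (S x \ S y) / 4 := ENNReal.div_pos hne (by simp)
    obtain ⟨δ, hδ, hsmall⟩ := section_diff_small hmin μ hK hSinv hε
    obtain ⟨x', y', n, hx, hy, hn⟩ := (h ▸ Set.mem_univ (x, y) : (x, y) ∈ AP T d) δ hδ
    have h1 := hsmall _ _ hx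
    have h2 := hsmall _ _ (hn 1 le_rfl hd)
    have h3 := hsmall y' y (by rwa [dist_comm])
    have h4 : μ (S x \ S y) ≤ μ (S x \ S y) / 4 + (μ (S x \ S y) / 4 + μ (S x \ S y) / 4) :=
      (htri x x' y).trans (add_le_add h1 ((htri x' y' y).trans
        (add_le_add ((hSdiff _ x' y').symm.le.trans h2) h3)))
    lift μ (S x \ S y) to NNReal using measure_ne_top μ _ with r
    have hr : 0 < r := by simpa [pos_iff_ne_zero] using hne
    have h5 : r ≤ r / 4 + (r / 4 + r / 4) := by
      have h4' : (4 : ENNReal) = ((4 : NNReal) : ENNReal) := by norm_num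
      rw [h4', ← ENNReal.coe_div (by norm_num)] at h4
      exact_mod_cast h4
    have h6 : (r : ℝ) ≤ r / 4 + (r / 4 + r / 4) := by exact_mod_cast h5
    have h7 : (0 : ℝ) < r := by exact_mod_cast hr
    linarith
  -- minimality gives `μ` full support
  have hsupp : ∀ O : Set X, IsOpen O → μ O = 0 → O = ∅ := by
    intro O hO h0
    by_contra hne
    have hcov : (Set.univ : Set X) ⊆ ⋃ n : ℤ, ⇑(T ^ n) ⁻¹' O := fun x _ =>
      Set.mem_iUnion.2 (exists_zpow_mem hmin hO (Set.nonempty_iff_ne_empty.2 hne) x)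
    have : μ Set.univ = 0 := measure_mono_null hcov
      (measure_iUnion_null fun n => (hμpow n O hO.measurableSet).trans h0)
    simp at this
  obtain ⟨A, B, -, hB, hu₀, hv₀, hAB⟩ := isOpen_prod_iff.1 hU u₀ v₀ h₀
  -- all sections contain `B`, hence all translates of `B`, hence everything
  have hBS : ∀ x, B ⊆ S x := by
    intro x
    rw [← Set.sdiff_eq_empty]
    refine hsupp _ (hB.sdiff (hK.preimage (Continuous.prodMk_right x))) ?_
    exact measure_mono_null (Set.sdiff_subset_sdiff_left fun y hy => hUK (hAB ⟨hu₀, hy⟩))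
      (hzero u₀ x)
  obtain ⟨⟨a, b⟩, hab⟩ := nV
  obtain ⟨n, hn⟩ := exists_zpow_mem hmin hB ⟨v₀, hv₀⟩ b
  have habK : (a, b) ∈ K := (hKinv' n a b).1 (hBS _ hn)
  exact habK 0 (by simpa using hab)

/-- For a minimal t.d.s. `(X, T)` the following are equivalent:
(1) `Ind_ap(X,T) = X × X`; (2) `(X,T)` is weakly mixing;
(3) `AP^[d](X,T) = X × X` for some `d ≥ 2`. -/
theorem indap_wm_ap_tfae {X : Type*} [MetricSpace X] [CompactSpace X]
    (T : Equiv.Perm X) (hT : Continuous T) (hT' : Continuous T.symm)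
    (hmin : IsMinimal T) :
    (IndAP T = Set.univ ↔ IsWeaklyMixing T) ∧
    (IsWeaklyMixing T ↔ ∃ d : ℕ, 2 ≤ d ∧ AP T d = Set.univ) :=
  ⟨⟨weaklyMixing_of_indAP hT hT', indAP_of_weaklyMixing hT hT' hmin⟩,
    fun hwm => ⟨2, le_rfl, ap_of_weaklyMixing hT hT' hmin hwm 2⟩,
    fun ⟨_, hd, h⟩ => weaklyMixing_of_ap hT hT' hmin (by lia) h⟩
end

section
/- Let (X,T) be a topological dynamical system and (x₁,x₂) ∈ X × X. Suppose that for every pair of neighborhoods U₁ of x₁ and U₂ of x₂ there exists an independence set F ⊆ ℕ for (U₁,U₂) with positive upper density. Then (x₁,x₂) ∈ Ind_ap(X,T), and consequently (x₁,x₂) ∈ AP^[d](X,T) for every d ∈ ℕ. -/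
/-!
The main ingredient is Szemerédi's theorem: a set `F ⊆ ℕ` of positive upper density contains an
arithmetic progression `b, b + r, …, b + (d - 1) r` of any prescribed length. If `F` is an
independence set for `(U₁, U₂)`, the definition of independence applied to the elements of the
progression gives points which visit `U₁` and `U₂` in any prescribed order at the times
`b, b + r, …`. Applying `T ^ (b - r)` to these points moves the times to `r, 2r, …, dr`, which shows
that the pair is in `Ind_ap` (`indAP_of_pos_density`). Comparing witnesses for the patterns
`1, 1, …, 1` and `2, 1, …, 1` of length `d + 1` shows that it is in `AP^[d]` (`AP_of_indAP`).

Szemerédi's theorem is derived from the density Hales–Jewett theorem (`szemeredi`), which says that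
a set of words of fixed positive density, over a finite alphabet, contains a combinatorial line
as soon as the words are long enough. This is proved by induction on the size of the alphabet
(`DHJ.option`, where a letter `none` is added to the alphabet `α`). Write `δ` for the limiting
density of large line-free sets over `Option α` and suppose that `δ > 0`. In a line-free set `A` of
density almost `δ`, all sections have density almost `δ`, and by the induction hypothesis there is a
subspace on which `A` contains many lines over `α` (`exists_sub_many_lines`). The points completing
these lines to lines over `Option α` are not in `A`. They form an intersection of sets which are
insensitive to exchanging `none` with some letter `a`, so that `A` has density larger than `δ` on
the complement of such an intersection. By the induction hypothesis in its multidimensional form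
(`DHJ.multidim`), an insensitive set can be partitioned into subspaces of large dimension, up to a
small error (`expect_insens_le_aux`), and hence so can this complement (`expect_compl_iInter_le`
states the consequence for integrals). So `A` has density larger than `δ` on a subspace of large
dimension, contrary to the choice of `δ`. Non-uniform measures on the cube, which come from
identifying letters, are disposed of by `exists_sub_of_surjective`.
-/

open scoped Classical

/-- `F ⊆ ℕ` is an independence set for the pair of sets `(U₁, U₂)`: for each nonempty
finite `J ⊆ F` and each choice `s : J → {1, 2}` one has `⋂_{j ∈ J} T^{-j} U_{s j} ≠ ∅`
(`s j = false` selects `U₁`, `s j = true` selects `U₂`). -/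
def IsIndepSet {X : Type*} (T : Equiv.Perm X) (U₁ U₂ : Set X) (F : Set ℕ) : Prop :=
  ∀ J : Finset ℕ, ↑J ⊆ F → J.Nonempty → ∀ s : ℕ → Bool,
    (⋂ j ∈ J, (⇑(T ^ j) ⁻¹' (if s j then U₂ else U₁))).Nonempty

/-- The upper density of a set `F ⊆ ℕ`: `limsup_N |F ∩ {1, …, N}| / N`. -/
noncomputable def upperDensity (F : Set ℕ) : ℝ :=
  Filter.limsup
    (fun N : ℕ => (((Finset.Icc 1 N).filter fun j => j ∈ F).card : ℝ) / N)
    Filter.atTop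

namespace DensityHJ

open scoped BigOperators
open Function

/-! ### Words, subspaces and densities -/

/-- A word `u : ι → β ⊕ η` with wildcards indexed by `η`, evaluated at `x : η → β`: every wildcard
`e` is replaced by the letter `x e`. As `x` varies this parametrises a combinatorial subspace. -/
def sub {ι β η : Type} (u : ι → β ⊕ η) (x : η → β) : ι → β := fun i => Sum.elim id x (u i)

/-- Every wildcard of `u` is used, so that `sub u` parametrises a subspace of dimension `|η|`. -/
def Proper {ι β η : Type} (u : ι → β ⊕ η) : Prop := ∀ e, ∃ i, u i = Sum.inr e

/-- `A` contains no combinatorial line. A line is a word `z : ι → Option β` in which the wildcard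
`none` occurs; its points are obtained by replacing `none` by a letter `b`. -/
def LineFree {ι β : Type} (A : Set (ι → β)) : Prop :=
  ∀ z : ι → Option β, (∃ i, z i = none) → ∃ b, (fun i => (z i).getD b) ∉ A

/-- The real-valued indicator of a proposition. -/
noncomputable def ind (p : Prop) : ℝ := if p then 1 else 0

/-- The density of a subset of a finite type (`0` when the type is empty). -/
noncomputable def dens {P : Type} [Fintype P] (A : Set P) : ℝ := 𝔼 x, ind (x ∈ A)

/-- The density Hales–Jewett theorem for the alphabet `β`. It suffices to ask for one dimension
`n`: the maximal density of a line-free set is nonincreasing in the dimension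
(`dens_le_of_lineFree`). -/
def DHJ (β : Type) [Fintype β] : Prop :=
  ∀ δ : ℝ, 0 < δ → ∃ n : ℕ, ∀ A : Set (Fin n → β), LineFree A → dens A < δ

lemma ind_nonneg (p : Prop) : 0 ≤ ind p := by unfold ind; split_ifs <;> norm_num
lemma ind_le_one (p : Prop) : ind p ≤ 1 := by unfold ind; split_ifs <;> norm_num
lemma ind_pos {p : Prop} (h : p) : ind p = 1 := by simp [ind, h]
lemma ind_neg {p : Prop} (h : ¬ p) : ind p = 0 := by simp [ind, h]
lemma ind_mono {p q : Prop} (h : p → q) : ind p ≤ ind q := by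
  by_cases hp : p
  · rw [ind_pos hp, ind_pos (h hp)]
  · rw [ind_neg hp]; exact ind_nonneg q

section Expect
variable {P Q : Type} [Fintype P] [Fintype Q]

lemma expect_mono {f g : P → ℝ} (h : ∀ x, f x ≤ g x) : 𝔼 x, f x ≤ 𝔼 x, g x :=
  Finset.expect_le_expect fun x _ => h x

lemma expect_le_const [Nonempty P] {f : P → ℝ} {c : ℝ} (h : ∀ x, f x ≤ c) : 𝔼 x, f x ≤ c :=
  Finset.expect_le Finset.univ_nonempty fun x _ => h x

lemma const_le_expect [Nonempty P] {f : P → ℝ} {c : ℝ} (h : ∀ x, c ≤ f x) : c ≤ 𝔼 x, f x :=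
  Finset.le_expect Finset.univ_nonempty fun x _ => h x

lemma expect_nonneg_of {f : P → ℝ} (h : ∀ x, 0 ≤ f x) : 0 ≤ 𝔼 x, f x :=
  Finset.expect_nonneg fun x _ => h x

/-- Averaging: some value is at least the mean. -/
lemma exists_ge_expect [Nonempty P] {f : P → ℝ} {c : ℝ} (h : c ≤ 𝔼 x, f x) : ∃ x, c ≤ f x := by
  obtain ⟨x, -, hx⟩ := Finset.exists_le_of_le_expect Finset.univ_nonempty h
  exact ⟨x, hx⟩

lemma expect_prod (f : P → Q → ℝ) : 𝔼 z : P × Q, f z.1 z.2 = 𝔼 x, 𝔼 y, f x y := by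
  rw [← Finset.univ_product_univ, Finset.expect_product]

/-- An involution of `P × Q` preserves the uniform measure. -/
lemma expect_involutive (s : P × Q → P × Q) (hs : Involutive s) [Nonempty Q] (F : P → ℝ) :
    𝔼 z, 𝔼 x, F (s (z, x)).1 = 𝔼 z, F z := by
  rw [← expect_prod fun z x => F (s (z, x)).1]
  rw [Fintype.expect_equiv hs.toPerm (fun z : P × Q => F (s (z.1, z.2)).1) (fun z => F z.1)
    (fun z => rfl)]
  rw [expect_prod fun z _ => F z]
  simp

lemma dens_nonneg (A : Set P) : 0 ≤ dens A := expect_nonneg_of fun _ => ind_nonneg _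

lemma dens_le_one (A : Set P) : dens A ≤ 1 := by
  rcases isEmpty_or_nonempty P with h | h
  · simp [dens]
  · exact expect_le_const fun _ => ind_le_one _

lemma exists_mem_of_dens_pos {A : Set P} (h : 0 < dens A) : ∃ x, x ∈ A := by
  by_contra! hA
  have : dens A = 0 := Finset.expect_eq_zero fun x _ => ind_neg (hA x)
  linarith

/-- A single value of a nonnegative function is at most `|P|` times its mean. -/
lemma le_card_mul_expect {f : P → ℝ} (h : ∀ x, 0 ≤ f x) (x : P) :
    f x ≤ Fintype.card P * 𝔼 x, f x := by
  rw [Fintype.card_mul_expect]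
  exact Finset.single_le_sum (fun y _ => h y) (Finset.mem_univ x)

end Expect

/-- Substituting a fresh uniform word along `e` preserves the uniform measure. -/
lemma expect_extend {ι β η : Type} [Fintype ι] [DecidableEq ι] [Fintype β] [Nonempty β]
    [Fintype η] [DecidableEq η] (e : η → ι) (he : Injective e) (F : (ι → β) → ℝ) :
    𝔼 z : ι → β, 𝔼 x : η → β, F (extend e x z) = 𝔼 z, F z := by
  refine expect_involutive (fun p : (ι → β) × (η → β) => (extend e p.2 p.1, p.1 ∘ e)) ?_ F
  rintro ⟨z, x⟩
  ext i
  · by_cases hi : ∃ j, e j = i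
    · obtain ⟨j, rfl⟩ := hi
      simp [he.extend_apply]
    · simp [extend_apply' _ _ _ hi]
  · simp [he.extend_apply]

lemma sub_extend {ι β η κ : Type} (e : η → ι) (he : Injective e) (u : η → β ⊕ κ) (z : ι → β)
    (x : κ → β) : sub (extend e u (fun i => Sum.inl (z i))) x = extend e (sub u x) z := by
  ext i
  by_cases hi : ∃ j, e j = i
  · obtain ⟨j, rfl⟩ := hi
    simp [sub, he.extend_apply]
  · simp [sub, extend_apply' _ _ _ hi]

lemma proper_extend {ι β η κ : Type} (e : η → ι) (he : Injective e) {u : η → β ⊕ κ}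
    (hu : Proper u) (z : ι → β) : Proper (extend e u (fun i => Sum.inl (z i))) := by
  intro k
  obtain ⟨j, hj⟩ := hu k
  exact ⟨e j, by rw [he.extend_apply, hj]⟩

/-- A function whose mean is at least `c` has mean at least `c` on a subspace whose wildcards sit
exactly at prescribed positions. -/
lemma exists_sub_expect_ge {ι β η : Type} [Fintype ι] [DecidableEq ι] [Fintype β] [Nonempty β]
    [Fintype η] [DecidableEq η] (e : η → ι) (he : Injective e) (F : (ι → β) → ℝ) {c : ℝ}
    (hc : c ≤ 𝔼 z, F z) :
    ∃ u : ι → β ⊕ η, (∀ j, u (e j) = Sum.inr j) ∧ c ≤ 𝔼 x, F (sub u x) := by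
  rw [← expect_extend e he] at hc
  obtain ⟨z, hz⟩ := exists_ge_expect hc
  refine ⟨extend e Sum.inr (fun i => Sum.inl (z i)), fun j => he.extend_apply _ _ _, ?_⟩
  have h : ∀ x : η → β, sub (Sum.inr : η → β ⊕ η) x = x := fun x => rfl
  simpa only [sub_extend e he, h] using hz

/-- The composition of two words with wildcards. -/
def comp {ι β η κ : Type} (u : ι → β ⊕ η) (v : η → β ⊕ κ) : ι → β ⊕ κ :=
  fun i => Sum.elim Sum.inl v (u i)

lemma sub_comp {ι β η κ : Type} (u : ι → β ⊕ η) (v : η → β ⊕ κ) (x : κ → β) :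
    sub (comp u v) x = sub u (sub v x) := by
  ext i
  simp only [sub, comp]
  cases u i <;> simp [sub]

lemma Proper.comp {ι β η κ : Type} {u : ι → β ⊕ η} {v : η → β ⊕ κ} (hu : Proper u)
    (hv : Proper v) : Proper (comp u v) := by
  intro k
  obtain ⟨j, hj⟩ := hv k
  obtain ⟨i, hi⟩ := hu j
  exact ⟨i, by simp [DensityHJ.comp, hi, hj]⟩

lemma sub_injective {ι β η : Type} {u : ι → β ⊕ η} (hu : Proper u) :
    Injective (sub u) := by
  intro x y h
  ext j
  obtain ⟨i, hi⟩ := hu j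
  have := congrFun h i
  simpa [sub, hi] using this

lemma LineFree.preimage {ι β η : Type} {A : Set (ι → β)} (hA : LineFree A) {u : ι → β ⊕ η}
    (hu : Proper u) : LineFree {x | sub u x ∈ A} := by
  rintro z ⟨j, hj⟩
  obtain ⟨i, hi⟩ := hu j
  obtain ⟨b, hb⟩ := hA (fun i => Sum.elim some z (u i)) ⟨i, by simp [hi, hj]⟩
  refine ⟨b, fun h => hb ?_⟩
  convert (show _ ∈ A from h) using 1
  ext i
  simp only [sub]
  cases u i <;> simp

/-- Upper bounds for the density of line-free sets persist in higher dimension. -/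
lemma dens_le_of_lineFree {ι β : Type} [Fintype ι] [DecidableEq ι] [Fintype β] [Nonempty β]
    {n : ℕ} (hn : n ≤ Fintype.card ι) {A : Set (ι → β)} (hA : LineFree A) :
    ∃ B : Set (Fin n → β), LineFree B ∧ dens A ≤ dens B := by
  obtain ⟨e⟩ : Nonempty (Fin n ↪ ι) :=
    Function.Embedding.nonempty_of_card_le (by simpa using hn)
  obtain ⟨u, hu, h⟩ := exists_sub_expect_ge e e.injective (fun z => ind (z ∈ A)) le_rfl
  exact ⟨{x | sub u x ∈ A}, hA.preimage fun j => ⟨e j, hu j⟩, h⟩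

/-! ### From non-uniform to uniform measures -/

/-- For `w` uniform in `Γ^M`, the number of coordinates lying in a set `I ⊆ Γ` with a given element
is at least `m` with high probability. The bound is the exponential moment estimate
`P(N < m) ≤ 2 ^ m * E (2 ^ (-N))`. -/
lemma expect_card_lt (Γ : Type) [Fintype Γ] (I : Γ → Prop) {γ₀ : Γ} (h₀ : I γ₀) (m M : ℕ) :
    𝔼 w : Fin M → Γ, ind ((Finset.univ.filter fun i => I (w i)).card < m) ≤
      2 ^ m * (1 - 1 / (2 * Fintype.card Γ)) ^ M := by
  have : Nonempty Γ := ⟨γ₀⟩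
  have hΓ : (0 : ℝ) < Fintype.card Γ := by exact_mod_cast Fintype.card_pos
  set h : Γ → ℝ := fun γ => 1 - ind (I γ) / 2 with hh
  have h1 : 𝔼 γ, h γ ≤ 1 - 1 / (2 * Fintype.card Γ) := by
    have := le_card_mul_expect (fun γ => ind_nonneg (I γ)) γ₀
    rw [ind_pos h₀] at this
    rw [hh, Finset.expect_sub_distrib, Fintype.expect_one, ← Finset.expect_div]
    have h2 : 1 / (Fintype.card Γ : ℝ) ≤ 𝔼 γ, ind (I γ) := by
      rw [div_le_iff₀ hΓ]; linarith
    have h3 : 1 / (2 * (Fintype.card Γ : ℝ)) = 1 / (Fintype.card Γ : ℝ) / 2 := by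
      field_simp
    rw [h3]; linarith
  have hpos : ∀ γ, 0 ≤ h γ := fun γ => by have := ind_le_one (I γ); simp only [hh]; linarith
  have h4 : (𝔼 γ, h γ) ^ M = 𝔼 w : Fin M → Γ, ∏ i, h (w i) := by
    rw [Finset.expect_pow]; simp
  calc 𝔼 w : Fin M → Γ, ind ((Finset.univ.filter fun i => I (w i)).card < m)
      ≤ 𝔼 w : Fin M → Γ, 2 ^ m * ∏ i, h (w i) := by
        refine expect_mono fun w => ?_
        have h5 : ∏ i, h (w i) = (1 / 2) ^ (Finset.univ.filter fun i => I (w i)).card := by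
          rw [← Finset.prod_const, Finset.prod_filter]
          refine Finset.prod_congr rfl fun i _ => ?_
          simp only [hh]
          split_ifs with hi
          · rw [ind_pos hi]; norm_num
          · rw [ind_neg hi]; norm_num
        rw [h5]
        by_cases hc : (Finset.univ.filter fun i => I (w i)).card < m
        · rw [ind_pos hc]
          calc (1 : ℝ) = 2 ^ m * (1 / 2) ^ m := by rw [← mul_pow]; norm_num
            _ ≤ _ := by
              refine mul_le_mul_of_nonneg_left ?_ (by positivity)
              exact pow_le_pow_of_le_one (a := (1 / 2 : ℝ)) (by norm_num) (by norm_num) hc.le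
        · rw [ind_neg hc]; positivity
    _ = 2 ^ m * (𝔼 γ, h γ) ^ M := by rw [h4, Finset.mul_expect]
    _ ≤ _ := by
        gcongr
        exact expect_nonneg_of hpos

/-- If `φ : Γ → β` is surjective and `f` has mean at least `c` under the image in `β^M` of the
uniform measure of `Γ^M`, then `f` has mean at least `c / 2` under the uniform measure of some
subspace. Condition on the set of coordinates where `w` lies in the image of a section of `φ`
and on the values elsewhere: `φ ∘ w` is uniform on these coordinates, and typically there are
many of them. -/
lemma exists_sub_of_surjective (Γ β η : Type) [Fintype Γ] [Fintype β] [Nonempty β]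
    [Fintype η] [DecidableEq η] {c : ℝ} (hc : 0 < c) :
    ∃ M : ℕ, ∀ φ : Γ → β, Surjective φ → ∀ f : (Fin M → β) → ℝ, (∀ z, f z ≤ 1) →
      c ≤ 𝔼 w : Fin M → Γ, f (φ ∘ w) →
      ∃ u : Fin M → β ⊕ η, Proper u ∧ c / 2 ≤ 𝔼 x, f (sub u x) := by
  rcases isEmpty_or_nonempty Γ with hΓ | hΓ
  · exact ⟨0, fun φ hφ => (hΓ.false (hφ (Classical.arbitrary β)).choose).elim⟩
  have hΓ1 : (1 : ℝ) ≤ Fintype.card Γ := by exact_mod_cast Fintype.card_pos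
  set m := Fintype.card η
  obtain ⟨M, hM⟩ : ∃ M : ℕ, (1 - 1 / (2 * (Fintype.card Γ : ℝ))) ^ M < c / 2 / 2 ^ m := by
    refine exists_pow_lt_of_lt_one (by positivity) ?_
    have : (0 : ℝ) < 1 / (2 * (Fintype.card Γ : ℝ)) := by positivity
    linarith
  refine ⟨M, fun φ hφ f hf hfc => ?_⟩
  set s := surjInv hφ
  have hs : ∀ b, φ (s b) = b := surjInv_eq hφ
  -- resampling of the coordinates of `w` that lie in the image of the section `s`
  set T : (Fin M → Γ) × (Fin M → β) → (Fin M → Γ) × (Fin M → β) := fun p =>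
    (fun i => if s (φ (p.1 i)) = p.1 i then s (p.2 i) else p.1 i,
     fun i => if s (φ (p.1 i)) = p.1 i then φ (p.1 i) else p.2 i) with hT
  have hTinv : Involutive T := by
    rintro ⟨w, x⟩
    ext i
    · by_cases hi : s (φ (w i)) = w i <;> simp [hT, hi, hs]
    · by_cases hi : s (φ (w i)) = w i <;> simp [hT, hi, hs]
  set g : (Fin M → Γ) → ℝ := fun w => 𝔼 x, f (φ ∘ (T (w, x)).1) with hg
  have hgc : c ≤ 𝔼 w, g w := by
    rw [hg, expect_involutive T hTinv fun w => f (φ ∘ w)]; exact hfc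
  have htail := expect_card_lt Γ (fun γ => s (φ γ) = γ) (γ₀ := s (Classical.arbitrary β))
    (by simp [hs]) m M
  obtain ⟨w, hw⟩ : ∃ w, c / 2 ≤
      g w - ind ((Finset.univ.filter fun i => s (φ (w i)) = w i).card < m) := by
    refine exists_ge_expect ?_
    rw [Finset.expect_sub_distrib]
    have : 2 ^ m * (1 - 1 / (2 * (Fintype.card Γ : ℝ))) ^ M ≤ c / 2 := by
      rw [lt_div_iff₀ (by positivity)] at hM
      linarith
    linarith
  have hcard : m ≤ (Finset.univ.filter fun i => s (φ (w i)) = w i).card := by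
    by_contra! hlt
    rw [ind_pos hlt] at hw
    have : g w ≤ 1 := expect_le_const fun x => hf _
    linarith
  obtain ⟨e⟩ : Nonempty (η ↪ {i // s (φ (w i)) = w i}) := by
    refine Function.Embedding.nonempty_of_card_le ?_
    rwa [Fintype.card_subtype]
  have hgw : c / 2 ≤ g w := by
    have := ind_nonneg ((Finset.univ.filter fun i => s (φ (w i)) = w i).card < m)
    linarith
  obtain ⟨u, hu, h⟩ := exists_sub_expect_ge (fun j => (e j : Fin M))
    (Subtype.val_injective.comp e.injective) _ hgw
  refine ⟨fun i => if s (φ (w i)) = w i then u i else Sum.inl (φ (w i)),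
    fun j => ⟨e j, by simp [(e j).2, hu]⟩, ?_⟩
  convert h using 3 with x
  ext i
  by_cases hi : s (φ (w i)) = w i
  · simp [hT, sub, hi, hs]
  · simp [hT, sub, hi]

/-! ### The multidimensional density Hales–Jewett theorem -/

/-- Dense sets contain subspaces of any prescribed dimension `m`, in suitable dimension `|κ|`.
In the inductive step, for many `x` in the first factor the section at `x` contains a subspace;
by pigeonhole the same subspace serves a dense set of `x`, which contains a line. -/
lemma DHJ.multidim {α : Type} [Fintype α] [Nonempty α] (h : DHJ α) (m : ℕ) :
    ∀ δ : ℝ, 0 < δ → ∃ (κ : Type) (_ : Fintype κ) (_ : DecidableEq κ),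
      ∀ A : Set (κ → α), δ ≤ dens A → ∃ u : κ → α ⊕ Fin m, Proper u ∧ ∀ x, sub u x ∈ A := by
  induction m with
  | zero =>
    intro δ hδ
    refine ⟨Fin 0, inferInstance, inferInstance, fun A hA => ?_⟩
    obtain ⟨a, ha⟩ := exists_mem_of_dens_pos (hδ.trans_le hA)
    exact ⟨fun i => Sum.inl (a i), fun e => e.elim0, fun x => ha⟩
  | succ m ih =>
    intro δ hδ
    obtain ⟨κ, _, _, hκ⟩ := ih (δ / 2) (by positivity)
    set P := Fintype.card (κ → α ⊕ Fin m) with hP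
    have hP0 : (0 : ℝ) < P := by
      have : Nonempty (α ⊕ Fin m) := ⟨Sum.inl (Classical.arbitrary α)⟩
      exact_mod_cast Fintype.card_pos
    obtain ⟨n, hn⟩ := h (δ / (2 * P)) (by positivity)
    refine ⟨Fin n ⊕ κ, inferInstance, inferInstance, fun A hA => ?_⟩
    set B : (κ → α ⊕ Fin m) → Set (Fin n → α) :=
      fun u => {x | Proper u ∧ ∀ t, Sum.elim x (sub u t) ∈ A} with hB
    have hA2 : dens A = 𝔼 x : Fin n → α, dens {y : κ → α | Sum.elim x y ∈ A} := by
      unfold dens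
      rw [← expect_prod (fun (x : Fin n → α) (y : κ → α) => ind (y ∈ {y | Sum.elim x y ∈ A}))]
      refine Fintype.expect_equiv (Equiv.sumArrowEquivProdArrow (Fin n) κ α) _ _ fun z => ?_
      simp [Equiv.sumArrowEquivProdArrow]
    have hpt : ∀ x : Fin n → α, dens {y : κ → α | Sum.elim x y ∈ A} ≤
        δ / 2 + ∑ u, ind (x ∈ B u) := by
      intro x
      have hs : 0 ≤ ∑ u, ind (x ∈ B u) := Finset.sum_nonneg fun u _ => ind_nonneg _
      by_cases hx : δ / 2 ≤ dens {y : κ → α | Sum.elim x y ∈ A}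
      · obtain ⟨u, hu, hux⟩ := hκ _ hx
        have h1 : ind (x ∈ B u) ≤ ∑ u, ind (x ∈ B u) :=
          Finset.single_le_sum (fun u _ => ind_nonneg (x ∈ B u)) (Finset.mem_univ u)
        rw [ind_pos (show x ∈ B u from ⟨hu, hux⟩)] at h1
        have := dens_le_one {y : κ → α | Sum.elim x y ∈ A}
        linarith
      · linarith
    have hsum : δ / 2 ≤ ∑ u, dens (B u) := by
      have h1 := expect_mono hpt
      rw [Finset.expect_add_distrib, Fintype.expect_const, Finset.expect_sum_comm, ← hA2] at h1
      unfold dens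
      linarith
    obtain ⟨u, -, hu⟩ : ∃ u ∈ Finset.univ, δ / (2 * P) ≤ dens (B u) := by
      refine Finset.exists_le_of_sum_le (f := fun _ => δ / (2 * P)) ?_ ?_
      · have : Nonempty (α ⊕ Fin m) := ⟨Sum.inl (Classical.arbitrary α)⟩
        exact Finset.univ_nonempty
      · rw [Finset.sum_const, Finset.card_univ, nsmul_eq_mul, ← hP]
        have : (P : ℝ) * (δ / (2 * P)) = δ / 2 := by field_simp
        linarith
    have hline : ¬ LineFree (B u) := fun hl => (hn _ hl).not_ge hu
    simp only [LineFree] at hline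
    push Not at hline
    obtain ⟨z, ⟨i₀, hi₀⟩, hz⟩ := hline
    have hup : Proper u := (hz (Classical.arbitrary α)).1
    refine ⟨Sum.elim (fun i => (z i).elim (Sum.inr 0) Sum.inl)
      (fun j => Sum.map id Fin.succ (u j)), ?_, fun x => ?_⟩
    · intro e
      refine Fin.cases ⟨Sum.inl i₀, by simp [hi₀]⟩ (fun e => ?_) e
      obtain ⟨j, hj⟩ := hup e
      exact ⟨Sum.inr j, by simp [hj]⟩
    · convert (hz (x 0)).2 (fun e => x e.succ) using 1
      ext i
      rcases i with i | j
      · simp only [sub, Sum.elim_inl]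
        cases z i <;> simp
      · simp only [sub, Sum.elim_inr]
        cases u j <;> simp

/-! ### Insensitive sets -/

/-- `D` is `a`-insensitive on the coordinates in `T`: membership in `D` does not change when some
letters `a` and `none` at these coordinates are exchanged for one another. -/
def Insens {ι α : Type} (a : α) (T : Set ι) (D : Set (ι → Option α)) : Prop :=
  ∀ z z' : ι → Option α, (∀ i, i ∉ T → z i = z' i) → (∀ i, (z i).getD a = (z' i).getD a) →
    z ∈ D → z' ∈ D

lemma Insens.compl {ι α : Type} {a : α} {T : Set ι} {D : Set (ι → Option α)}
    (h : Insens a T D) : Insens a T Dᶜ :=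
  fun z z' h1 h2 hz hw => hz (h z' z (fun i hi => (h1 i hi).symm) (fun i => (h2 i).symm) hw)

/-- Insensitivity passes to subspaces. -/
lemma Insens.preimage {ι η α : Type} {a : α} {D : Set (ι → Option α)}
    (h : Insens a Set.univ D) (u : ι → Option α ⊕ η) :
    Insens a Set.univ {x | sub u x ∈ D} := by
  intro z z' _ h2 hz
  refine h _ _ (fun i hi => (hi (Set.mem_univ i)).elim) (fun i => ?_) hz
  simp only [sub]
  cases u i with
  | inl b => rfl
  | inr e => exact h2 e

/-- A dense `a`-insensitive set contains a subspace: being insensitive, it is the preimage under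
`none ↦ a` of a subset of a cube over the smaller alphabet `α`, dense for a non-uniform measure. -/
lemma exists_sub_of_insens {α : Type} [Fintype α] [Nonempty α] (h : DHJ α) (m : ℕ) {η : ℝ}
    (hη : 0 < η) :
    ∃ M : ℕ, ∀ (a : α) (E : Set (Fin M → Option α)), Insens a Set.univ E → η ≤ dens E →
      ∃ u : Fin M → Option α ⊕ Fin m, Proper u ∧ ∀ x, sub u x ∈ E := by
  obtain ⟨κ, _, _, hκ⟩ := h.multidim m (η / 2) (by positivity)
  obtain ⟨M, hM⟩ := exists_sub_of_surjective (Option α) α κ hη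
  refine ⟨M, fun a E hE hd => ?_⟩
  obtain ⟨u₁, hu₁, h₁⟩ := hM (fun o => o.getD a) (fun b => ⟨some b, rfl⟩)
    (fun z => ind ((fun i => some (z i)) ∈ E)) (fun z => ind_le_one _) (by
      refine hd.trans (expect_mono fun w => ind_mono fun hw => ?_)
      exact hE _ _ (fun i hi => (hi (Set.mem_univ i)).elim) (fun i => by simp) hw)
  obtain ⟨u₂, hu₂, h₂⟩ := hκ {x | (fun i => some (sub u₁ x i)) ∈ E} h₁
  refine ⟨fun i => Sum.map some id (comp u₁ u₂ i), fun e => ?_, fun x => ?_⟩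
  · obtain ⟨i, hi⟩ := hu₁.comp hu₂ e
    exact ⟨i, by simp [hi]⟩
  · refine hE _ _ (fun i hi => (hi (Set.mem_univ i)).elim) (fun i => ?_)
      (h₂ (fun e => (x e).getD a))
    rw [← sub_comp]
    simp only [sub]
    cases comp u₁ u₂ i <;> simp

/-- If `f ≤ 1` has nonpositive mean on every `m`-dimensional subspace and `D` is insensitive on
`r` blocks of `M` coordinates, then `f` has small integral over `D`: each block makes it possible
to remove from `D` a disjoint union of `m`-dimensional subspaces, of density bounded below, leaving
a set which is insensitive on the remaining blocks. -/
lemma expect_insens_le_aux {α : Type} [Fintype α] {a : α} {m M n : ℕ} {η : ℝ} (hη : 0 < η)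
    (hM : ∀ E : Set (Fin M → Option α), Insens a Set.univ E → η / 2 ≤ dens E →
      ∃ u : Fin M → Option α ⊕ Fin m, Proper u ∧ ∀ x, sub u x ∈ E)
    (f : (Fin n → Option α) → ℝ) (hf1 : ∀ z, f z ≤ 1)
    (hf : ∀ u : Fin n → Option α ⊕ Fin m, Proper u → 𝔼 x, f (sub u x) ≤ 0) (r : ℕ) :
    ∀ T : Finset (Fin n), r * M ≤ T.card → ∀ D : Set (Fin n → Option α), Insens a (T : Set _) D →
      𝔼 z, ind (z ∈ D) * f z ≤
        max η (dens D - r * (η / 2 / Fintype.card (Fin M → Option α))) := by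
  have hle : ∀ D : Set (Fin n → Option α), 𝔼 z, ind (z ∈ D) * f z ≤ dens D := fun D =>
    expect_mono fun z => by nlinarith [ind_nonneg (z ∈ D), hf1 z]
  have hκ : (0 : ℝ) < Fintype.card (Fin M → Option α) := by exact_mod_cast Fintype.card_pos
  induction r with
  | zero =>
    intro T _ D _
    refine le_max_of_le_right ?_
    simpa using hle D
  | succ r ih =>
    intro T hT D hD
    rcases lt_or_ge (dens D) η with hDη | hDη
    · exact le_max_of_le_left ((hle D).trans hDη.le)
    -- a block of coordinates on which `D` is insensitive
    obtain ⟨e, he, heT⟩ : ∃ e : Fin M → Fin n, Injective e ∧ ∀ j, e j ∈ T := by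
      obtain ⟨e⟩ : Nonempty (Fin M ↪ T) := by
        refine Function.Embedding.nonempty_of_card_le ?_
        simp only [Fintype.card_fin, Fintype.card_coe]
        nlinarith
      exact ⟨fun j => e j, Subtype.val_injective.comp e.injective, fun j => (e j).2⟩
    -- the section of `D` through `z` in the directions of the block
    set S : (Fin n → Option α) → Set (Fin M → Option α) := fun z => {x | extend e x z ∈ D} with hS
    have hSins : ∀ z, Insens a Set.univ (S z) := by
      intro z x x' _ h2 hx
      refine hD (extend e x z) _ (fun i hi => ?_) (fun i => ?_) hx
      · have : ¬ ∃ j, e j = i := by rintro ⟨j, rfl⟩; exact hi (heT j)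
        rw [extend_apply' _ _ _ this, extend_apply' _ _ _ this]
      · by_cases hi : ∃ j, e j = i
        · obtain ⟨j, rfl⟩ := hi
          simpa [he.extend_apply] using h2 j
        · rw [extend_apply' _ _ _ hi, extend_apply' _ _ _ hi]
    have hSext : ∀ z x, S (extend e x z) = S z := by
      intro z x
      have : ∀ y : Fin M → Option α, extend e y (extend e x z) = extend e y z := by
        intro y
        ext1 i
        by_cases hi : ∃ j, e j = i
        · obtain ⟨j, rfl⟩ := hi
          simp [he.extend_apply]
        · simp [extend_apply' _ _ _ hi]
      simp only [hS, this]
    have hext : ∀ (x : Fin M → Option α) (z : Fin n → Option α), extend e x z ∘ e = x :=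
      fun x z => funext fun j => he.extend_apply _ _ _
    have hext' : ∀ z : Fin n → Option α, extend e (z ∘ e) z = z := by
      intro z
      ext1 i
      by_cases hi : ∃ j, e j = i
      · obtain ⟨j, rfl⟩ := hi
        simp [he.extend_apply]
      · simp [extend_apply' _ _ _ hi]
    -- the subspace depends on the section only
    choose! U hUp hUm using hM
    set R : Set (Fin n → Option α) :=
      {z | η / 2 ≤ dens (S z) ∧ ∃ t, sub (U (S z)) t = z ∘ e} with hR
    have hRD : R ⊆ D := by
      rintro z ⟨h1, t, ht⟩
      have := hUm _ (hSins z) h1 t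
      rw [ht] at this
      simpa [hS, hext'] using this
    -- the integral over a subspace, as a sum over its parametrisation
    have hsum : ∀ z, η / 2 ≤ dens (S z) → ∀ g : (Fin M → Option α) → ℝ,
        𝔼 x, ind (∃ t, sub (U (S z)) t = x) * g x =
          (∑ t, g (sub (U (S z)) t)) / Fintype.card (Fin M → Option α) := by
      intro z hz g
      rw [Fintype.expect_eq_sum_div_card]
      congr 1
      have hinj := sub_injective (hUp _ (hSins z) hz)
      rw [← Finset.sum_image (f := g) (s := Finset.univ) (g := sub (U (S z)))
        (fun x _ y _ h => hinj h), ← Finset.sum_subset (Finset.subset_univ _)]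
      · refine Finset.sum_congr rfl fun x hx => ?_
        obtain ⟨t, -, ht⟩ := Finset.mem_image.1 hx
        rw [ind_pos ⟨t, ht⟩, one_mul]
      · intro x _ hx
        rw [ind_neg, zero_mul]
        rintro ⟨t, ht⟩
        exact hx (Finset.mem_image.2 ⟨t, Finset.mem_univ _, ht⟩)
    have hRsplit : ∀ g : (Fin n → Option α) → ℝ, 𝔼 z, ind (z ∈ R) * g z =
        𝔼 z, ind (η / 2 ≤ dens (S z)) *
          𝔼 x, ind (∃ t, sub (U (S z)) t = x) * g (extend e x z) := by
      intro g
      rw [← expect_extend e he]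
      refine Finset.expect_congr rfl fun z _ => ?_
      rw [Finset.mul_expect]
      refine Finset.expect_congr rfl fun x _ => ?_
      simp only [hR, Set.mem_ofPred_eq, hSext, hext]
      by_cases h1 : η / 2 ≤ dens (S z)
      · rw [ind_pos h1, one_mul]
        simp only [h1, true_and]
      · simp [h1, ind_neg]
    have hRf : 𝔼 z, ind (z ∈ R) * f z ≤ 0 := by
      rw [hRsplit]
      refine expect_le_const fun z => ?_
      by_cases h1 : η / 2 ≤ dens (S z)
      · rw [hsum z h1, ind_pos h1, one_mul]
        have h2 := hf _ (proper_extend e he (hUp _ (hSins z) h1) z)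
        simp only [sub_extend e he] at h2
        rw [Fintype.expect_eq_sum_div_card, div_le_iff₀ (by positivity), zero_mul] at h2
        exact div_nonpos_of_nonpos_of_nonneg h2 hκ.le
      · rw [ind_neg h1, zero_mul]
    have hRd : η / 2 / Fintype.card (Fin M → Option α) ≤ dens R := by
      have h0 : dens R = 𝔼 z, ind (z ∈ R) * 1 := by simp [dens]
      rw [h0, hRsplit]
      have h1 : η / 2 ≤ 𝔼 z, ind (η / 2 ≤ dens (S z)) := by
        have h2 : dens D = 𝔼 z, dens (S z) := by
          unfold dens
          rw [← expect_extend e he]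
          rfl
        have h3 : 𝔼 z, dens (S z) ≤ 𝔼 z, (η / 2 + ind (η / 2 ≤ dens (S z))) := by
          refine expect_mono fun z => ?_
          by_cases h4 : η / 2 ≤ dens (S z)
          · rw [ind_pos h4]; linarith [dens_le_one (S z)]
          · rw [ind_neg h4]; linarith
        rw [Finset.expect_add_distrib, Fintype.expect_const, ← h2] at h3
        linarith
      calc η / 2 / Fintype.card (Fin M → Option α)
          ≤ (𝔼 z, ind (η / 2 ≤ dens (S z))) / Fintype.card (Fin M → Option α) := by gcongr
        _ = 𝔼 z, ind (η / 2 ≤ dens (S z)) / Fintype.card (Fin M → Option α) := by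
          rw [Finset.expect_div]
        _ ≤ _ := by
          refine expect_mono fun z => ?_
          by_cases h4 : η / 2 ≤ dens (S z)
          · rw [hsum z h4 (fun _ => 1), ind_pos h4, one_mul]
            gcongr
            rw [Finset.sum_const, Finset.card_univ, nsmul_eq_mul, mul_one]
            exact_mod_cast Fintype.card_pos
          · simp [ind_neg h4]
    have hD' : Insens a ((T \ Finset.univ.image e : Finset (Fin n)) : Set (Fin n)) (D \ R) := by
      intro z z' h1 h2 ⟨hzD, hzR⟩
      have hze : z ∘ e = z' ∘ e := by
        ext1 j
        exact h1 (e j) (by simp)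
      have hzz : S z = S z' := by
        have key : ∀ z z' : Fin n → Option α,
            (∀ i, i ∉ ((T \ Finset.univ.image e : Finset (Fin n)) : Set (Fin n)) → z i = z' i) →
            (∀ i, (z i).getD a = (z' i).getD a) → S z ⊆ S z' := by
          intro z z' h1 h2 x hx
          refine hD (extend e x z) _ (fun i hi => ?_) (fun i => ?_) hx
          · by_cases hi' : ∃ j, e j = i
            · obtain ⟨j, rfl⟩ := hi'
              simp [he.extend_apply]
            · rw [extend_apply' _ _ _ hi', extend_apply' _ _ _ hi']
              exact h1 i fun h => hi (Finset.mem_sdiff.1 (Finset.mem_coe.1 h)).1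
          · by_cases hi' : ∃ j, e j = i
            · obtain ⟨j, rfl⟩ := hi'
              simp [he.extend_apply]
            · rw [extend_apply' _ _ _ hi', extend_apply' _ _ _ hi']
              exact h2 i
        exact (key z z' h1 h2).antisymm
          (key z' z (fun i hi => (h1 i hi).symm) (fun i => (h2 i).symm))
      refine ⟨hD z z' (fun i hi => h1 i fun h => ?_) h2 hzD, fun hz' => hzR ?_⟩
      · exact hi (Finset.mem_sdiff.1 (Finset.mem_coe.1 h)).1
      · simp only [hR, Set.mem_ofPred_eq] at hz' ⊢
        rwa [hzz, hze]
    have hcard : r * M ≤ (T \ Finset.univ.image e).card := by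
      have h1 : (Finset.univ.image e).card = M := by
        rw [Finset.card_image_of_injective _ he]; simp
      have h2 := Finset.le_card_sdiff (Finset.univ.image e) T
      rw [h1] at h2
      have h3 : (r + 1) * M = r * M + M := by ring
      omega
    have hsplit : ∀ z, ind (z ∈ D) = ind (z ∈ D \ R) + ind (z ∈ R) := by
      intro z
      by_cases h1 : z ∈ R
      · rw [ind_pos h1, ind_pos (hRD h1), ind_neg (fun h => h.2 h1)]; norm_num
      · by_cases h2 : z ∈ D
        · rw [ind_pos h2, ind_neg h1, ind_pos (show z ∈ D \ R from ⟨h2, h1⟩)]; norm_num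
        · rw [ind_neg h2, ind_neg h1, ind_neg (fun h => h2 h.1)]; norm_num
    have hdens : dens D = dens (D \ R) + dens R := by
      unfold dens
      rw [← Finset.expect_add_distrib]
      exact Finset.expect_congr rfl fun z _ => hsplit z
    have hint : 𝔼 z, ind (z ∈ D) * f z =
        𝔼 z, ind (z ∈ D \ R) * f z + 𝔼 z, ind (z ∈ R) * f z := by
      rw [← Finset.expect_add_distrib]
      exact Finset.expect_congr rfl fun z _ => by rw [hsplit z, add_mul]
    have := ih _ hcard _ hD'
    calc 𝔼 z, ind (z ∈ D) * f z ≤ 𝔼 z, ind (z ∈ D \ R) * f z := by linarith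
      _ ≤ _ := this
      _ ≤ _ := by
        refine max_le_max le_rfl ?_
        push_cast
        linarith

/-- If `f ≤ 1` has nonpositive mean on every `m`-dimensional subspace, then its integral over an
insensitive set is small in high dimension. -/
lemma expect_insens_le {α : Type} [Fintype α] [Nonempty α] (h : DHJ α) (m : ℕ) {η : ℝ}
    (hη : 0 < η) :
    ∃ N : ℕ, ∀ n, N ≤ n → ∀ f : (Fin n → Option α) → ℝ, (∀ z, f z ≤ 1) →
      (∀ u : Fin n → Option α ⊕ Fin m, Proper u → 𝔼 x, f (sub u x) ≤ 0) →
      ∀ (a : α) (D : Set (Fin n → Option α)), Insens a Set.univ D →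
        𝔼 z, ind (z ∈ D) * f z ≤ η := by
  obtain ⟨M, hM⟩ := exists_sub_of_insens h m (half_pos hη)
  set κ := η / 2 / Fintype.card (Fin M → Option α)
  have hκ : 0 < κ := by
    have : (0 : ℝ) < Fintype.card (Fin M → Option α) := by exact_mod_cast Fintype.card_pos
    positivity
  obtain ⟨r, hr⟩ := exists_nat_ge (1 / κ)
  refine ⟨r * M, fun n hn f hf1 hf a D hD => ?_⟩
  have := expect_insens_le_aux hη (hM a) f hf1 hf r Finset.univ (by simpa using hn) D
    (by simpa using hD)
  refine this.trans (max_le le_rfl ?_)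
  rw [div_le_iff₀ hκ] at hr
  linarith [dens_le_one D]

/-- The same for the complement of an intersection of insensitive sets, by induction on their
number: such a complement is the disjoint union of `Dᶜ` and `D ∩ (⋂ i, D i)ᶜ`, where `D` is one of
the sets and the intersection is over the others, and the induction hypothesis applies to
subspaces. -/
lemma expect_compl_iInter_le {α : Type} [Fintype α] [Nonempty α] (h : DHJ α) (R : Finset α) :
    ∀ (m : ℕ) (η : ℝ), 0 < η →
    ∃ N : ℕ, ∀ n, N ≤ n → ∀ f : (Fin n → Option α) → ℝ, (∀ z, f z ≤ 1) →
      (∀ u : Fin n → Option α ⊕ Fin m, Proper u → 𝔼 x, f (sub u x) ≤ 0) →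
      ∀ D : α → Set (Fin n → Option α), (∀ a, Insens a Set.univ (D a)) →
        𝔼 z, ind (¬ ∀ a ∈ R, z ∈ D a) * f z ≤ η := by
  induction R using Finset.induction_on with
  | empty =>
    intro m η hη
    exact ⟨0, fun n _ f _ _ D _ => by simpa [ind] using hη.le⟩
  | insert a R _ ih =>
    intro m η hη
    obtain ⟨N₁, hN₁⟩ := ih m (η / 4) (by positivity)
    obtain ⟨N₂, hN₂⟩ := expect_insens_le h N₁ (η := η / 4) (by positivity)
    obtain ⟨N₃, hN₃⟩ := expect_insens_le h m (η := η / 4) (by positivity)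
    refine ⟨max N₂ N₃, fun n hn f hf1 hf D hD => ?_⟩
    have h1 := hN₃ n ((le_max_right _ _).trans hn) f hf1 hf a _ (hD a).compl
    have h2 := hN₂ n ((le_max_left _ _).trans hn)
      (fun z => ind (¬ ∀ a ∈ R, z ∈ D a) * f z - η / 4)
      (fun z => by
        by_cases hz : ¬ ∀ a ∈ R, z ∈ D a
        · rw [ind_pos hz]; linarith [hf1 z]
        · rw [ind_neg hz]; linarith)
      (fun u hu => by
        rw [Finset.expect_sub_distrib, Fintype.expect_const]
        have := hN₁ N₁ le_rfl (fun x => f (sub u x)) (fun x => hf1 _)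
          (fun v hv => by
            have := hf _ (hu.comp hv)
            simpa only [sub_comp] using this)
          (fun a => {x | sub u x ∈ D a}) (fun a => (hD a).preimage u)
        simp only [Set.mem_ofPred_eq] at this
        linarith)
      a _ (hD a)
    have h3 : 𝔼 z, ind (¬ ∀ b ∈ insert a R, z ∈ D b) * f z =
        𝔼 z, ind (z ∈ (D a)ᶜ) * f z +
          (𝔼 z, ind (z ∈ D a) * (ind (¬ ∀ a ∈ R, z ∈ D a) * f z - η / 4) +
            𝔼 z, ind (z ∈ D a) * (η / 4)) := by
      rw [← Finset.expect_add_distrib, ← Finset.expect_add_distrib]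
      refine Finset.expect_congr rfl fun z _ => ?_
      by_cases hz : z ∈ D a
      · simp [ind, hz]
      · simp [ind, hz]
    have h4 : 𝔼 z, ind (z ∈ D a) * (η / 4) ≤ η / 4 :=
      expect_le_const fun z => by nlinarith [ind_le_one (z ∈ D a)]
    linarith

/-! ### The induction on the alphabet -/

/-- The words in which the letter `none` does not occur are sparse. -/
lemma dens_some_le (α : Type) [Fintype α] {τ : ℝ} (hτ : 0 < τ) :
    ∃ N : ℕ, ∀ n, N ≤ n → dens {x : Fin n → Option α | ∀ i, x i ≠ none} ≤ τ := by
  set q : ℝ := 𝔼 o : Option α, ind (o ≠ none) with hq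
  have hq0 : 0 ≤ q := expect_nonneg_of fun _ => ind_nonneg _
  have hq1 : q < 1 := by
    rw [← Fintype.expect_one (ι := Option α) (M := ℝ)]
    exact Finset.expect_lt_expect (fun o _ => ind_le_one _)
      ⟨none, Finset.mem_univ _, by rw [ind_neg (by simp)]; norm_num⟩
  obtain ⟨N, hN⟩ := exists_pow_lt_of_lt_one hτ hq1
  refine ⟨N, fun n hn => ?_⟩
  have : dens {x : Fin n → Option α | ∀ i, x i ≠ none} = q ^ n := by
    rw [hq, Finset.expect_pow, Fintype.piFinset_univ]
    refine Finset.expect_congr rfl fun x _ => ?_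
    simp only [Set.mem_ofPred_eq]
    by_cases hx : ∀ i, x i ≠ none
    · rw [ind_pos hx, Finset.prod_eq_one fun i _ => ind_pos (hx i)]
    · rw [ind_neg hx]
      push Not at hx
      obtain ⟨i, hi⟩ := hx
      exact (Finset.prod_eq_zero (Finset.mem_univ i) (ind_neg (by simp [hi]))).symm
  rw [this]
  exact (pow_le_pow_of_le_one hq0 hq1.le hn).trans hN.le

lemma dens_sum_type {I J β : Type} [Fintype I] [DecidableEq I] [Fintype J] [DecidableEq J]
    [Fintype β] (A : Set (I ⊕ J → β)) :
    dens A = 𝔼 x : I → β, dens {y : J → β | Sum.elim x y ∈ A} := by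
  unfold dens
  rw [← expect_prod (fun (x : I → β) (y : J → β) => ind (y ∈ {y | Sum.elim x y ∈ A}))]
  refine Fintype.expect_equiv (Equiv.sumArrowEquivProdArrow I J β) _ _ fun z => ?_
  simp [Equiv.sumArrowEquivProdArrow]

/-- Let `A` be a set of words over the alphabet `Option α`, indexed by `Fin M ⊕ J`, all of whose
sections over `Option α ^ M` have density at least `δ / 2`. Then, for some subspace of
`Option α ^ M`, a positive proportion of its points `z`, regarded as words with wildcard `none`,
give lines over `α` contained in `A`, on average over `y`. To see this, apply the theorem for `α`
to a random subspace of dimension `m₀`, and fix by pigeonhole the line found in it. -/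
lemma exists_sub_many_lines {α : Type} [Fintype α] [Nonempty α] {δ : ℝ} (hδ : 0 < δ) {m₀ : ℕ}
    (hm₀ : ∀ A : Set (Fin m₀ → α), LineFree A → dens A < δ / 4) (m : ℕ) :
    ∃ M : ℕ, ∀ (J : Type) [Fintype J] [DecidableEq J] (A : Set (Fin M ⊕ J → Option α)),
      (∀ x : Fin M → Option α, δ / 2 ≤ dens {y : J → Option α | Sum.elim x y ∈ A}) →
      ∃ u : Fin M → Option α ⊕ Fin m, Proper u ∧
        δ / 8 / Fintype.card (Fin m₀ → Option α) ≤ 𝔼 x : Fin m → Option α,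
          dens {y : J → Option α |
            ∀ a, Sum.elim (fun i => some ((sub u x i).getD a)) y ∈ A} := by
  set P := Fintype.card (Fin m₀ → Option α) with hP
  have hP0 : (0 : ℝ) < P := by exact_mod_cast Fintype.card_pos
  set c := δ / 4 / P with hc
  have hc0 : 0 < c := by positivity
  obtain ⟨M, hM⟩ := exists_sub_of_surjective (α ⊕ Fin m₀) (Option α) (Fin m) hc0
  refine ⟨M, fun J _ _ A hA => ?_⟩
  set L : (Fin M → Option α) → Set (J → Option α) :=
    fun z => {y | ∀ a, Sum.elim (fun i => some ((z i).getD a)) y ∈ A} with hL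
  have hLv : ∀ (w : Fin M → α ⊕ Fin m₀) (v : Fin m₀ → Option α) (a : α) (i : Fin M),
      (Sum.elim some v (w i)).getD a = sub w (fun j => (v j).getD a) i := by
    intro w v a i
    simp only [sub]
    cases w i <;> simp
  have hwy : ∀ (w : Fin M → α ⊕ Fin m₀) (y : J → Option α),
      dens {t : Fin m₀ → α | Sum.elim (fun i => some (sub w t i)) y ∈ A} ≤
        δ / 4 + ∑ v : Fin m₀ → Option α,
          ind ((∃ j, v j = none) ∧ y ∈ L (Sum.elim some v ∘ w)) := by
    intro w y
    set G := {t : Fin m₀ → α | Sum.elim (fun i => some (sub w t i)) y ∈ A} with hG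
    have hs : 0 ≤ ∑ v : Fin m₀ → Option α,
        ind ((∃ j, v j = none) ∧ y ∈ L (Sum.elim some v ∘ w)) :=
      Finset.sum_nonneg fun u _ => ind_nonneg _
    by_cases hlf : LineFree G
    · linarith [hm₀ G hlf]
    · simp only [LineFree] at hlf
      push Not at hlf
      obtain ⟨v, hv, hvG⟩ := hlf
      have h1 := Finset.single_le_sum (f := fun v : Fin m₀ → Option α =>
        ind ((∃ j, v j = none) ∧ y ∈ L (Sum.elim some v ∘ w)))
        (fun v _ => ind_nonneg _) (Finset.mem_univ v)
      beta_reduce at h1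
      have hLy : y ∈ L (Sum.elim some v ∘ w) := by
        intro a
        have h2 : (fun i => some (((Sum.elim some v ∘ w) i).getD a)) =
            fun i => some (sub w (fun j => (v j).getD a) i) :=
          funext fun i => congrArg some (hLv w v a i)
        rw [h2]
        exact hvG a
      rw [ind_pos ⟨hv, hLy⟩] at h1
      linarith [dens_le_one G]
  have hw : ∀ w : Fin M → α ⊕ Fin m₀, δ / 4 ≤ ∑ v : Fin m₀ → Option α,
      𝔼 y, ind ((∃ j, v j = none) ∧ y ∈ L (Sum.elim some v ∘ w)) := by
    intro w
    have h1 := expect_mono (hwy w)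
    rw [Finset.expect_add_distrib, Fintype.expect_const, Finset.expect_sum_comm] at h1
    have h2 : δ / 2 ≤ 𝔼 y : J → Option α,
        dens {t : Fin m₀ → α | Sum.elim (fun i => some (sub w t i)) y ∈ A} := by
      unfold dens
      rw [Finset.expect_comm]
      exact const_le_expect fun t => hA fun i => some (sub w t i)
    linarith
  obtain ⟨v, -, hv⟩ : ∃ v ∈ (Finset.univ : Finset (Fin m₀ → Option α)), c ≤
      𝔼 w : Fin M → α ⊕ Fin m₀, 𝔼 y,
        ind ((∃ j, v j = none) ∧ y ∈ L (Sum.elim some v ∘ w)) := by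
    refine Finset.exists_le_of_sum_le (f := fun _ => c) Finset.univ_nonempty ?_
    rw [Finset.sum_const, Finset.card_univ, nsmul_eq_mul, ← Finset.expect_sum_comm, ← hP]
    have h1 : (P : ℝ) * c = δ / 4 := by rw [hc]; field_simp
    rw [h1]
    have : Nonempty (α ⊕ Fin m₀) := ⟨Sum.inl (Classical.arbitrary α)⟩
    exact const_le_expect hw
  have hvn : ∃ j, v j = none := by
    by_contra hvn
    have : 𝔼 w : Fin M → α ⊕ Fin m₀, 𝔼 y,
        ind ((∃ j, v j = none) ∧ y ∈ L (Sum.elim some v ∘ w)) = 0 :=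
      Finset.expect_eq_zero fun w _ => Finset.expect_eq_zero fun y _ =>
        ind_neg fun h => hvn h.1
    linarith
  obtain ⟨u, hu, h⟩ := hM (Sum.elim some v) (by
      obtain ⟨j, hj⟩ := hvn
      rintro (_ | a)
      · exact ⟨Sum.inr j, hj⟩
      · exact ⟨Sum.inl a, rfl⟩)
    (fun z => dens (L z)) (fun z => dens_le_one _)
    (hv.trans (expect_mono fun w => expect_mono fun y => ind_mono fun h => h.2))
  refine ⟨u, hu, ?_⟩
  have h3 : δ / 8 / P = c / 2 := by rw [hc]; ring
  rw [h3]
  exact h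

/-- The inductive step. Let `δ > 0` be the limit of the maximal densities of line-free sets over
`Option α`, and let `A` be line-free of density almost `δ`. By maximality the sections of `A` have
density almost exactly `δ`, so that `exists_sub_many_lines` applies. On the subspace it provides,
let `B y` be the section of `A` at `y`, and `C y a` the `a`-insensitive set of the points `x` such
that replacing `none` by `a` in `x` leads into `A`. Then `⋂ a, C y a` is dense on average over `y`.
Since `A` is line-free, `B y` and `⋂ a, C y a` only meet in the sparse set of words without `none`,
so that on average over `y` the relative density of `B y` in the complement of `⋂ a, C y a` exceeds
`δ` by a fixed amount. This contradicts `expect_compl_iInter_le`, as `B y` has density at most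
`δ + ε` on every subspace of large dimension. -/
lemma DHJ.option {α : Type} [Fintype α] [Nonempty α] (h : DHJ α) : DHJ (Option α) := by
  by_contra hcon
  simp only [DHJ] at hcon
  push Not at hcon
  obtain ⟨δ₀, hδ₀, hcon⟩ := hcon
  set Ω : Set ℝ := {d | ∃ n : ℕ, ∀ A : Set (Fin n → Option α), LineFree A → dens A ≤ d} with hΩ
  have hlow : ∀ d ∈ Ω, δ₀ ≤ d := by
    rintro d ⟨n, hn⟩
    obtain ⟨A, hA, hA'⟩ := hcon n
    exact hA'.trans (hn A hA)
  have hne : Ω.Nonempty := ⟨1, 0, fun A _ => dens_le_one A⟩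
  have hbdd : BddBelow Ω := ⟨δ₀, hlow⟩
  set δ := sInf Ω with hδdef
  have hδ : 0 < δ := hδ₀.trans_le (le_csInf hne hlow)
  have hup : ∀ ε : ℝ, 0 < ε → ∃ n : ℕ, ∀ A : Set (Fin n → Option α), LineFree A →
      dens A ≤ δ + ε := by
    intro ε hε
    obtain ⟨d, ⟨n, hn⟩, hd⟩ := Real.lt_sInf_add_pos hne hε
    exact ⟨n, fun A hA => (hn A hA).trans hd.le⟩
  have hdown : ∀ ε : ℝ, 0 < ε → ∀ n : ℕ, ∃ A : Set (Fin n → Option α), LineFree A ∧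
      δ - ε ≤ dens A := by
    intro ε hε n
    by_contra! hno
    have : δ - ε ∈ Ω := ⟨n, fun A hA => (hno A hA).le⟩
    linarith [csInf_le hbdd this]
  -- `θ` is the proportion given by `exists_sub_many_lines`; an error `ε` small compared to `δ * θ`
  -- leaves a contradiction at the end, and `ε'` is so small that the total deficit of the `K`
  -- sections of `A` is at most `ε`
  obtain ⟨m₀, hm₀⟩ := h (δ / 4) (by positivity)
  have hP0 : (0 : ℝ) < Fintype.card (Fin m₀ → Option α) := by exact_mod_cast Fintype.card_pos
  set θ := δ / 8 / Fintype.card (Fin m₀ → Option α) with hθ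
  have hθ0 : 0 < θ := by positivity
  set ε := min (δ * θ / 8) (δ / 2) with hε
  have hε0 : 0 < ε := by positivity
  have hε1 : ε ≤ δ * θ / 8 := min_le_left _ _
  have hε2 : ε ≤ δ / 2 := min_le_right _ _
  obtain ⟨n₀, hn₀⟩ := hup ε hε0
  obtain ⟨N₁, hN₁⟩ := expect_compl_iInter_le h Finset.univ n₀ (δ * θ / 8) (by positivity)
  obtain ⟨N₂, hN₂⟩ := dens_some_le α (τ := δ * θ / 8) (by positivity)
  set m := max N₁ N₂ with hm
  obtain ⟨M, hM⟩ := exists_sub_many_lines hδ hm₀ m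
  set K : ℝ := ((Fintype.card (Fin M → Option α) : ℕ) : ℝ) with hK
  have hK0 : 0 < K := by
    rw [hK]; exact_mod_cast Fintype.card_pos
  set ε' := ε / (2 * K) with hε'
  have hε'0 : 0 < ε' := by positivity
  obtain ⟨l, hl⟩ := hup ε' hε'0
  obtain ⟨A, hA, hAd⟩ : ∃ A : Set (Fin M ⊕ Fin l → Option α), LineFree A ∧ δ - ε' ≤ dens A := by
    obtain ⟨A, hA, hAd⟩ := hdown ε' hε'0 (M + l)
    refine ⟨{x | sub (fun i => Sum.inr (finSumFinEquiv.symm i)) x ∈ A},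
      hA.preimage fun e => ⟨finSumFinEquiv e, by simp⟩, hAd.trans (le_of_eq ?_)⟩
    refine (Fintype.expect_equiv (finSumFinEquiv.arrowCongr (Equiv.refl _)) _ _ fun x => ?_).symm
    rfl
  -- every section of `A` has density almost equal to `δ`
  have hsec_le : ∀ x : Fin M → Option α,
      dens {y : Fin l → Option α | Sum.elim x y ∈ A} ≤ δ + ε' := by
    intro x
    refine hl _ ?_
    have := hA.preimage (u := Sum.elim (fun i => Sum.inl (x i)) Sum.inr)
      fun j : Fin l => ⟨Sum.inr j, rfl⟩
    convert this using 3 with y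
    refine iff_of_eq (congrArg (· ∈ A) ?_)
    ext1 i
    cases i <;> rfl
  have hsec_ge : ∀ x : Fin M → Option α,
      δ - ε ≤ dens {y : Fin l → Option α | Sum.elim x y ∈ A} := by
    intro x
    have h1 := le_card_mul_expect (f := fun x : Fin M → Option α =>
      δ + ε' - dens {y : Fin l → Option α | Sum.elim x y ∈ A})
      (fun x => by linarith [hsec_le x]) x
    beta_reduce at h1
    rw [Finset.expect_sub_distrib, Fintype.expect_const, ← dens_sum_type, ← hK] at h1
    have h2 : K * (δ + ε' - dens A) ≤ K * (2 * ε') := by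
      gcongr
      linarith
    have h3 : K * (2 * ε') = ε := by rw [hε']; field_simp
    linarith
  obtain ⟨u, hu, hlines⟩ := hM (Fin l) A fun x => le_trans (by linarith) (hsec_ge x)
  set B : (Fin l → Option α) → Set (Fin m → Option α) :=
    fun y => {x | Sum.elim (sub u x) y ∈ A} with hB
  set C : (Fin l → Option α) → α → Set (Fin m → Option α) :=
    fun y a => {x | Sum.elim (fun i => some ((sub u x i).getD a)) y ∈ A} with hC
  have hBsub : ∀ (y : Fin l → Option α) (x : Fin m → Option α),
      sub (Sum.elim u fun j => Sum.inl (y j)) x = Sum.elim (sub u x) y := by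
    intro y x
    ext1 i
    cases i <;> rfl
  have hBd : δ - ε ≤ 𝔼 y, dens (B y) := by
    unfold dens
    rw [Finset.expect_comm]
    exact const_le_expect fun x => hsec_ge (sub u x)
  have hCd : θ ≤ 𝔼 y, dens {x | ∀ a, x ∈ C y a} := by
    refine hlines.trans (le_of_eq ?_)
    unfold dens
    rw [Finset.expect_comm]
    rfl
  have hdisj : ∀ y x, x ∈ B y → (∀ a, x ∈ C y a) → ∀ i, x i ≠ none := by
    intro y x hxB hxC i hi
    obtain ⟨j, hj⟩ := hu i
    obtain ⟨b, hb⟩ := hA (Sum.elim (fun i => (sub u x i).elim none fun a => some (some a))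
      fun j => some (y j)) ⟨Sum.inl j, by simp [sub, hj, hi]⟩
    apply hb
    cases b with
    | none =>
      convert (show _ ∈ A from hxB) using 1
      ext1 i
      rcases i with i | i
      · simp only [Sum.elim_inl]
        cases sub u x i <;> rfl
      · rfl
    | some a =>
      convert (show _ ∈ A from hxC a) using 1
      ext1 i
      rcases i with i | i
      · simp only [Sum.elim_inl]
        cases sub u x i <;> rfl
      · rfl
  have hCins : ∀ y a, Insens a Set.univ (C y a) := by
    intro y a z z' _ h2 hz
    have : (fun i => some ((sub u z i).getD a)) = fun i => some ((sub u z' i).getD a) := by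
      ext1 i
      simp only [sub]
      cases u i with
      | inl b => rfl
      | inr e => exact congrArg some (h2 e)
    simp only [hC, Set.mem_ofPred_eq] at hz ⊢
    rwa [← this]
  have hkey : ∀ y, dens (B y) + (δ + ε) * dens {x | ∀ a, x ∈ C y a} ≤ δ + ε + δ * θ / 4 := by
    intro y
    have h1 := hN₁ m (le_max_left _ _) (fun x => ind (x ∈ B y) - (δ + ε))
      (fun x => by linarith [ind_le_one (x ∈ B y)])
      (fun v hv => by
        rw [Finset.expect_sub_distrib, Fintype.expect_const]
        have hlf : LineFree {x | sub v x ∈ B y} := by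
          have : LineFree (B y) := by
            have := hA.preimage (u := Sum.elim u fun j => Sum.inl (y j))
              fun e => by
                obtain ⟨i, hi⟩ := hu e
                exact ⟨Sum.inl i, hi⟩
            simpa only [hBsub] using this
          exact this.preimage hv
        have := hn₀ _ hlf
        unfold dens at this
        simp only [Set.mem_ofPred_eq] at this
        linarith)
      (C y) (hCins y)
    have h2 := hN₂ m (le_max_right _ _)
    have h3 : 𝔼 x, (ind (x ∈ B y) + (δ + ε) * ind (x ∈ {x | ∀ a, x ∈ C y a})) ≤
        𝔼 x, (ind (¬ ∀ a ∈ Finset.univ, x ∈ C y a) * (ind (x ∈ B y) - (δ + ε)) + (δ + ε) +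
          ind (x ∈ {x : Fin m → Option α | ∀ i, x i ≠ none})) := by
      refine expect_mono fun x => ?_
      simp only [Finset.mem_univ, true_imp_iff, Set.mem_ofPred_eq]
      by_cases hx : ∀ a, x ∈ C y a
      · rw [ind_pos hx, ind_neg (not_not.2 hx)]
        have := ind_mono (fun hxB : x ∈ B y => hdisj y x hxB hx)
        linarith
      · rw [ind_neg hx, ind_pos hx]
        have := ind_nonneg (∀ i, x i ≠ none)
        linarith
    rw [Finset.expect_add_distrib, Finset.expect_add_distrib, Finset.expect_add_distrib,
      ← Finset.mul_expect, Fintype.expect_const] at h3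
    unfold dens at h2 ⊢
    linarith
  -- averaged over `y`: `δ - ε + (δ + ε) * θ ≤ δ + ε + δ * θ / 4`, impossible as `8 * ε ≤ δ * θ`
  have h1 := expect_le_const hkey
  rw [Finset.expect_add_distrib, ← Finset.mul_expect] at h1
  nlinarith

lemma dhj_fin_succ (k : ℕ) : DHJ (Fin (k + 1)) := by
  induction k with
  | zero =>
    intro δ hδ
    refine ⟨1, fun A hA => ?_⟩
    obtain ⟨b, hb⟩ := hA (fun _ => none) ⟨0, rfl⟩
    have : dens A = 0 := Finset.expect_eq_zero fun x _ =>
      ind_neg fun hx => hb (by convert hx using 1; ext1 i; exact Fin.ext (by omega))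
    rwa [this]
  | succ k ih =>
    intro δ hδ
    obtain ⟨n, hn⟩ := ih.option δ hδ
    refine ⟨n, fun A hA => ?_⟩
    set e : Option (Fin (k + 1)) ≃ Fin (k + 1 + 1) := finSuccEquivLast.symm
    have h1 := hn {x | (fun i => e (x i)) ∈ A} (by
      rintro z ⟨i, hi⟩
      obtain ⟨b, hb⟩ := hA (fun i => (z i).map e) ⟨i, by simp [hi]⟩
      refine ⟨e.symm b, fun h => hb ?_⟩
      convert (show _ ∈ A from h) using 1
      ext1 i
      show ((z i).map e).getD b = e ((z i).getD (e.symm b))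
      cases z i <;> simp)
    refine lt_of_eq_of_lt ?_ h1
    refine (Fintype.expect_equiv ((Equiv.refl (Fin n)).arrowCongr e) _ _ fun x => ?_).symm
    rfl

/-! ### Szemerédi's theorem -/

/-- A shift by at most `m` changes the number of elements of `F` in `{1, …, N}` by at most `m`. -/
lemma card_shift (F : Set ℕ) (N m c : ℕ) (hc : c ≤ m) :
    (((Finset.Icc 1 N).filter fun j => j ∈ F).card : ℝ) - m ≤
      ∑ s ∈ Finset.Icc 1 N, ind (s + c ∈ F) := by
  have h1 : ∑ s ∈ Finset.Icc 1 N, ind (s + c ∈ F) =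
      (((Finset.Icc 1 N).filter fun s => s + c ∈ F).card : ℝ) := by
    simp [ind, Finset.sum_boole]
  have h2 : ((Finset.Icc 1 N).filter fun j => j ∈ F) ⊆
      ((Finset.Icc 1 N).filter fun s => s + c ∈ F).image (· + c) ∪ Finset.Icc 1 c := by
    intro j hj
    simp only [Finset.mem_filter, Finset.mem_Icc, Finset.mem_union, Finset.mem_image] at hj ⊢
    by_cases hjc : j ≤ c
    · exact Or.inr ⟨hj.1.1, hjc⟩
    · refine Or.inl ⟨j - c, ⟨⟨by omega, by omega⟩, ?_⟩, by omega⟩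
      rw [Nat.sub_add_cancel (by omega)]
      exact hj.2
  have h3 := (Finset.card_le_card h2).trans (Finset.card_union_le _ _)
  have h4 : ((Finset.Icc 1 N).filter fun j => j ∈ F).card ≤
      ((Finset.Icc 1 N).filter fun s => s + c ∈ F).card + m := by
    refine h3.trans (Nat.add_le_add Finset.card_image_le ?_)
    simpa using hc
  rw [h1]
  have h5 : (((Finset.Icc 1 N).filter fun j => j ∈ F).card : ℝ) ≤
      ((Finset.Icc 1 N).filter fun s => s + c ∈ F).card + m := by exact_mod_cast h4
  linarith

/-- **Szemerédi's theorem**, from the density Hales–Jewett theorem: the map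
`x ↦ s + ∑ i, x i` sends combinatorial lines to arithmetic progressions, and for some shift `s` it
pulls `F` back to a dense set. -/
lemma szemeredi (F : Set ℕ) (hF : 0 < upperDensity F) (d : ℕ) :
    ∃ b r : ℕ, 0 < r ∧ ∀ j < d, b + j * r ∈ F := by
  obtain rfl | ⟨k, rfl⟩ : d = 0 ∨ ∃ k, d = k + 1 := by
    cases d with
    | zero => exact Or.inl rfl
    | succ k => exact Or.inr ⟨k, rfl⟩
  · exact ⟨0, 1, one_pos, fun j hj => absurd hj (Nat.not_lt_zero j)⟩
  set δ := upperDensity F / 2 with hδ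
  have hδ0 : 0 < δ := by positivity
  obtain ⟨n, hn⟩ := dhj_fin_succ k (δ / 2) (by positivity)
  have hfr : ∃ᶠ N : ℕ in Filter.atTop,
      δ < (((Finset.Icc 1 N).filter fun j => j ∈ F).card : ℝ) / N := by
    refine Filter.frequently_lt_of_lt_limsup ?_ (by
      change δ < upperDensity F
      linarith)
    exact Filter.IsCoboundedUnder.of_frequently_ge (a := 0)
      (Filter.Frequently.of_forall fun N => by positivity)
  obtain ⟨N₀, hN₀⟩ := exists_nat_ge (2 * (n * k : ℕ) / δ)
  obtain ⟨N, hN, hNF⟩ := (Filter.frequently_atTop.1 hfr) (N₀ + 1)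
  have hNpos : (0 : ℝ) < N := by exact_mod_cast (by omega : 0 < N)
  rw [lt_div_iff₀ hNpos] at hNF
  have hNbig : ((n * k : ℕ) : ℝ) ≤ δ / 2 * N := by
    have h1 : (N₀ : ℝ) ≤ N := by exact_mod_cast (by omega : N₀ ≤ N)
    have h2 := (div_le_iff₀ hδ0).1 (hN₀.trans h1)
    linarith
  have hsum : ∀ x : Fin n → Fin (k + 1),
      δ / 2 * N ≤ ∑ s ∈ Finset.Icc 1 N, ind (s + ∑ i, (x i : ℕ) ∈ F) := by
    intro x
    have hx : ∑ i, (x i : ℕ) ≤ n * k := by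
      have := Finset.sum_le_card_nsmul Finset.univ (fun i => (x i : ℕ)) k
        fun i _ => Nat.lt_succ_iff.1 (x i).2
      simpa using this
    have := card_shift F N _ _ hx
    linarith
  have hs : ∃ s ∈ Finset.Icc 1 N,
      δ / 2 ≤ dens {x : Fin n → Fin (k + 1) | s + ∑ i, (x i : ℕ) ∈ F} := by
    apply Finset.exists_le_of_sum_le (by simpa using (by omega : 1 ≤ N))
    have h1 := const_le_expect hsum
    rw [Finset.expect_sum_comm] at h1
    simpa [dens, mul_comm] using h1
  obtain ⟨s, -, hs⟩ := hs
  have hnot : ¬ LineFree {x : Fin n → Fin (k + 1) | s + ∑ i, (x i : ℕ) ∈ F} :=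
    fun hl => absurd (hn _ hl) (not_lt.2 hs)
  simp only [LineFree] at hnot
  push Not at hnot
  obtain ⟨z, ⟨i₀, hi₀⟩, hz⟩ := hnot
  refine ⟨s + ∑ i, (z i).elim 0 fun a => (a : ℕ), ∑ i, if z i = none then 1 else 0, ?_, ?_⟩
  · exact Finset.sum_pos' (fun _ _ => Nat.zero_le _) ⟨i₀, Finset.mem_univ _, by simp [hi₀]⟩
  · intro j hj
    have h1 : s + ∑ i, (((z i).getD ⟨j, hj⟩ : Fin (k + 1)) : ℕ) ∈ F := hz ⟨j, hj⟩
    convert h1 using 1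
    rw [add_assoc, Finset.mul_sum, ← Finset.sum_add_distrib]
    congr 1
    refine Finset.sum_congr rfl fun i _ => ?_
    cases z i <;> simp

end DensityHJ

/-! ### Independence along arithmetic progressions -/

/-- An arithmetic progression `b, b + r, …` inside an independence set: translating the witnesses
by `T ^ (b - r)` makes the progression start at its common difference. -/
lemma indAP_of_pos_density {X : Type*} [TopologicalSpace X] (T : Equiv.Perm X) (x₁ x₂ : X)
    (h : ∀ U₁ ∈ nhds x₁, ∀ U₂ ∈ nhds x₂,
      ∃ F : Set ℕ, IsIndepSet T U₁ U₂ F ∧ 0 < upperDensity F) :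
    (x₁, x₂) ∈ IndAP T := by
  intro U₁ hU₁ U₂ hU₂ d hd
  obtain ⟨F, hF, hF0⟩ := h U₁ hU₁ U₂ hU₂
  obtain ⟨b, r, hr, hbr⟩ := DensityHJ.szemeredi F hF0 d
  refine ⟨r, hr, fun t => ?_⟩
  have hinj : Function.Injective fun i : Fin d => b + (i : ℕ) * r := by
    intro i j hij
    exact Fin.ext (Nat.eq_of_mul_eq_mul_right hr (Nat.add_left_cancel hij))
  obtain ⟨x, hx⟩ := hF (Finset.univ.image fun i : Fin d => b + (i : ℕ) * r)
    (by
      intro j hj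
      simp only [Finset.coe_image, Finset.coe_univ, Set.image_univ, Set.mem_range] at hj
      obtain ⟨i, rfl⟩ := hj
      exact hbr i i.2)
    ⟨b + ((⟨0, hd⟩ : Fin d) : ℕ) * r, Finset.mem_image_of_mem _ (Finset.mem_univ _)⟩
    (Function.extend (fun i : Fin d => b + (i : ℕ) * r) t fun _ => false)
  refine ⟨(T ^ ((b : ℤ) - r)) x, Set.mem_iInter.2 fun i => ?_⟩
  have h1 := Set.mem_iInter₂.1 hx (b + (i : ℕ) * r)
    (Finset.mem_image_of_mem (fun i : Fin d => b + (i : ℕ) * r) (Finset.mem_univ i))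
  have h2 := hinj.extend_apply t (fun _ => false) i
  beta_reduce at h2
  rw [h2] at h1
  rw [Set.mem_preimage] at h1 ⊢
  convert h1 using 1
  rw [← Equiv.Perm.mul_apply, ← zpow_natCast, ← zpow_natCast, ← zpow_add]
  congr 2
  push_cast
  ring

/-- Witnesses for the patterns `1, 1, …, 1` and `2, 1, …, 1` of length `d + 1` lie near `x₁` and
`x₂` at the first step, and both stay near `x₁` for the following `d` steps. -/
lemma AP_of_indAP {X : Type*} [MetricSpace X] (T : Equiv.Perm X) (x₁ x₂ : X)
    (h : (x₁, x₂) ∈ IndAP T) (d : ℕ) : (x₁, x₂) ∈ AP T d := by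
  intro δ hδ
  obtain ⟨n, -, hn⟩ := h (Metric.ball x₁ (δ / 2)) (Metric.ball_mem_nhds _ (by positivity))
    (Metric.ball x₂ (δ / 2)) (Metric.ball_mem_nhds _ (by positivity)) (d + 1) (by omega)
  obtain ⟨p, hp⟩ := hn fun _ => false
  obtain ⟨q, hq⟩ := hn fun i => decide (i = 0)
  have hp := Set.mem_iInter.1 hp
  have hq := Set.mem_iInter.1 hq
  have key : ∀ (i : ℕ) (x : X),
      (T ^ ((i : ℤ) * (n : ℤ))) ((T ^ n) x) = (T ^ ((i + 1) * n)) x := by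
    intro i x
    rw [← Equiv.Perm.mul_apply, ← zpow_natCast, ← zpow_natCast, ← zpow_add]
    congr 2
    push_cast
    ring
  refine ⟨(T ^ n) p, (T ^ n) q, n, ?_, ?_, fun i hi hid => ?_⟩
  · have := hp 0
    simp at this
    rw [dist_comm]
    linarith
  · have := hq 0
    simp at this
    rw [dist_comm]
    linarith
  · have h1 := hp ⟨i, by omega⟩
    have h2 := hq ⟨i, by omega⟩
    have h0 : ¬ ((⟨i, by omega⟩ : Fin (d + 1)) = 0) := fun h => by
      have := congrArg Fin.val h
      simp at this
      omega
    simp only [h0, decide_false, Bool.false_eq_true, if_false, Set.mem_preimage,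
      Metric.mem_ball] at h1 h2
    rw [key, key]
    calc _ ≤ _ := dist_triangle_right _ _ x₁
      _ < δ := by linarith

/-- If every pair of neighborhoods `U₁ ∋ x₁`, `U₂ ∋ x₂` admits an independence
set of positive upper density, then `(x₁, x₂) ∈ Ind_ap(X,T)`, and consequently
`(x₁, x₂) ∈ AP^[d](X,T)` for every `d ∈ ℕ`. -/
theorem indap_of_pos_density_indep {X : Type*} [MetricSpace X] [CompactSpace X]
    (T : Equiv.Perm X) (hT : Continuous T) (hT' : Continuous T.symm)
    (x₁ x₂ : X)
    (h : ∀ U₁ ∈ nhds x₁, ∀ U₂ ∈ nhds x₂,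
      ∃ F : Set ℕ, IsIndepSet T U₁ U₂ F ∧ 0 < upperDensity F) :
    (x₁, x₂) ∈ IndAP T ∧ ∀ d : ℕ, (x₁, x₂) ∈ AP T d :=
  have h1 := indAP_of_pos_density T x₁ x₂ h
  ⟨h1, AP_of_indAP T x₁ x₂ h1⟩
end

section
/- Let (X,T) be a minimal topological dynamical system and let π : (X,T) → (Y,T) be a distal extension. Then π has a relatively invariant measure with a section λ : Y → M(X) of full support, i.e. a continuous map λ assigning to each y ∈ Y a Borel probability measure λ_y on X such that T_*λ_y = λ_{Ty} for all y ∈ Y and supp(λ_y) = π^{-1}(y) for all y ∈ Y. -/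
/-!
Let `R` be a closed invariant equivalence relation on the minimal system `X` whose classes lie in
the fibres of `π`. The section is obtained as a strictly positive equivariant conditional
expectation `C(X) → C(Y)`, which is built up step by step along the structure of the distal
extension; the measures then come from the Riesz representation theorem.

*Extending by one step.* Since the extension `X → X / R` is distal, every element of the
Stone–Čech compactification `βℤ` acts invertibly on the classes of `R` (`Sys.exists_inv`), because
idempotents fixing a point act trivially on its class. Suppose that `R` is nontrivial. Two Baire
category arguments show that the relative regionally proximal relation is a closed invariant
equivalence relation (`Sys.RP_trans`) and is not all of `R` (`Sys.exists_not_RP`). Modulo this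
relation the orbit closures in `R` form a closed equivalence relation, so Urysohn's lemma yields a
continuous kernel `K`, invariant on `R`, vanishing on the diagonal, and not vanishing on `R`
(`Sys.exists_kernel`). The kernel gives every class of `R` the pseudometric
`sup_w |K (x, w) - K (x', w)|`, which is totally bounded and preserved by `βℤ`. In such a space,
averages over two minimal `ε`-nets almost agree, by Hall's marriage theorem
(`Sys.avg_sub_avg_le`). Their limits as `ε → 0` are therefore canonical: they give means on the
classes of `R` that are equivariant, continuous in the class, and strictly positive, for functions
continuous with respect to the pseudometric (`Sys.exists_mean`, `Mean.continuous`, `Mean.pos`).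
This is a conditional expectation onto the functions constant on the classes of `R`, defined on a
strictly larger domain.

*Exhaustion.* Zorn's lemma is applied to graphs `Γ ⊆ C(X) × C(Y)` of partially defined conditional
expectations whose domain is a vector lattice (`Good`). A maximal graph is closed, as conditional
expectations are contractions. By the lattice form of the Stone–Weierstrass theorem its domain then
consists of all continuous functions constant on the classes of the relation `relOf Γ`. If that
relation were nontrivial, one more step as above would enlarge the domain. Hence the domain is
`C(X)` (`exists_good`). Strict positivity on the domain survives passing to the closure because
`max (f - c) 0` can be formed within a lattice (`Good.closure`), and it is what gives full support.
-/

open MeasureTheory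

/-- `(x, y)` is a proximal pair: `inf_{n ∈ ℤ} dist (T^n x) (T^n y) = 0`. -/
def Proximal {X : Type*} [MetricSpace X] (T : Equiv.Perm X) (x y : X) : Prop :=
  ∀ ε : ℝ, 0 < ε → ∃ n : ℤ, dist ((T ^ n) x) ((T ^ n) y) < ε

namespace DistalRIM

open Filter Topology

/-! ### The action of the Stone–Čech compactification of the integers -/

attribute [local instance] Ultrafilter.add Ultrafilter.addSemigroup

/-- A minimal system `(X, T)` with a closed invariant equivalence relation `R` such that the
quotient map `X → X / R` is a distal extension. -/
structure Sys {X : Type*} [MetricSpace X] [CompactSpace X] (T : Equiv.Perm X)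
    (R : X → X → Prop) : Prop where
  cont : ∀ n : ℤ, Continuous fun x => (T ^ n) x
  min : IsMinimal T
  equiv : Equivalence R
  closed : IsClosed {p : X × X | R p.1 p.2}
  inv : ∀ (n : ℤ) (x y : X), R x y → R ((T ^ n) x) ((T ^ n) y)
  distal : ∀ x y, R x y → Proximal T x y → x = y

section Act

variable {X : Type*} [MetricSpace X]

/-- The action of the Stone–Čech compactification `βℤ` on `X`: `act T U x` is the limit of
`T ^ n x` as `n` tends to the ultrafilter `U`. -/
noncomputable def act (T : Equiv.Perm X) (U : Ultrafilter ℤ) (x : X) : X :=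
  Ultrafilter.extend (fun n : ℤ => (T ^ n) x) U

variable [CompactSpace X]

theorem tendsto_act (T : Equiv.Perm X) (U : Ultrafilter ℤ) (x : X) :
    Tendsto (fun n : ℤ => (T ^ n) x) U (𝓝 (act T U x)) :=
  ultrafilter_extend_eq_iff.1 rfl

theorem act_eq {T : Equiv.Perm X} {U : Ultrafilter ℤ} {x y : X}
    (h : Tendsto (fun n : ℤ => (T ^ n) x) U (𝓝 y)) : act T U x = y :=
  ultrafilter_extend_eq_iff.2 h

theorem continuous_act (T : Equiv.Perm X) (x : X) : Continuous fun U => act T U x :=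
  continuous_ultrafilter_extend _

omit [CompactSpace X] in
theorem act_pure (T : Equiv.Perm X) (n : ℤ) (x : X) : act T (pure n) x = (T ^ n) x :=
  ultrafilter_extend_pure _ _

variable {T : Equiv.Perm X} {R : X → X → Prop}

theorem act_add (hc : ∀ n : ℤ, Continuous fun x => (T ^ n) x) (U V : Ultrafilter ℤ) (x : X) :
    act T (U + V) x = act T U (act T V x) := by
  apply act_eq
  refine (closed_nhds_basis _).tendsto_right_iff.2 fun s ⟨hs, hsc⟩ => ?_
  refine (Ultrafilter.eventually_add U V fun n => (T ^ n) x ∈ s).2 ?_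
  have h1 := (tendsto_act T U (act T V x)).eventually (interior_mem_nhds.2 hs)
  filter_upwards [h1] with m hm
  have h2 := ((hc m).tendsto _).comp (tendsto_act T V x)
  filter_upwards [h2.eventually (isOpen_interior.mem_nhds hm)] with k hk
  rw [zpow_add, Equiv.Perm.mul_apply]
  exact interior_subset hk

/-- A closed relation preserved by all powers of `T` is preserved by the action of `βℤ`. -/
theorem rel_act {P : X → X → Prop} (hP : IsClosed {p : X × X | P p.1 p.2})
    (hinv : ∀ (n : ℤ) (x y : X), P x y → P ((T ^ n) x) ((T ^ n) y)) (U : Ultrafilter ℤ)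
    {x y : X} (h : P x y) : P (act T U x) (act T U y) :=
  hP.mem_of_tendsto ((tendsto_act T U x).prodMk_nhds (tendsto_act T U y))
    (Eventually.of_forall fun n => hinv n x y h)

namespace Sys

variable (S : Sys T R)
include S

theorem act_rel (U : Ultrafilter ℤ) {x y : X} (h : R x y) : R (act T U x) (act T U y) :=
  rel_act S.closed S.inv U h

theorem exists_act (x x' : X) : ∃ U, act T U x = x' := by
  have h := S.min x x'
  rw [mem_closure_iff_ultrafilter] at h
  obtain ⟨W, hW, hx⟩ := h
  obtain ⟨U, hU⟩ : ∃ U : Ultrafilter ℤ, U.map (fun n => (T ^ n) x) = W := by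
    refine ⟨W.ofComapInfPrincipal (m := fun n : ℤ => (T ^ n) x) (s := Set.univ)
      (by rwa [Set.image_univ]), ?_⟩
    exact Ultrafilter.ofComapInfPrincipal_eq_of_map _
  refine ⟨U, act_eq ?_⟩
  have : (U.map (fun n => (T ^ n) x) : Filter X) ≤ 𝓝 x' := by rw [hU]; exact hx
  exact this

theorem act_inj (U : Ultrafilter ℤ) {x y : X} (h : R x y) (he : act T U x = act T U y) :
    x = y := by
  refine S.distal x y h fun ε hε => ?_
  have h1 := (tendsto_act T U x).dist (tendsto_act T U y)
  rw [he, dist_self] at h1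
  exact (h1.eventually (gt_mem_nhds hε)).exists

/-- The action of `U` on the `R`-class of `x` has a left inverse in `βℤ`. An idempotent of `βℤ`
fixing `x` acts trivially on the class of `x` by distality; such idempotents exist in every left
ideal of the compact semigroup of ultrafilters fixing `x`. -/
theorem exists_inv (U : Ultrafilter ℤ) (x : X) :
    ∃ V, ∀ y, R x y → act T V (act T U y) = y := by
  obtain ⟨V₀, hV₀⟩ := S.exists_act (act T U x) x
  have hfix : IsClosed {W : Ultrafilter ℤ | act T W x = x} :=
    isClosed_eq (continuous_act T x) continuous_const
  have hcont : ∀ r : Ultrafilter ℤ, Continuous (· + r) := Ultrafilter.continuous_add_left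
  obtain ⟨e, ⟨r, hr, rfl⟩, hee⟩ := exists_idempotent_in_compact_add_subsemigroup hcont
    ((· + (V₀ + U)) '' {W : Ultrafilter ℤ | act T W x = x})
    ⟨_, Set.mem_image_of_mem _ (show act T (pure 0) x = x by rw [act_pure]; simp)⟩
    (hfix.isCompact.image (hcont _)) (by
      rintro _ ⟨a, ha, rfl⟩ _ ⟨b, hb, rfl⟩
      refine ⟨a + (V₀ + U) + b, ?_, by simp only [add_assoc]⟩
      simp only [Set.mem_ofPred_eq] at ha hb ⊢
      rw [act_add S.cont, hb, act_add S.cont, act_add S.cont, hV₀, ha])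
  refine ⟨r + V₀, fun y hy => ?_⟩
  simp only [Set.mem_ofPred_eq] at hr
  have hx : act T (r + (V₀ + U)) x = x := by
    rw [act_add S.cont, act_add S.cont, hV₀, hr]
  have h1 : R (act T (r + (V₀ + U)) y) y := by
    have := S.act_rel (r + (V₀ + U)) hy
    rw [hx] at this
    exact S.equiv.trans (S.equiv.symm this) hy
  have h2 := S.act_inj (r + (V₀ + U)) h1 (by
    rw [← act_add S.cont]; exact congrArg (fun W => act T W y) hee)
  rw [← act_add S.cont, add_assoc]
  exact h2

theorem exists_inv' (U : Ultrafilter ℤ) (x : X) :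
    ∃ V, (∀ y, R x y → act T V (act T U y) = y) ∧
      ∀ w, R (act T U x) w → R x (act T V w) ∧ act T U (act T V w) = w := by
  obtain ⟨V, hV⟩ := S.exists_inv U x
  refine ⟨V, hV, fun w hw => ?_⟩
  have h0 : R x (act T V w) := by
    have := S.act_rel V hw
    rwa [hV x (S.equiv.refl x)] at this
  refine ⟨h0, S.act_inj V ?_ (hV _ h0)⟩
  exact S.equiv.trans (S.equiv.symm (S.act_rel U h0)) hw

/-- Openness of `X → X / R`, and of the first projection on orbit closures in `R`. -/
theorem lift {ι : Type*} (W : Ultrafilter ι) (u : ι → X) {a b : X} (hab : R a b)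
    (hu : Tendsto u W (𝓝 a)) :
    ∃ V : ι → Ultrafilter ℤ, (∀ i, act T (V i) a = u i) ∧
      Tendsto (fun i => act T (V i) b) W (𝓝 b) := by
  choose V hV using fun i => S.exists_act a (u i)
  obtain ⟨P, hP⟩ : ∃ P, Tendsto V W (𝓝 P) := by
    obtain ⟨P, -, hP⟩ := isCompact_univ.ultrafilter_le_nhds (W.map V) (by simp)
    exact ⟨P, hP⟩
  have hPa : act T P a = a := by
    refine tendsto_nhds_unique (((continuous_act T a).tendsto P).comp hP) ?_
    simpa only [Function.comp_def, hV] using hu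
  obtain ⟨Q, hQ, hQ'⟩ := S.exists_inv' P a
  have hQa : act T Q a = a := by
    have := hQ a (S.equiv.refl a)
    rwa [hPa] at this
  refine ⟨fun i => V i + Q, fun i => by rw [act_add S.cont, hQa, hV], ?_⟩
  have h := ((continuous_act T (act T Q b)).tendsto P).comp hP
  rw [(hQ' b (by rwa [hPa])).2] at h
  simpa only [Function.comp_def, act_add S.cont] using h

theorem lift_nhds {a b : X} (hab : R a b) {s : Set X} (hs : s ∈ 𝓝 b) :
    ∀ᶠ a' in 𝓝 a, ∃ U, act T U a = a' ∧ act T U b ∈ s := by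
  refine mem_iff_ultrafilter.2 fun W hW => ?_
  obtain ⟨V, hV, hb⟩ := S.lift W id hab hW
  filter_upwards [hb.eventually hs] with i hi
  exact ⟨V i, hV i, hi⟩

end Sys
end Act

/-! ### The relative regionally proximal relation -/

section RegionallyProximal

variable {X : Type*} [MetricSpace X]

/-- `x, y` lie in one `R`-class and their orbits come `ε`-close at some common time. -/
def Near (T : Equiv.Perm X) (R : X → X → Prop) (ε : ℝ) (x y : X) : Prop :=
  R x y ∧ ∃ n : ℤ, dist ((T ^ n) x) ((T ^ n) y) < ε

/-- The relative regionally proximal relation of `X → X / R`. -/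
def RP (T : Equiv.Perm X) (R : X → X → Prop) (x y : X) : Prop :=
  ∀ ε : ℝ, 0 < ε → (x, y) ∈ closure {p : X × X | Near T R ε p.1 p.2}

variable [CompactSpace X] {T : Equiv.Perm X} {R : X → X → Prop}

omit [CompactSpace X] in
theorem Near.mono {ε δ : ℝ} {x y : X} (h : Near T R ε x y) (hd : ε ≤ δ) : Near T R δ x y :=
  ⟨h.1, h.2.imp fun _ hn => hn.trans_le hd⟩

omit [CompactSpace X] in
theorem RP.closed : IsClosed {p : X × X | RP T R p.1 p.2} := by
  simp only [RP, Set.ofPred_forall]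
  exact isClosed_iInter fun ε => isClosed_iInter fun _ => isClosed_closure

namespace Sys

variable (S : Sys T R)
include S

theorem near_symm {ε : ℝ} {x y : X} (h : Near T R ε x y) : Near T R ε y x :=
  ⟨S.equiv.symm h.1, h.2.imp fun _ hn => by rwa [dist_comm]⟩

theorem near_open {ε : ℝ} {x y : X} (h : Near T R ε x y) :
    ∀ᶠ p in 𝓝 (x, y), R p.1 p.2 → Near T R ε p.1 p.2 := by
  obtain ⟨-, n, hn⟩ := h
  have hc : Continuous fun p : X × X => dist ((T ^ n) p.1) ((T ^ n) p.2) :=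
    ((S.cont n).comp continuous_fst).dist ((S.cont n).comp continuous_snd)
  filter_upwards [(hc.tendsto (x, y)).eventually (gt_mem_nhds hn)] with p hp hR
  exact ⟨hR, n, hp⟩

theorem near_zpow {ε : ℝ} {x y : X} (n : ℤ) (h : Near T R ε x y) :
    Near T R ε ((T ^ n) x) ((T ^ n) y) := by
  obtain ⟨hR, m, hm⟩ := h
  refine ⟨S.inv n x y hR, m - n, ?_⟩
  simpa only [← Equiv.Perm.mul_apply, ← zpow_add, sub_add_cancel] using hm

theorem near_of_zpow {ε : ℝ} {x y : X} (n : ℤ) (h : Near T R ε ((T ^ n) x) ((T ^ n) y)) :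
    Near T R ε x y := by
  simpa only [← Equiv.Perm.mul_apply, ← zpow_add, neg_add_cancel, zpow_zero,
    Equiv.Perm.one_apply] using S.near_zpow (-n) h

theorem near_act {ε : ℝ} {x y : X} (U : Ultrafilter ℤ) (h : Near T R ε x y) :
    Near T R ε (act T U x) (act T U y) := by
  obtain ⟨V, hV⟩ := S.exists_inv U x
  have h1 : Near T R ε (act T V (act T U x)) (act T V (act T U y)) := by
    rwa [hV x (S.equiv.refl x), hV y h.1]
  have h2 := ((tendsto_act T V (act T U x)).prodMk_nhds (tendsto_act T V (act T U y))).eventually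
    (S.near_open h1)
  obtain ⟨n, hn⟩ := h2.exists
  exact S.near_of_zpow n (hn (S.inv n _ _ (S.act_rel U h.1)))

/-- A weak triangle inequality for `Near`. If it failed along `c n`, with `c n` and `b` close at the
time `m n`, then a limit along `m n` of the orbit of `(a, b)` would be a pair in `Near T R ε` which
is also a limit of pairs outside of this relatively open, invariant set. -/
theorem near_trans {ε : ℝ} {a b : X} (h : Near T R ε a b) :
    ∃ δ > 0, ∀ c, Near T R δ b c → Near T R ε a c := by
  by_contra! hcon
  choose c hc hc' using fun n : ℕ => hcon (1 / ((n : ℝ) + 1)) Nat.one_div_pos_of_nat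
  choose m hm using fun n => (hc n).2
  let U : Ultrafilter ℤ := (hyperfilter ℕ).map m
  have hU : Tendsto m (hyperfilter ℕ) U := tendsto_map
  have ha := (tendsto_act T U a).comp hU
  have hb := (tendsto_act T U b).comp hU
  have h0 : Tendsto (fun n : ℕ => 1 / ((n : ℝ) + 1)) (hyperfilter ℕ) (𝓝 0) :=
    tendsto_one_div_add_atTop_nhds_zero_nat.mono_left
      (by rw [← Nat.cofinite_eq_atTop]; exact hyperfilter_le_cofinite)
  have hcl : Tendsto (fun n => (T ^ m n) (c n)) (hyperfilter ℕ) (𝓝 (act T U b)) := by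
    refine hb.congr_dist (squeeze_zero (fun _ => dist_nonneg) (fun n => ?_) h0)
    exact (hm n).le
  obtain ⟨n, hn⟩ := ((ha.prodMk_nhds hcl).eventually (S.near_open (S.near_act U h))).exists
  exact hc' n (S.near_of_zpow (m n) (hn (S.inv _ _ _ (S.equiv.trans h.1 (hc n).1))))

theorem RP_rel {x y : X} (h : RP T R x y) : R x y :=
  closure_minimal (fun _ hp => hp.1) S.closed (h 1 one_pos)

theorem RP_refl (x : X) : RP T R x x := fun ε hε =>
  subset_closure ⟨S.equiv.refl x, 0, by simpa using hε⟩

theorem RP_symm {x y : X} (h : RP T R x y) : RP T R y x := fun ε hε =>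
  map_mem_closure (f := Prod.swap) continuous_swap (h ε hε) fun _ hp => S.near_symm hp

theorem RP_act (U : Ultrafilter ℤ) {x y : X} (h : RP T R x y) :
    RP T R (act T U x) (act T U y) := by
  refine rel_act RP.closed (fun n x y h ε hε => ?_) U h
  exact map_mem_closure (f := fun p : X × X => ((T ^ n) p.1, (T ^ n) p.2))
    (((S.cont n).comp continuous_fst).prodMk ((S.cont n).comp continuous_snd)) (h ε hε)
    fun p hp => S.near_zpow n hp

/-- Baire category: for generic `b`, every `c` regionally proximal to `b` is approximated by
points `c'` with `b, c'` themselves nearly proximal. -/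
theorem dense_generic : Dense {b : X | ∀ c, RP T R b c → ∀ s ∈ 𝓝 c, ∀ δ > 0,
    ∃ c' ∈ s, Near T R δ b c'} := by
  let P : Set X × ℕ → Set X := fun p => {b | ∃ c ∈ p.1, Near T R (1 / ((p.2 : ℝ) + 1)) b c}
  have hPo : ∀ p : Set X × ℕ, IsOpen p.1 → IsOpen (P p) := by
    intro p hp
    rw [isOpen_iff_mem_nhds]
    rintro b ⟨c, hc, hbc⟩
    refine mem_iff_ultrafilter.2 fun W hW => ?_
    obtain ⟨V, hV, hVc⟩ := S.lift W id hbc.1 hW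
    have h1 : Tendsto (fun i => (i, act T (V i) c)) W (𝓝 (b, c)) := Tendsto.prodMk_nhds hW hVc
    filter_upwards [hVc.eventually (hp.mem_nhds hc), h1.eventually (S.near_open hbc)]
      with i hi hi'
    refine ⟨_, hi, hi' ?_⟩
    have := S.act_rel (V i) hbc.1
    rwa [hV i] at this
  let B := TopologicalSpace.countableBasis X
  have hd : Dense (⋂ p ∈ B ×ˢ (Set.univ : Set ℕ), (P p ∪ (closure (P p))ᶜ)) := by
    refine dense_biInter_of_isOpen (fun p hp => ?_)
      ((TopologicalSpace.countable_countableBasis X).prod Set.countable_univ) (fun p hp => ?_)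
    · exact (hPo p (TopologicalSpace.isOpen_of_mem_countableBasis hp.1)).union
        isClosed_closure.isOpen_compl
    · intro x
      by_cases hx : x ∈ closure (P p)
      · exact closure_mono Set.subset_union_left hx
      · exact subset_closure (Or.inr hx)
  refine hd.mono fun b hb c hbc s hs δ hδ => ?_
  obtain ⟨v, hv, hcv, hvs⟩ :=
    (TopologicalSpace.isBasis_countableBasis X).mem_nhds_iff.1 hs
  obtain ⟨n, hn⟩ := exists_nat_one_div_lt hδ
  have hb' := Set.mem_iInter₂.1 hb (v, n) ⟨hv, trivial⟩
  have hcl : b ∈ closure (P (v, n)) := by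
    rw [mem_closure_iff_nhds]
    intro t ht
    have := mem_closure_iff_nhds.1 (hbc (1 / ((n : ℝ) + 1)) Nat.one_div_pos_of_nat)
      (t ×ˢ v) (prod_mem_nhds ht ((TopologicalSpace.isOpen_of_mem_countableBasis hv).mem_nhds hcv))
    obtain ⟨⟨b', c'⟩, ⟨h1, h2⟩, h3⟩ := this
    exact ⟨b', h1, c', h2, h3⟩
  rcases hb' with hb' | hb'
  · obtain ⟨c', hc', h⟩ := hb'
    exact ⟨c', hvs hc', h.mono hn.le⟩
  · exact absurd hcl hb'

/-- Furstenberg and Veech: the regionally proximal relation is transitive. A generic point `b`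
near `x₂` serves as an intermediate point, since the pair `(b, c)` with `c` near `x₃` can be
approximated within the class of the same `b`. -/
theorem RP_trans {x₁ x₂ x₃ : X} (h12 : RP T R x₁ x₂) (h23 : RP T R x₂ x₃) : RP T R x₁ x₃ := by
  intro ε hε
  rw [mem_closure_iff_nhds]
  intro t ht
  rw [nhds_prod_eq] at ht
  obtain ⟨s₁, hs₁, s₃, hs₃, hst⟩ := mem_prod_iff.1 ht
  -- points `b` close to `x₂` over which `x₃` lifts into `s₃`
  have hO := eventually_mem_nhds_iff.2 (S.lift_nhds (S.RP_rel h23) (interior_mem_nhds.2 hs₃))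
  obtain ⟨⟨a₀, b₀⟩, ⟨ha₀, hb₀⟩, hab⟩ := mem_closure_iff_nhds.1 (h12 ε hε) _
    (prod_mem_nhds (interior_mem_nhds.2 hs₁) hO)
  have hb1 : ∀ᶠ b in 𝓝 b₀, ∃ a ∈ s₁, Near T R ε a b := by
    refine mem_iff_ultrafilter.2 fun W hW => ?_
    obtain ⟨V, hV, hVc⟩ := S.lift W id (S.equiv.symm hab.1) hW
    have h1 : Tendsto (fun i => (act T (V i) a₀, i)) W (𝓝 (a₀, b₀)) := hVc.prodMk_nhds hW
    filter_upwards [hVc.eventually (isOpen_interior.mem_nhds ha₀),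
      h1.eventually (S.near_open hab)] with i hi hi'
    refine ⟨_, interior_subset hi, hi' ?_⟩
    have := S.act_rel (V i) hab.1
    rwa [hV i] at this
  obtain ⟨b, ⟨⟨a, ha, hab'⟩, U, hUb, hU3⟩, hgen⟩ :=
    mem_closure_iff_nhds.1 (S.dense_generic b₀) _ (Filter.inter_mem hb1 hb₀)
  obtain ⟨δ, hδ, htr⟩ := S.near_trans hab'
  have hbc : RP T R b (act T U x₃) := by
    have := S.RP_act U h23
    rwa [hUb] at this
  obtain ⟨c', hc', hn⟩ := hgen _ hbc s₃ (mem_interior_iff_mem_nhds.1 hU3) δ hδ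
  exact ⟨(a, c'), hst ⟨ha, hc'⟩, htr _ hn⟩

/-- Relative form of Furstenberg's theorem: for a nontrivial distal extension the regionally
proximal relation is not everything. Otherwise a second Baire argument, inside the class of a
generic point `b`, makes that class a singleton. -/
theorem exists_not_RP {x y : X} (hxy : R x y) (hne : x ≠ y) : ∃ a b, R a b ∧ ¬ RP T R a b := by
  by_contra! hall
  have : Nonempty X := ⟨x⟩
  obtain ⟨b, hb⟩ := S.dense_generic.nonempty
  let Z := {c // R b c}
  have hZc : IsClosed {c | R b c} := S.closed.preimage (by fun_prop : Continuous fun c => (b, c))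
  have : CompactSpace Z := isCompact_iff_compactSpace.1 hZc.isCompact
  have hd : Dense (⋂ n : ℕ, {c : Z | Near T R (1 / ((n : ℝ) + 1)) b c}) := by
    refine dense_iInter_of_isOpen (fun n => ?_) (fun n => ?_)
    · rw [isOpen_iff_mem_nhds]
      intro c hc
      have h1 : Tendsto (fun c' : Z => (b, (c' : X))) (𝓝 c) (𝓝 (b, (c : X))) :=
        tendsto_const_nhds.prodMk_nhds continuous_subtype_val.continuousAt
      filter_upwards [h1.eventually (S.near_open hc)] with c' hc'
      exact hc' c'.2
    · intro c
      rw [mem_closure_iff_nhds]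
      intro t ht
      obtain ⟨s, hs, hst⟩ := mem_nhds_induced _ c t |>.1 ht
      obtain ⟨c', hc', h⟩ := hb c (hall _ _ c.2) s hs (1 / ((n : ℝ) + 1)) Nat.one_div_pos_of_nat
      exact ⟨⟨c', h.1⟩, hst hc', h⟩
  have hsub : (⋂ n : ℕ, {c : Z | Near T R (1 / ((n : ℝ) + 1)) b c}) ⊆
      {⟨b, S.equiv.refl b⟩} := by
    intro c hc
    refine Subtype.ext (S.distal b c c.2 fun ε hε => ?_).symm
    obtain ⟨n, hn⟩ := exists_nat_one_div_lt hε
    exact ((Set.mem_iInter.1 hc n).mono hn.le).2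
  have hsing : ∀ c, R b c → c = b := by
    intro c hc
    have h1 := closure_mono hsub (hd ⟨c, hc⟩)
    rw [closure_singleton] at h1
    exact congrArg Subtype.val h1
  obtain ⟨U, hU⟩ := S.exists_act x b
  have h1 := S.act_rel U hxy
  rw [hU] at h1
  exact hne (S.act_inj U hxy (by rw [hU, hsing _ h1]))

end Sys
end RegionallyProximal

/-! ### Separating the classes of a closed equivalence relation -/

section Urysohn

/-- Urysohn's lemma on the quotient of a compact Hausdorff space by a closed equivalence relation:
the quotient map is closed, hence the quotient is normal. -/
theorem exists_separating {Z : Type*} [TopologicalSpace Z] [CompactSpace Z] [T2Space Z]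
    {r : Z → Z → Prop} (hr : Equivalence r) (hc : IsClosed {p : Z × Z | r p.1 p.2}) {a b : Z}
    (hab : ¬ r a b) :
    ∃ f : C(Z, ℝ), (∀ x y, r x y → f x = f y) ∧ f a = 0 ∧ f b = 1 := by
  let s : Setoid Z := ⟨r, hr⟩
  let q : Z → Quotient s := Quotient.mk s
  have hqc : Continuous q := continuous_quotient_mk'
  have hqr : ∀ x y, q x = q y ↔ r x y := fun x y => Quotient.eq
  have hq : IsClosedMap q := by
    intro C hC
    have h0 : Topology.IsQuotientMap q := isQuotientMap_quotient_mk'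
    refine h0.isClosed_preimage.1 ?_
    have h1 : q ⁻¹' (q '' C) = Prod.snd '' ({p : Z × Z | r p.1 p.2} ∩ C ×ˢ Set.univ) := by
      ext x
      constructor
      · rintro ⟨c, hcC, hcx⟩
        exact ⟨(c, x), ⟨(hqr _ _).1 hcx, hcC, trivial⟩, rfl⟩
      · rintro ⟨⟨c, y⟩, ⟨h, hcC, -⟩, rfl⟩
        exact ⟨c, hcC, (hqr _ _).2 h⟩
    rw [h1]
    exact ((hc.inter (hC.prod isClosed_univ)).isCompact.image continuous_snd).isClosed
  have hsurj : Function.Surjective q := Quotient.mk_surjective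
  have : NormalSpace (Quotient s) := by
    refine ⟨fun A B hA hB hAB => ?_⟩
    obtain ⟨u, v, hu, hv, hAu, hBv, huv⟩ := normal_separation (hA.preimage hqc)
      (hB.preimage hqc) (hAB.preimage q)
    refine ⟨(q '' uᶜ)ᶜ, (q '' vᶜ)ᶜ, (hq _ hu.isClosed_compl).isOpen_compl,
      (hq _ hv.isClosed_compl).isOpen_compl, ?_, ?_, ?_⟩
    · rintro x hx ⟨z, hz, rfl⟩
      exact hz (hAu hx)
    · rintro x hx ⟨z, hz, rfl⟩
      exact hz (hBv hx)
    · rw [Set.disjoint_left]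
      intro x hx hx'
      obtain ⟨z, rfl⟩ := hsurj x
      refine (show z ∉ u ∩ v by simp [huv.inter_eq]) ⟨?_, ?_⟩
      · by_contra h
        exact hx ⟨z, h, rfl⟩
      · by_contra h
        exact hx' ⟨z, h, rfl⟩
  have hcl : ∀ x, IsClosed ({q x} : Set (Quotient s)) := fun x => by
    simpa using hq _ (isClosed_singleton (x := x))
  obtain ⟨f, hf0, hf1, -⟩ := exists_continuous_zero_one_of_isClosed (hcl a) (hcl b)
    (Set.disjoint_singleton.2 fun h => hab ((hqr _ _).1 h))
  refine ⟨f.comp ⟨q, hqc⟩, fun x y h => ?_, hf0 rfl, hf1 rfl⟩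
  exact congrArg f ((hqr _ _).2 h)

end Urysohn

/-! ### An invariant kernel -/

section Pseudometric

variable {X : Type*} [MetricSpace X] [CompactSpace X] {T : Equiv.Perm X} {R : X → X → Prop}

/-- `p` and `q` have the same orbit closure in `R`, modulo the regionally proximal relation. -/
def OrbRP (T : Equiv.Perm X) (R : X → X → Prop) (p q : {p : X × X // R p.1 p.2}) : Prop :=
  ∃ U, RP T R (act T U p.1.1) q.1.1 ∧ RP T R (act T U p.1.2) q.1.2

namespace Sys

variable (S : Sys T R)
include S

theorem orbRP_equiv : Equivalence (OrbRP T R) where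
  refl p := ⟨pure 0, by simpa [act_pure] using S.RP_refl _, by simpa [act_pure] using S.RP_refl _⟩
  symm := by
    rintro ⟨⟨x, y⟩, h⟩ ⟨⟨x', y'⟩, h'⟩ ⟨U, h1, h2⟩
    obtain ⟨V, hV⟩ := S.exists_inv U x
    refine ⟨V, S.RP_symm ?_, S.RP_symm ?_⟩
    · simpa only [hV x (S.equiv.refl x)] using S.RP_act V h1
    · simpa only [hV y h] using S.RP_act V h2
  trans := by
    rintro p q r ⟨U, h1, h2⟩ ⟨V, h3, h4⟩
    refine ⟨V + U, ?_, ?_⟩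
    · rw [act_add S.cont]
      exact S.RP_trans (S.RP_act V h1) h3
    · rw [act_add S.cont]
      exact S.RP_trans (S.RP_act V h2) h4

/-- Points which are limits of pairs `(y i, z i)` in `R` with `dist (y i) (z i) → 0`, moved by
arbitrary elements of `βℤ`, are regionally proximal. -/
theorem RP_of_tendsto {ι : Type*} (W : Ultrafilter ι) {y z : ι → X} {U : ι → Ultrafilter ℤ}
    {b c d : X} (hR : ∀ i, R (y i) (z i)) (hy : Tendsto y W (𝓝 b)) (hz : Tendsto z W (𝓝 b))
    (hc : Tendsto (fun i => act T (U i) (y i)) W (𝓝 c))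
    (hd : Tendsto (fun i => act T (U i) (z i)) W (𝓝 d)) : RP T R c d := by
  intro ε hε
  refine mem_closure_of_tendsto (hc.prodMk_nhds hd) ?_
  have h1 : Tendsto (fun i => dist (y i) (z i)) W (𝓝 0) := by
    simpa only [dist_self] using hy.dist hz
  filter_upwards [h1.eventually (gt_mem_nhds hε)] with i hi
  exact S.near_act (U i) ⟨hR i, 0, by simpa using hi⟩

/-- A limit of pairs in `OrbRP` gives limits of their second coordinates which need not agree, but
are regionally proximal to each other by `RP_of_tendsto`. -/
theorem orbRP_closed :
    IsClosed {p : {p : X × X // R p.1 p.2} × {p : X × X // R p.1 p.2} |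
      OrbRP T R p.1 p.2} := by
  rw [isClosed_iff_ultrafilter]
  rintro ⟨⟨⟨x, y⟩, h⟩, ⟨⟨x', y'⟩, h'⟩⟩ W hW hmem
  have : ∀ p : {p : X × X // R p.1 p.2} × {p : X × X // R p.1 p.2}, ∃ U : Ultrafilter ℤ,
      OrbRP T R p.1 p.2 →
        RP T R (act T U p.1.1.1) p.2.1.1 ∧ RP T R (act T U p.1.1.2) p.2.1.2 := fun p => by
    by_cases hp : OrbRP T R p.1 p.2
    · obtain ⟨U, hU⟩ := hp
      exact ⟨U, fun _ => hU⟩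
    · exact ⟨pure 0, fun h => absurd h hp⟩
  choose U hU using this
  have hx : Tendsto (fun p : {p : X × X // R p.1 p.2} × {p : X × X // R p.1 p.2} => p.1.1.1) W
      (𝓝 x) := Tendsto.mono_left (Continuous.tendsto (by fun_prop) _) hW
  have hy : Tendsto (fun p : {p : X × X // R p.1 p.2} × {p : X × X // R p.1 p.2} => p.1.1.2) W
      (𝓝 y) := Tendsto.mono_left (Continuous.tendsto (by fun_prop) _) hW
  have hx' : Tendsto (fun p : {p : X × X // R p.1 p.2} × {p : X × X // R p.1 p.2} => p.2.1.1) W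
      (𝓝 x') := Tendsto.mono_left (Continuous.tendsto (by fun_prop) _) hW
  have hy' : Tendsto (fun p : {p : X × X // R p.1 p.2} × {p : X × X // R p.1 p.2} => p.2.1.2) W
      (𝓝 y') := Tendsto.mono_left (Continuous.tendsto (by fun_prop) _) hW
  obtain ⟨V, hV, hVy⟩ := S.lift W _ h hx
  obtain ⟨P, -, hP⟩ := isCompact_univ.ultrafilter_le_nhds (W.map fun p => U p + V p) (by simp)
  replace hP : Tendsto (fun p => U p + V p) W (𝓝 P) := hP
  have hlim : ∀ u : {p : X × X // R p.1 p.2} × {p : X × X // R p.1 p.2} → X,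
      ∃ z, Tendsto u W (𝓝 z) := fun u => by
    obtain ⟨z, -, hz⟩ := isCompact_univ.ultrafilter_le_nhds (W.map u) (by simp)
    exact ⟨z, hz⟩
  have hPx := ((continuous_act T x).tendsto P).comp hP
  have hPy := ((continuous_act T y).tendsto P).comp hP
  simp only [Function.comp_def, act_add S.cont, hV] at hPx hPy
  obtain ⟨z, hz⟩ := hlim fun p => act T (U p) p.1.1.2
  refine ⟨P, ?_, S.RP_trans (x₂ := z) ?_ ?_⟩
  · refine RP.closed.mem_of_tendsto (hPx.prodMk_nhds hx') ?_
    filter_upwards [hmem] with p hp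
    exact (hU p hp).1
  · refine S.RP_of_tendsto W (fun p => ?_) hVy hy hPy hz
    have h1 := S.act_rel (V p) h
    rw [hV] at h1
    exact S.equiv.trans (S.equiv.symm h1) p.1.2
  · refine RP.closed.mem_of_tendsto (hz.prodMk_nhds hy') ?_
    filter_upwards [hmem] with p hp
    exact (hU p hp).2

/-- A nontrivial distal extension carries a nontrivial continuous function `K` of pairs, invariant
on `R` under the diagonal action of `T` and vanishing on the diagonal. -/
theorem exists_kernel {x y : X} (hxy : R x y) (hne : x ≠ y) :
    ∃ K : C(X × X, ℝ), (∀ U : Ultrafilter ℤ, ∀ x y, R x y → K (act T U x, act T U y) = K (x, y)) ∧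
      (∀ x, K (x, x) = 0) ∧ ∃ a b, R a b ∧ K (a, b) = 1 := by
  obtain ⟨a, b, hab, hRP⟩ := S.exists_not_RP hxy hne
  have : CompactSpace {p : X × X // R p.1 p.2} := isCompact_iff_compactSpace.1 S.closed.isCompact
  let D : ∀ z : X, {p : X × X // R p.1 p.2} := fun z => ⟨(z, z), S.equiv.refl z⟩
  have hD : ∀ z, ¬ OrbRP T R (D z) ⟨(a, b), hab⟩ := by
    rintro z ⟨U, h1, h2⟩
    exact hRP (S.RP_trans (S.RP_symm h1) h2)
  obtain ⟨f, hf, hf0, hf1⟩ := exists_separating S.orbRP_equiv S.orbRP_closed (hD a)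
  obtain ⟨K, hK⟩ := ContinuousMap.exists_restrict_eq (s := {p : X × X | R p.1 p.2}) S.closed f
  have hKf : ∀ x y (h : R x y), K (x, y) = f ⟨(x, y), h⟩ := fun x y h => by
    rw [← hK]; rfl
  refine ⟨K, fun U x y h => ?_, fun z => ?_, a, b, hab, by rw [hKf a b hab, hf1]⟩
  · rw [hKf _ _ h, hKf _ _ (S.act_rel U h)]
    exact (hf _ _ ⟨U, S.RP_refl _, S.RP_refl _⟩).symm
  · obtain ⟨U, hU⟩ := S.exists_act z a
    rw [hKf _ _ (S.equiv.refl z), ← hf0]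
    exact hf _ _ ⟨U, hU ▸ S.RP_refl _, hU ▸ S.RP_refl _⟩

end Sys

/-! ### The pseudometric of a kernel -/

/-- `x, x'` lie in one `R`-class, on which the functions `K (x, ·)` and `K (x', ·)` differ by at
most `ε`. -/
def Dle (R : X → X → Prop) (K : C(X × X, ℝ)) (ε : ℝ) (x x' : X) : Prop :=
  R x x' ∧ ∀ w, R x w → |K (x, w) - K (x', w)| ≤ ε

/-- The kernel `K` is invariant on `R` under the diagonal action of `βℤ`. -/
def Inv (T : Equiv.Perm X) (R : X → X → Prop) (K : C(X × X, ℝ)) : Prop :=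
  ∀ U : Ultrafilter ℤ, ∀ x y, R x y → K (act T U x, act T U y) = K (x, y)

/-- The function `f` is constant on the classes of `P`. -/
def Resp (P : X → X → Prop) (f : C(X, ℝ)) : Prop := ∀ x y, P x y → f x = f y

variable {K : C(X × X, ℝ)}

omit [CompactSpace X] in
theorem Dle.mono {ε δ : ℝ} {x y : X} (h : Dle R K ε x y) (hd : ε ≤ δ) : Dle R K δ x y :=
  ⟨h.1, fun w hw => (h.2 w hw).trans hd⟩

namespace Sys

variable (S : Sys T R)
include S

theorem dle_symm {ε : ℝ} {x y : X} (h : Dle R K ε x y) : Dle R K ε y x :=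
  ⟨S.equiv.symm h.1, fun w hw => by rw [abs_sub_comm]; exact h.2 w (S.equiv.trans h.1 hw)⟩

theorem dle_trans {ε δ : ℝ} {x y z : X} (h : Dle R K ε x y) (h' : Dle R K δ y z) :
    Dle R K (ε + δ) x z := by
  refine ⟨S.equiv.trans h.1 h'.1, fun w hw => ?_⟩
  exact (abs_sub_le _ (K (y, w)) _).trans
    (add_le_add (h.2 w hw) (h'.2 w (S.equiv.trans (S.equiv.symm h.1) hw)))

theorem dle_act (hK : Inv T R K) (U : Ultrafilter ℤ) {ε : ℝ} {x y : X} (h : Dle R K ε x y) :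
    Dle R K ε (act T U x) (act T U y) := by
  refine ⟨S.act_rel U h.1, fun w hw => ?_⟩
  obtain ⟨V, -, hV⟩ := S.exists_inv' U x
  obtain ⟨h1, h2⟩ := hV w hw
  rw [← h2, hK U _ _ h1, hK U _ _ (S.equiv.trans (S.equiv.symm h.1) h1)]
  exact h.2 _ h1

theorem dle_closed (ε : ℝ) : IsClosed {p : X × X | Dle R K ε p.1 p.2} := by
  rw [isClosed_iff_ultrafilter]
  rintro ⟨x, x'⟩ W hW hmem
  have hR : (x, x') ∈ {p : X × X | R p.1 p.2} := by
    refine isClosed_iff_ultrafilter.1 S.closed _ W hW ?_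
    filter_upwards [hmem] with p hp
    exact hp.1
  refine ⟨hR, fun w hw => ?_⟩
  have hx : Tendsto (fun p : X × X => p.1) W (𝓝 x) :=
    Tendsto.mono_left (continuous_fst.tendsto (x, x')) hW
  have hx' : Tendsto (fun p : X × X => p.2) W (𝓝 x') :=
    Tendsto.mono_left (continuous_snd.tendsto (x, x')) hW
  obtain ⟨V, hV, hVw⟩ := S.lift W _ hw hx
  have h1 := (K.continuous.tendsto _).comp (hx.prodMk_nhds hVw)
  have h2 := (K.continuous.tendsto _).comp (hx'.prodMk_nhds hVw)
  refine le_of_tendsto (h1.sub h2).abs ?_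
  filter_upwards [hmem] with p hp
  refine hp.2 _ ?_
  have := S.act_rel (V p) hw
  rwa [hV] at this

omit S in
theorem exists_dle {ε : ℝ} (hε : 0 < ε) :
    ∃ δ > 0, ∀ x y, R x y → dist x y < δ → Dle R K ε x y := by
  have hu := CompactSpace.uniformContinuous_of_continuous K.continuous
  obtain ⟨δ, hδ, h⟩ := Metric.uniformContinuous_iff.1 hu ε hε
  refine ⟨δ, hδ, fun x y hR hd => ⟨hR, fun w _ => ?_⟩⟩
  rw [← Real.dist_eq]
  exact (h (by simpa [Prod.dist_eq] using hd)).le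

theorem fine_equiv : Equivalence (Dle R K 0) where
  refl x := ⟨S.equiv.refl x, fun w _ => by simp⟩
  symm h := S.dle_symm h
  trans h h' := by simpa using S.dle_trans h h'

/-- A continuous function invariant under `Dle R K 0` is uniformly continuous for the
pseudometric defined by `K` on the `R`-classes. -/
theorem exists_dle_of_resp {f : C(X, ℝ)} (hf : Resp (Dle R K 0) f) {η : ℝ} (hη : 0 < η) :
    ∃ ε > 0, ∀ x y, Dle R K ε x y → |f x - f y| ≤ η := by
  by_contra! hcon
  choose x y hxy hd using fun n : ℕ => hcon (1 / ((n : ℝ) + 1)) Nat.one_div_pos_of_nat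
  obtain ⟨⟨a, b⟩, -, hab⟩ := isCompact_univ.ultrafilter_le_nhds
    ((hyperfilter ℕ).map fun n => (x n, y n)) (by simp)
  replace hab : Tendsto (fun n => (x n, y n)) (hyperfilter ℕ) (𝓝 (a, b)) := hab
  have h0 : Tendsto (fun n : ℕ => 1 / ((n : ℝ) + 1)) (hyperfilter ℕ) (𝓝 0) :=
    tendsto_one_div_add_atTop_nhds_zero_nat.mono_left
      (by rw [← Nat.cofinite_eq_atTop]; exact hyperfilter_le_cofinite)
  have hle : ∀ ε > 0, Dle R K ε a b := fun ε hε => by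
    refine (S.dle_closed ε).mem_of_tendsto hab ?_
    filter_upwards [h0.eventually (gt_mem_nhds hε)] with n hn
    exact (hxy n).mono hn.le
  have hle0 : Dle R K 0 a b := ⟨(hle 1 one_pos).1, fun w hw =>
    le_of_forall_pos_le_add fun ε hε => by simpa using (hle ε hε).2 w hw⟩
  have h1 := (f.continuous.tendsto _).comp ((continuous_fst.tendsto _).comp hab)
  have h2 := (f.continuous.tendsto _).comp ((continuous_snd.tendsto _).comp hab)
  have h3 := ge_of_tendsto (h1.sub h2).abs (Eventually.of_forall fun n => (hd n).le)
  rw [hf a b hle0, sub_self, abs_zero] at h3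
  exact absurd h3 (not_le.2 hη)

end Sys
end Pseudometric

/-! ### Minimal nets and the marriage theorem -/

section Nets

variable {X : Type*} [MetricSpace X] {T : Equiv.Perm X} {R : X → X → Prop}
  {K : C(X × X, ℝ)}

/-- The family `s` is an `ε`-net of the `R`-class of `x`, for the pseudometric defined by `K`. -/
def Net (R : X → X → Prop) (K : C(X × X, ℝ)) (ε : ℝ) (x : X) {ι : Type} (s : ι → X) : Prop :=
  (∀ i, R x (s i)) ∧ ∀ y, R x y → ∃ i, Dle R K ε (s i) y

/-- An `ε`-net with the least possible number of points. -/
def MinNet (R : X → X → Prop) (K : C(X × X, ℝ)) (ε : ℝ) (x : X) {N : ℕ} (s : Fin N → X) : Prop :=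
  Net R K ε x s ∧ ∀ (m : ℕ) (s' : Fin m → X), Net R K ε x s' → N ≤ m

/-- The average of `φ` over the points of the family `s`; it is `0` for an empty family. -/
noncomputable def avg (φ : X → ℝ) {N : ℕ} (s : Fin N → X) : ℝ := (∑ i, φ (s i)) / N

theorem Net.comp_equiv {ε : ℝ} {x : X} {ι κ : Type} {s : ι → X} (h : Net R K ε x s) (e : κ ≃ ι) :
    Net R K ε x (s ∘ e) := by
  refine ⟨fun i => h.1 _, fun y hy => ?_⟩
  obtain ⟨i, hi⟩ := h.2 y hy
  exact ⟨e.symm i, by simpa using hi⟩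

theorem MinNet.le_card {ε : ℝ} {x : X} {N : ℕ} {s : Fin N → X} (h : MinNet R K ε x s) {ι : Type}
    [Fintype ι] {s' : ι → X} (h' : Net R K ε x s') : N ≤ Fintype.card ι :=
  h.2 _ _ (h'.comp_equiv (Fintype.equivFin ι).symm)

variable [CompactSpace X]

namespace Sys

variable (S : Sys T R)
include S

theorem net_rel {ε : ℝ} {x x' : X} {ι : Type} {s : ι → X} (h : Net R K ε x s) (hR : R x x') :
    Net R K ε x' s :=
  ⟨fun i => S.equiv.trans (S.equiv.symm hR) (h.1 i), fun y hy => h.2 y (S.equiv.trans hR hy)⟩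

theorem net_act (hK : Inv T R K) {ε : ℝ} {x : X} {ι : Type} {s : ι → X} (h : Net R K ε x s)
    (U : Ultrafilter ℤ) : Net R K ε (act T U x) (act T U ∘ s) := by
  refine ⟨fun i => S.act_rel U (h.1 i), fun y hy => ?_⟩
  obtain ⟨V, -, hV⟩ := S.exists_inv' U x
  obtain ⟨h1, h2⟩ := hV y hy
  obtain ⟨i, hi⟩ := h.2 _ h1
  refine ⟨i, ?_⟩
  rw [← h2]
  exact S.dle_act hK U hi

theorem minNet_act (hK : Inv T R K) {ε : ℝ} {x x' : X} {N : ℕ} {s : Fin N → X}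
    (h : MinNet R K ε x s) (U : Ultrafilter ℤ) (hR : R (act T U x) x') :
    MinNet R K ε x' (act T U ∘ s) := by
  refine ⟨S.net_rel (S.net_act hK h.1 U) hR, fun m s' hs' => ?_⟩
  obtain ⟨V, hV⟩ := S.exists_inv U x
  have h1 := S.net_act hK (S.net_rel hs' (S.equiv.symm hR)) V
  rw [hV x (S.equiv.refl x)] at h1
  exact h.2 _ _ h1

theorem exists_net (x : X) {ε : ℝ} (hε : 0 < ε) : ∃ N, ∃ s : Fin N → X, Net R K ε x s := by
  obtain ⟨δ, hδ, h⟩ := exists_dle (R := R) (K := K) hε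
  have hZ : IsClosed {y | R x y} := S.closed.preimage (by fun_prop : Continuous fun y => (x, y))
  obtain ⟨t, ht, htf, hcov⟩ := hZ.isCompact.finite_cover_balls hδ
  have : Fintype t := htf.fintype
  let e := (Fintype.equivFin t).symm
  refine ⟨Fintype.card t, fun i => (e i : X), fun i => ht (e i).2, fun y hy => ?_⟩
  obtain ⟨z, hz, hyz⟩ := Set.mem_iUnion₂.1 (hcov hy)
  refine ⟨e.symm ⟨z, hz⟩, ?_⟩
  simp only [e.apply_symm_apply]
  exact h _ _ (S.equiv.trans (S.equiv.symm (ht hz)) hy) (by rwa [dist_comm])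

theorem exists_minNet (x : X) {ε : ℝ} (hε : 0 < ε) :
    ∃ N, ∃ s : Fin N → X, MinNet R K ε x s := by
  classical
  have h := S.exists_net (K := K) x hε
  obtain ⟨s, hs⟩ := Nat.find_spec h
  exact ⟨_, s, hs, fun m s' hs' => Nat.find_min' h ⟨s', hs'⟩⟩

theorem minNet_pos {ε : ℝ} {x : X} {N : ℕ} {s : Fin N → X} (h : MinNet R K ε x s) : 0 < N := by
  obtain ⟨i, -⟩ := h.1.2 x (S.equiv.refl x)
  exact i.pos

/-- Two minimal nets of the same class are matched by a bijection moving points only slightly: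
this is Hall's marriage theorem, since a violation of Hall's condition would allow replacing part
of one net by fewer points of the other one. Hence they give almost equal averages. -/
theorem avg_sub_avg_le {ε η : ℝ} {x : X} {N M : ℕ} {s : Fin N → X} {s' : Fin M → X}
    (h : MinNet R K ε x s) (h' : MinNet R K ε x s') {f : X → ℝ}
    (hf : ∀ y z, Dle R K (ε + ε) y z → |f y - f z| ≤ η) : |avg f s - avg f s'| ≤ η := by
  classical
  obtain rfl : N = M := le_antisymm (h.2 _ _ h'.1) (h'.2 _ _ h.1)
  obtain ⟨e, he, hes⟩ := (Fintype.all_card_le_filter_rel_iff_exists_injective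
    (fun i j : Fin N => Dle R K (ε + ε) (s i) (s' j))).1 (fun A => by
      set B := {j | ∃ i ∈ A, Dle R K (ε + ε) (s i) (s' j)}.toFinset with hB
      let u : {i // i ∉ A} ⊕ {j // j ∈ B} → X := Sum.elim (fun i => s i) (fun j => s' j)
      have hu : Net R K ε x u := by
        refine ⟨?_, fun y hy => ?_⟩
        · rintro (i | j)
          exacts [h.1.1 _, h'.1.1 _]
        · obtain ⟨i, hi⟩ := h.1.2 y hy
          by_cases hA : i ∈ A
          · obtain ⟨j, hj⟩ := h'.1.2 y hy
            exact ⟨Sum.inr ⟨j, by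
              simpa [hB] using ⟨i, hA, S.dle_trans hi (S.dle_symm hj)⟩⟩, hj⟩
          · exact ⟨Sum.inl ⟨i, hA⟩, hi⟩
      have h1 := h.le_card hu
      rw [Fintype.card_sum, Fintype.card_subtype_compl, Fintype.card_coe, Fintype.card_coe,
        Fintype.card_fin] at h1
      have h2 : A.card ≤ N := by simpa using A.card_le_univ
      have h3 : A.card ≤ B.card := by omega
      convert h3 using 2
      ext j
      simp [hB])
  have hN : (0 : ℝ) < N := Nat.cast_pos.2 (S.minNet_pos h)
  have hsum : ∑ j, f (s' j) = ∑ i, f (s' (e i)) :=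
    (Equiv.sum_comp (Equiv.ofBijective e (Finite.injective_iff_bijective.1 he))
      fun j => f (s' j)).symm
  rw [avg, avg, hsum, ← sub_div, ← Finset.sum_sub_distrib, abs_div, abs_of_pos hN, div_le_iff₀ hN]
  calc |∑ i, (f (s i) - f (s' (e i)))| ≤ ∑ i, |f (s i) - f (s' (e i))| :=
        Finset.abs_sum_le_sum_abs _ _
    _ ≤ ∑ _i : Fin N, η := Finset.sum_le_sum fun i _ => hf _ _ (hes i)
    _ = η * N := by simp [mul_comm]

end Sys
end Nets

/-! ### Equivariant means on the classes -/

section Means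

variable {X : Type*} [MetricSpace X] [CompactSpace X] {T : Equiv.Perm X} {R : X → X → Prop}
  {K : C(X × X, ℝ)}

/-- A bounded function, not necessarily continuous. -/
def Bdd (φ : X → ℝ) : Prop := ∃ C, ∀ y, |φ y| ≤ C

/-- A family of means `Λ x` on the `R`-classes of the points `x`, equivariant under the action of
`βℤ`. -/
structure Mean (T : Equiv.Perm X) (R : X → X → Prop) (K : C(X × X, ℝ))
    (Λ : X → (X → ℝ) → ℝ) : Prop where
  add : ∀ x φ ψ, Bdd φ → Bdd ψ → Λ x (fun y => φ y + ψ y) = Λ x φ + Λ x ψ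
  mul : ∀ x c φ, Bdd φ → Λ x (fun y => c * φ y) = c * Λ x φ
  mono : ∀ x φ ψ, Bdd φ → Bdd ψ → (∀ y, R x y → φ y ≤ ψ y) → Λ x φ ≤ Λ x ψ
  const : ∀ x c, Λ x (fun _ => c) = c
  equivariant : ∀ (f : C(X, ℝ)) (U : Ultrafilter ℤ) (x x' : X), Resp (Dle R K 0) f →
    R (act T U x) x' → Λ x (fun y => f (act T U y)) = Λ x' f

omit [MetricSpace X] [CompactSpace X] in
theorem avg_mono {φ ψ : X → ℝ} {N : ℕ} {s : Fin N → X} (h : ∀ i, φ (s i) ≤ ψ (s i)) :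
    avg φ s ≤ avg ψ s :=
  div_le_div_of_nonneg_right (Finset.sum_le_sum fun i _ => h i) (Nat.cast_nonneg N)

omit [MetricSpace X] [CompactSpace X] in
theorem avg_const {N : ℕ} (hN : 0 < N) (s : Fin N → X) (c : ℝ) : avg (fun _ => c) s = c := by
  have : (N : ℝ) ≠ 0 := Nat.cast_ne_zero.2 hN.ne'
  simp [avg, this]

theorem bdd_of_continuous (f : C(X, ℝ)) (g : X → X) : Bdd fun y => f (g y) :=
  ⟨‖f‖, fun y => f.norm_coe_le_norm (g y)⟩

/-- The means are limits, along a fixed ultrafilter, of averages over finer and finer minimal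
nets. -/
theorem Sys.exists_mean (S : Sys T R) (hK : Inv T R K) : ∃ Λ, Mean T R K Λ := by
  choose N s hs using fun (x : X) (n : ℕ) =>
    S.exists_minNet (K := K) x (ε := 1 / ((n : ℝ) + 1)) Nat.one_div_pos_of_nat
  let W : Filter ℕ := (hyperfilter ℕ : Ultrafilter ℕ)
  let Λ : X → (X → ℝ) → ℝ := fun x φ => limUnder W fun n => avg φ (s x n)
  have hpos : ∀ x n, 0 < N x n := fun x n => S.minNet_pos (hs x n)
  have hlim : ∀ x φ, Bdd φ → Tendsto (fun n => avg φ (s x n)) W (𝓝 (Λ x φ)) := by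
    rintro x φ ⟨C, hC⟩
    refine tendsto_nhds_limUnder ?_
    obtain ⟨L, -, hL⟩ := (isCompact_Icc (a := -C) (b := C)).ultrafilter_le_nhds
      ((hyperfilter ℕ).map fun n => avg φ (s x n)) (by
        refine tendsto_principal.2 (Eventually.of_forall fun n => ⟨?_, ?_⟩)
        · rw [← avg_const (hpos x n) (s x n) (-C)]
          exact avg_mono fun i => (abs_le.1 (hC _)).1
        · rw [← avg_const (hpos x n) (s x n) C]
          exact avg_mono fun i => (abs_le.1 (hC _)).2)
    exact ⟨L, hL⟩
  have bdd_add : ∀ φ ψ : X → ℝ, Bdd φ → Bdd ψ → Bdd fun y => φ y + ψ y := by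
    rintro φ ψ ⟨C, hC⟩ ⟨D, hD⟩
    exact ⟨C + D, fun y => (abs_add_le _ _).trans (add_le_add (hC y) (hD y))⟩
  have bdd_mul : ∀ (c : ℝ) (φ : X → ℝ), Bdd φ → Bdd fun y => c * φ y := by
    rintro c φ ⟨C, hC⟩
    exact ⟨|c| * C, fun y => by rw [abs_mul]; gcongr; exact hC y⟩
  refine ⟨Λ, ⟨fun x φ ψ hφ hψ => ?_, fun x c φ hφ => ?_, fun x φ ψ hφ hψ h => ?_, fun x c => ?_,
    fun f U x x' hf hR => ?_⟩⟩
  · refine tendsto_nhds_unique (hlim x _ (bdd_add _ _ hφ hψ)) ?_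
    refine ((hlim x φ hφ).add (hlim x ψ hψ)).congr fun n => ?_
    simp only [avg, Finset.sum_add_distrib, add_div]
  · refine tendsto_nhds_unique (hlim x _ (bdd_mul c _ hφ)) ?_
    refine ((hlim x φ hφ).const_mul c).congr fun n => ?_
    simp only [avg, ← Finset.mul_sum, mul_div_assoc]
  · exact le_of_tendsto_of_tendsto' (hlim x φ hφ) (hlim x ψ hψ) fun n =>
      avg_mono fun i => h _ ((hs x n).1.1 i)
  · refine tendsto_nhds_unique (hlim x _ ⟨|c|, fun _ => le_rfl⟩) ?_
    exact tendsto_const_nhds.congr fun n => (avg_const (hpos x n) _ c).symm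
  · have h1 := hlim x _ (bdd_of_continuous f (act T U))
    have h2 := hlim x' _ (bdd_of_continuous f id)
    have h0 : Tendsto (fun n : ℕ => 1 / ((n : ℝ) + 1)) W (𝓝 0) :=
      tendsto_one_div_add_atTop_nhds_zero_nat.mono_left
        (by rw [← Nat.cofinite_eq_atTop]; exact hyperfilter_le_cofinite)
    refine eq_of_forall_dist_le fun η hη => ?_
    obtain ⟨ε, hε, hfε⟩ := S.exists_dle_of_resp hf hη
    refine le_of_tendsto (h1.dist h2) ?_
    filter_upwards [h0.eventually (gt_mem_nhds (half_pos hε))] with n hn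
    exact S.avg_sub_avg_le (S.minNet_act hK (hs x n) U hR) (hs x' n) (f := f)
      fun y z h => hfε y z (h.mono (by linarith))

namespace Mean

variable {Λ : X → (X → ℝ) → ℝ} (M : Mean T R K Λ)
include M

omit [CompactSpace X] in
theorem abs_sub_le {x : X} {φ ψ : X → ℝ} {η : ℝ} (hφ : Bdd φ) (hψ : Bdd ψ)
    (h : ∀ y, R x y → |φ y - ψ y| ≤ η) : |Λ x φ - Λ x ψ| ≤ η := by
  have key : ∀ φ ψ : X → ℝ, Bdd φ → Bdd ψ → (∀ y, R x y → |φ y - ψ y| ≤ η) →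
      Λ x φ - Λ x ψ ≤ η := by
    intro φ ψ hφ hψ h
    have hb : Bdd fun _ : X => η := ⟨|η|, fun _ => le_rfl⟩
    have hb' : Bdd fun y => ψ y + η := by
      obtain ⟨C, hC⟩ := hψ
      exact ⟨C + |η|, fun y => (abs_add_le _ _).trans (by gcongr; exact hC y)⟩
    have h1 := M.mono x φ _ hφ hb' fun y hy => by linarith [(abs_le.1 (h y hy)).2]
    rw [M.add x ψ _ hψ hb, M.const] at h1
    linarith
  rw [abs_sub_le_iff]
  exact ⟨key φ ψ hφ hψ h, key ψ φ hψ hφ fun y hy => by rw [abs_sub_comm]; exact h y hy⟩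

variable (S : Sys T R) (hK : Inv T R K)
include S hK

/-- On the class of `x'`, the functions `f ∘ act U` form a uniformly equicontinuous family for the
pseudometric of `K`; so pointwise convergence of them is uniform. -/
theorem continuous {f : C(X, ℝ)} (hf : Resp (Dle R K 0) f) : Continuous fun x => Λ x f := by
  rw [continuous_iff_ultrafilter]
  intro x' W hW
  choose U hU using fun x => S.exists_act x' x
  obtain ⟨P, -, hP⟩ := isCompact_univ.ultrafilter_le_nhds (W.map U) (by simp)
  replace hP : Tendsto U W (𝓝 P) := hP
  have hPx : act T P x' = x' := by
    refine tendsto_nhds_unique (((continuous_act T x').tendsto P).comp hP) ?_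
    simp only [Function.comp_def, hU]
    exact hW
  have h1 : ∀ x, Λ x f = Λ x' fun y => f (act T (U x) y) := fun x =>
    (M.equivariant f (U x) x' x hf (by rw [hU]; exact S.equiv.refl x)).symm
  have h2 : Λ x' f = Λ x' fun y => f (act T P y) :=
    (M.equivariant f P x' x' hf (by rw [hPx]; exact S.equiv.refl x')).symm
  rw [h2, Metric.tendsto_nhds]
  intro θ hθ
  obtain ⟨ε, hε, hfε⟩ := S.exists_dle_of_resp hf (η := θ / 4) (by positivity)
  obtain ⟨N, c, hc⟩ := S.exists_net (K := K) x' hε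
  have h3 : ∀ᶠ x in (W : Filter X), ∀ i, dist (f (act T (U x) (c i))) (f (act T P (c i))) < θ / 4 :=
    eventually_all.2 fun i => by
      have := ((f.continuous.comp (continuous_act T (c i))).tendsto P).comp hP
      exact Metric.tendsto_nhds.1 this _ (by positivity)
  filter_upwards [h3] with x hx
  rw [h1, Real.dist_eq]
  refine (M.abs_sub_le (bdd_of_continuous f _) (bdd_of_continuous f _) (η := 3 * (θ / 4))
    fun y hy => ?_).trans_lt (by linarith)
  obtain ⟨i, hi⟩ := hc.2 y hy
  have h4 := abs_le.1 (hfε _ _ (S.dle_act hK (U x) hi))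
  have h5 := abs_le.1 (hfε _ _ (S.dle_act hK P hi))
  have h6 := abs_lt.1 (Real.dist_eq _ _ ▸ hx i)
  rw [abs_le]
  constructor <;> linarith

/-- The means have full support: finitely many translates of a nonnegative function which is
positive at one point of a class cover the whole class. -/
theorem pos {f : C(X, ℝ)} (hf : Resp (Dle R K 0) f) {x : X} (h0 : ∀ y, R x y → 0 ≤ f y)
    (hx : 0 < f x) : 0 < Λ x f := by
  obtain ⟨ε, hε, hfε⟩ := S.exists_dle_of_resp hf (half_pos hx)
  obtain ⟨N, c, hc⟩ := S.exists_net (K := K) x hε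
  choose U hU using fun i => S.exists_act (c i) x
  have hRx : ∀ i, R x (act T (U i) x) := fun i => by
    have := S.act_rel (U i) (hc.1 i)
    rw [hU i] at this
    exact S.equiv.symm this
  have hsum : ∀ I : Finset (Fin N), Bdd (fun y => ∑ i ∈ I, f (act T (U i) y)) ∧
      Λ x (fun y => ∑ i ∈ I, f (act T (U i) y)) = I.card * Λ x f := by
    intro I
    induction I using Finset.cons_induction with
    | empty => exact ⟨⟨0, by simp⟩, by simpa using M.const x 0⟩
    | cons i I hi ih =>
      obtain ⟨hb, he⟩ := ih
      have hbi := bdd_of_continuous f (act T (U i))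
      simp only [Finset.sum_cons]
      refine ⟨?_, ?_⟩
      · obtain ⟨C, hC⟩ := hb
        obtain ⟨D, hD⟩ := hbi
        exact ⟨D + C, fun y => (abs_add_le _ _).trans (add_le_add (hD y) (hC y))⟩
      · rw [M.add x _ _ hbi hb, he,
          M.equivariant f (U i) x x hf (S.equiv.symm (hRx i)), Finset.card_cons]
        push_cast
        ring
  obtain ⟨hb, he⟩ := hsum Finset.univ
  have h1 := M.mono x (fun _ => f x / 2) _ ⟨|f x / 2|, fun _ => le_rfl⟩ hb fun y hy => by
    obtain ⟨i, hi⟩ := hc.2 y hy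
    have h2 := S.dle_act hK (U i) hi
    rw [hU i] at h2
    have h3 := abs_le.1 (hfε _ _ h2)
    calc f x / 2 ≤ f (act T (U i) y) := by linarith
      _ ≤ ∑ i, f (act T (U i) y) :=
        Finset.single_le_sum (f := fun i => f (act T (U i) y))
          (fun j _ => h0 _ (S.equiv.trans (hRx j) (S.act_rel (U j) hy))) (Finset.mem_univ i)
  rw [M.const, he] at h1
  by_contra hcon
  have : (Finset.univ : Finset (Fin N)).card * Λ x f ≤ 0 :=
    mul_nonpos_of_nonneg_of_nonpos (Nat.cast_nonneg _) (not_lt.1 hcon)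
  linarith

end Mean
end Means

/-! ### Partially defined conditional expectations -/

section Expectation

variable {X Y : Type*} [MetricSpace X] [CompactSpace X] [MetricSpace Y] [CompactSpace Y]
  {T : Equiv.Perm X} {R : X → X → Prop} {K : C(X × X, ℝ)}

/-- A conditional expectation `P` from the continuous functions constant on the classes of
`Dle R K 0` onto those constant on the classes of `R`. It is equivariant under the powers `a n` of
`T`, and strictly positive. -/
structure Proj (a : ℤ → C(X, X)) (R : X → X → Prop) (K : C(X × X, ℝ))
    (P : C(X, ℝ) → C(X, ℝ)) : Prop where
  resp : ∀ f, Resp (Dle R K 0) f → Resp R (P f)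
  add : ∀ f g, Resp (Dle R K 0) f → Resp (Dle R K 0) g → P (f + g) = P f + P g
  smul : ∀ (c : ℝ) f, Resp (Dle R K 0) f → P (c • f) = c • P f
  shift : ∀ n f, Resp (Dle R K 0) f → P (f.comp (a n)) = (P f).comp (a n)
  proj : ∀ f, Resp R f → P f = f
  nonneg : ∀ f x, Resp (Dle R K 0) f → (∀ y, R x y → 0 ≤ f y) → 0 ≤ P f x
  pos : ∀ f x, Resp (Dle R K 0) f → (∀ y, R x y → 0 ≤ f y) → 0 < f x → 0 < P f x

theorem Sys.exists_proj (S : Sys T R) (hK : Inv T R K) {a : ℤ → C(X, X)}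
    (ha : ∀ n x, a n x = (T ^ n) x) : ∃ P, Proj a R K P := by
  classical
  obtain ⟨Λ, M⟩ := S.exists_mean hK
  let P : C(X, ℝ) → C(X, ℝ) := fun f =>
    if h : Resp (Dle R K 0) f then ⟨fun x => Λ x f, M.continuous S hK h⟩ else 0
  have hP : ∀ f x, Resp (Dle R K 0) f → P f x = Λ x f := fun f x h => by
    simp only [P, dif_pos h]; rfl
  have hb : ∀ f : C(X, ℝ), Bdd f := fun f => bdd_of_continuous f id
  have hfine : ∀ f, Resp R f → Resp (Dle R K 0) f := fun f hf x y h => hf x y h.1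
  refine ⟨P, ⟨fun f hf x y h => ?_, fun f g hf hg => ?_, fun c f hf => ?_, fun n f hf => ?_,
    fun f hf => ?_, fun f x hf h => ?_, fun f x hf h hx => ?_⟩⟩
  · rw [hP f x hf, hP f y hf]
    have := M.equivariant f (pure 0) x y hf (by simpa [act_pure] using h)
    simpa [act_pure] using this
  · ext x
    rw [hP _ _ fun x y h => by simp [hf x y h, hg x y h], ContinuousMap.add_apply, hP f x hf,
      hP g x hg]
    exact M.add x f g (hb f) (hb g)
  · ext x
    rw [hP _ _ fun x y h => by simp [hf x y h], ContinuousMap.smul_apply, hP f x hf]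
    exact M.mul x c f (hb f)
  · ext x
    rw [ContinuousMap.comp_apply, hP f _ hf, hP _ _ fun x y h => ?_]
    · rw [← M.equivariant f (pure n) x (a n x) hf
        (by rw [act_pure, ha]; exact S.equiv.refl _)]
      simp only [act_pure, ← ha]
      rfl
    · have := hf _ _ (S.dle_act hK (pure n) h)
      change f (a n x) = f (a n y)
      simpa only [act_pure, ← ha] using this
  · ext x
    rw [hP f x (hfine f hf)]
    have hc : Bdd fun _ : X => f x := ⟨|f x|, fun _ => le_rfl⟩
    refine le_antisymm ?_ ?_
    · exact (M.mono x f _ (hb f) hc fun y hy => (hf x y hy).ge).trans_eq (M.const x _)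
    · exact (M.const x _).symm.trans_le (M.mono x _ f hc (hb f) fun y hy => (hf x y hy).le)
  · rw [hP f x hf, ← M.const x 0]
    exact M.mono x _ f ⟨0, fun _ => by simp⟩ (hb f) h
  · rw [hP f x hf]
    exact M.pos S hK hf h hx

/-- The absolute value as a bundled continuous map. -/
def absC : C(ℝ, ℝ) := ⟨fun t => |t|, continuous_abs⟩

/-- `Γ` is the graph of a partially defined strictly positive equivariant conditional expectation
from `C(X)` to `C(Y)`. Its domain contains the functions coming from `Y` and is a vector
lattice. -/
structure Good (a : ℤ → C(X, X)) (b : ℤ → C(Y, Y)) (p : C(X, Y))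
    (Γ : Set (C(X, ℝ) × C(Y, ℝ))) : Prop where
  base : ∀ g : C(Y, ℝ), (g.comp p, g) ∈ Γ
  add : ∀ f h f' h', (f, h) ∈ Γ → (f', h') ∈ Γ → (f + f', h + h') ∈ Γ
  smul : ∀ (c : ℝ) f h, (f, h) ∈ Γ → (c • f, c • h) ∈ Γ
  abs : ∀ f h, (f, h) ∈ Γ → ∃ h', (absC.comp f, h') ∈ Γ
  shift : ∀ n f h, (f, h) ∈ Γ → (f.comp (a n), h.comp (b n)) ∈ Γ
  nonneg : ∀ f h y, (f, h) ∈ Γ → (∀ x, p x = y → 0 ≤ f x) → 0 ≤ h y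
  pos : ∀ f h x, (f, h) ∈ Γ → (∀ x', p x' = p x → 0 ≤ f x') → 0 < f x → 0 < h (p x)

/-- Two points are identified by all functions in the domain of `Γ`. -/
def relOf (Γ : Set (C(X, ℝ) × C(Y, ℝ))) (x y : X) : Prop := ∀ f h, (f, h) ∈ Γ → f x = f y

namespace Good

variable {a : ℤ → C(X, X)} {b : ℤ → C(Y, Y)} {p : C(X, Y)} {Γ : Set (C(X, ℝ) × C(Y, ℝ))}

omit [CompactSpace X] [CompactSpace Y] in
theorem sub (G : Good a b p Γ) {f f' : C(X, ℝ)} {h h' : C(Y, ℝ)} (hf : (f, h) ∈ Γ)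
    (hf' : (f', h') ∈ Γ) : (f - f', h - h') ∈ Γ := by
  have := G.add _ _ _ _ hf (G.smul (-1) _ _ hf')
  simpa only [neg_smul, one_smul, ← sub_eq_add_neg] using this

omit [CompactSpace X] [CompactSpace Y] in
theorem const_mem (G : Good a b p Γ) (c : ℝ) :
    (ContinuousMap.const X c, ContinuousMap.const Y c) ∈ Γ := G.base (ContinuousMap.const Y c)

omit [CompactSpace X] [CompactSpace Y] in
theorem apply_le (G : Good a b p Γ) {f f' : C(X, ℝ)} {h h' : C(Y, ℝ)} (hf : (f, h) ∈ Γ)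
    (hf' : (f', h') ∈ Γ) {y : Y} {c : ℝ} (hle : ∀ x, p x = y → f x ≤ f' x + c) :
    h y ≤ h' y + c := by
  have := G.nonneg _ _ y (G.sub (G.add _ _ _ _ hf' (G.const_mem c)) hf) fun x hx => by
    simpa using hle x hx
  simpa using this

theorem dist_le (G : Good a b p Γ) {f f' : C(X, ℝ)} {h h' : C(Y, ℝ)} (hf : (f, h) ∈ Γ)
    (hf' : (f', h') ∈ Γ) : dist h h' ≤ dist f f' := by
  rw [ContinuousMap.dist_le dist_nonneg]
  intro y
  have h1 : ∀ x, |f x - f' x| ≤ dist f f' := fun x => by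
    rw [← Real.dist_eq]; exact ContinuousMap.dist_apply_le_dist x
  have h2 := G.apply_le hf hf' (y := y) (c := dist f f') fun x _ => by
    linarith [(abs_le.1 (h1 x)).2]
  have h3 := G.apply_le hf' hf (y := y) (c := dist f f') fun x _ => by
    linarith [(abs_le.1 (h1 x)).1]
  rw [Real.dist_eq, abs_le]
  constructor <;> linarith

theorem unique (G : Good a b p Γ) {f : C(X, ℝ)} {h h' : C(Y, ℝ)} (hf : (f, h) ∈ Γ)
    (hf' : (f, h') ∈ Γ) : h = h' :=
  dist_le_zero.1 ((G.dist_le hf hf').trans_eq (dist_self f))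

/-- The domain of the closure of `Γ` is closed, since `Γ` is the graph of a contraction. -/
theorem exists_mem_closure (G : Good a b p Γ) {f : C(X, ℝ)}
    (hf : f ∈ _root_.closure {f | ∃ h, (f, h) ∈ Γ}) : ∃ h, (f, h) ∈ _root_.closure Γ := by
  obtain ⟨u, hu, hlim⟩ := mem_closure_iff_seq_limit.1 hf
  choose v hv using hu
  have hcau : CauchySeq v := by
    have h1 := hlim.cauchySeq
    rw [Metric.cauchySeq_iff] at h1 ⊢
    intro ε hε
    obtain ⟨N, hN⟩ := h1 ε hε
    exact ⟨N, fun m hm n hn => (G.dist_le (hv m) (hv n)).trans_lt (hN m hm n hn)⟩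
  obtain ⟨h, hh⟩ := cauchySeq_tendsto_of_complete hcau
  exact ⟨h, mem_closure_of_tendsto (hlim.prodMk_nhds hh) (Eventually.of_forall hv)⟩

theorem exists_near {f : C(X, ℝ)} {h : C(Y, ℝ)}
    (hf : (f, h) ∈ _root_.closure Γ) {η : ℝ} (hη : 0 < η) :
    ∃ f' h', (f', h') ∈ Γ ∧ (∀ x, |f x - f' x| ≤ η) ∧ ∀ y, |h y - h' y| ≤ η := by
  obtain ⟨⟨f', h'⟩, hm, hd⟩ := Metric.mem_closure_iff.1 hf η hη
  rw [Prod.dist_eq, max_lt_iff] at hd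
  exact ⟨f', h', hm, fun x => (ContinuousMap.dist_apply_le_dist x).trans hd.1.le,
    fun y => (ContinuousMap.dist_apply_le_dist y).trans hd.2.le⟩

theorem closure (G : Good a b p Γ) : Good a b p (closure Γ) := by
  have hnonneg : ∀ f h y, (f, h) ∈ _root_.closure Γ → (∀ x, p x = y → 0 ≤ f x) → 0 ≤ h y := by
    intro f h y hf h0
    refine le_of_forall_pos_le_add fun η hη => ?_
    obtain ⟨f', h', hm, h1, h2⟩ := exists_near hf (half_pos hη)
    have h3 := G.apply_le (G.const_mem 0) hm (y := y) (c := η / 2) fun x hx => by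
      have := h0 x hx
      simp only [ContinuousMap.const_apply]
      linarith [(abs_le.1 (h1 x)).2]
    simp only [ContinuousMap.const_apply] at h3
    linarith [(abs_le.1 (h2 y)).1]
  have hadd : ∀ f h f' h', (f, h) ∈ _root_.closure Γ → (f', h') ∈ _root_.closure Γ →
      (f + f', h + h') ∈ _root_.closure Γ := fun f h f' h' hf hf' =>
    map_mem_closure₂ (f := fun q r => q + r) continuous_add hf hf'
      fun q hq r hr => G.add _ _ _ _ hq hr
  have hsmul : ∀ (c : ℝ) f h, (f, h) ∈ _root_.closure Γ →
      (c • f, c • h) ∈ _root_.closure Γ := fun c f h hf =>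
    map_mem_closure (f := fun q : C(X, ℝ) × C(Y, ℝ) => c • q) (continuous_const_smul c) hf
      fun q hq => G.smul c _ _ hq
  refine ⟨fun g => subset_closure (G.base g), hadd, hsmul, fun f h hf => ?_, fun n f h hf => ?_,
    hnonneg, fun f h x hf h0 hx => ?_⟩
  · refine G.exists_mem_closure ?_
    have h1 : f ∈ _root_.closure {f | ∃ h, (f, h) ∈ Γ} :=
      map_mem_closure (f := Prod.fst) continuous_fst hf fun q hq => ⟨q.2, hq⟩
    exact map_mem_closure (ContinuousMap.continuous_postcomp absC) h1
      fun g ⟨k, hg⟩ => G.abs g k hg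
  · exact map_mem_closure
      (f := fun q : C(X, ℝ) × C(Y, ℝ) => (q.1.comp (a n), q.2.comp (b n)))
      (((ContinuousMap.continuous_precomp _).comp continuous_fst).prodMk
        ((ContinuousMap.continuous_precomp _).comp continuous_snd)) hf
      fun q hq => G.shift n _ _ hq
  · -- a function of the domain of `Γ` lying below `f` on the fibre and still positive at `x`
    obtain ⟨f', h', hm, h1, -⟩ := exists_near hf (η := f x / 4) (by linarith)
    have hu := G.sub hm (G.const_mem (f x / 4))
    obtain ⟨k, hk⟩ := G.abs _ _ hu
    have hg := G.smul (1 / 2) _ _ (G.add _ _ _ _ hu hk)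
    have hval : ∀ z, ((1 / 2 : ℝ) • (f' - ContinuousMap.const X (f x / 4) +
        absC.comp (f' - ContinuousMap.const X (f x / 4)))) z = max (f' z - f x / 4) 0 := by
      intro z
      have : absC (f' z - f x / 4) = |f' z - f x / 4| := rfl
      simp only [ContinuousMap.smul_apply, ContinuousMap.add_apply, ContinuousMap.sub_apply,
        ContinuousMap.const_apply, ContinuousMap.comp_apply, this, smul_eq_mul]
      rcases le_total 0 (f' z - f x / 4) with hz | hz
      · rw [abs_of_nonneg hz, max_eq_left hz]; ring
      · rw [abs_of_nonpos hz, max_eq_right hz]; ring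
    have h2 := G.pos _ _ x hg (fun z _ => by rw [hval]; exact le_max_right _ _) (by
      rw [hval]
      exact lt_max_of_lt_left (by linarith [(abs_le.1 (h1 x)).2]))
    have h3 := hnonneg _ _ (p x)
      (hadd _ _ _ _ hf (hsmul (-1) _ _ (subset_closure hg))) fun z hz => by
        rw [ContinuousMap.add_apply, ContinuousMap.smul_apply, hval, smul_eq_mul]
        have : max (f' z - f x / 4) 0 ≤ f z :=
          max_le (by linarith [(abs_le.1 (h1 z)).1]) (h0 z hz)
        linarith
    rw [ContinuousMap.add_apply, ContinuousMap.smul_apply, smul_eq_mul] at h3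
    linarith

omit [CompactSpace X] [CompactSpace Y] in
theorem relOf_equiv (Γ : Set (C(X, ℝ) × C(Y, ℝ))) : Equivalence (relOf Γ) where
  refl _ _ _ _ := rfl
  symm h f k hf := (h f k hf).symm
  trans h h' f k hf := (h f k hf).trans (h' f k hf)

omit [CompactSpace X] [CompactSpace Y] in
theorem relOf_base (G : Good a b p Γ) {x y : X} (h : relOf Γ x y) : p x = p y := by
  have := h _ _ (G.base ⟨fun z => dist z (p y), by fun_prop⟩)
  simpa using this

omit [CompactSpace Y] in
theorem sys (G : Good a b p Γ) (ha : ∀ n x, a n x = (T ^ n) x) (hmin : IsMinimal T)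
    (hdist : ∀ x y, p x = p y → Proximal T x y → x = y) : Sys T (relOf Γ) where
  cont n := (a n).continuous.congr (ha n)
  min := hmin
  equiv := relOf_equiv Γ
  closed := by
    simp only [relOf, Set.ofPred_forall]
    exact isClosed_iInter fun f => isClosed_iInter fun h => isClosed_iInter fun _ =>
      isClosed_eq (by fun_prop) (by fun_prop)
  inv n x y h f k hf := by
    simpa only [ContinuousMap.comp_apply, ha] using h _ _ (G.shift n f k hf)
  distal x y h := hdist x y (G.relOf_base h)

omit [CompactSpace Y] in
/-- Stone–Weierstrass for lattices, on the quotient of `X` by `relOf Γ`. -/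
theorem dense (G : Good a b p Γ) {f : C(X, ℝ)} (hf : Resp (relOf Γ) f) :
    f ∈ _root_.closure {f | ∃ h, (f, h) ∈ Γ} := by
  let s : Setoid X := ⟨relOf Γ, relOf_equiv Γ⟩
  let q : C(X, Quotient s) := ⟨Quotient.mk s, continuous_quotient_mk'⟩
  have hq : ∀ x y, q x = q y ↔ relOf Γ x y := fun x y => Quotient.eq
  have hlift : ∀ g : C(X, ℝ), Resp (relOf Γ) g → ∃ g' : C(Quotient s, ℝ), g'.comp q = g :=
    fun g hg => ⟨⟨Quotient.lift g hg, g.continuous.quotient_lift hg⟩, rfl⟩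
  let L : Set C(Quotient s, ℝ) := {g | ∃ h, (g.comp q, h) ∈ Γ}
  have habs : ∀ g ∈ L, absC.comp g ∈ L := fun g ⟨h, hg⟩ => G.abs _ h hg
  have hladd : ∀ g ∈ L, ∀ g' ∈ L, g + g' ∈ L := fun g ⟨h, hg⟩ g' ⟨h', hg'⟩ =>
    ⟨_, G.add _ _ _ _ hg hg'⟩
  have hlsmul : ∀ (c : ℝ), ∀ g ∈ L, c • g ∈ L := fun c g ⟨h, hg⟩ => ⟨_, G.smul c _ _ hg⟩
  have hlconst : ∀ c : ℝ, ContinuousMap.const _ c ∈ L := fun c => ⟨_, G.const_mem c⟩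
  have htop : _root_.closure L = ⊤ := by
    refine ContinuousMap.sublattice_closure_eq_top L ⟨_, hlconst 0⟩ (fun g hg g' hg' => ?_)
      (fun g hg g' hg' => ?_) fun v x y => ?_
    · convert hlsmul (1 / 2) _ (hladd _ (hladd _ hg _ hg') _
        (hlsmul (-1) _ (habs _ (hladd _ hg _ (hlsmul (-1) _ hg'))))) using 1
      ext z
      have : absC (g z + -1 * g' z) = |g z + -1 * g' z| := rfl
      simp only [ContinuousMap.inf_apply, ContinuousMap.smul_apply, ContinuousMap.add_apply,
        ContinuousMap.comp_apply, smul_eq_mul, this]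
      rcases le_total (g z) (g' z) with h | h
      · rw [inf_eq_left.2 h, abs_of_nonpos (by linarith)]; ring
      · rw [inf_eq_right.2 h, abs_of_nonneg (by linarith)]; ring
    · convert hlsmul (1 / 2) _ (hladd _ (hladd _ hg _ hg') _
        (habs _ (hladd _ hg _ (hlsmul (-1) _ hg')))) using 1
      ext z
      have : absC (g z + -1 * g' z) = |g z + -1 * g' z| := rfl
      simp only [ContinuousMap.sup_apply, ContinuousMap.smul_apply, ContinuousMap.add_apply,
        ContinuousMap.comp_apply, smul_eq_mul, this]
      rcases le_total (g z) (g' z) with h | h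
      · rw [sup_eq_right.2 h, abs_of_nonpos (by linarith)]; ring
      · rw [sup_eq_left.2 h, abs_of_nonneg (by linarith)]; ring
    · obtain ⟨x, rfl⟩ := Quotient.mk_surjective x
      obtain ⟨y, rfl⟩ := Quotient.mk_surjective y
      by_cases hxy : relOf Γ x y
      · refine ⟨_, hlconst (v (q x)), rfl, ?_⟩
        rw [show (Quotient.mk s y) = q x from ((hq x y).2 hxy).symm]
        rfl
      · simp only [relOf, not_forall] at hxy
        obtain ⟨g, h, hg, hne⟩ := hxy
        obtain ⟨g', hg'⟩ := hlift g fun x y hxy => hxy g h hg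
        have hgL : g' ∈ L := ⟨h, by rwa [hg']⟩
        have hx : g' (Quotient.mk s x) = g x := congrArg (fun k : C(X, ℝ) => k x) hg'
        have hy : g' (Quotient.mk s y) = g y := congrArg (fun k : C(X, ℝ) => k y) hg'
        have hne' : g y - g x ≠ 0 := sub_ne_zero.2 (Ne.symm hne)
        refine ⟨_, hladd _ (hlsmul ((v (q y) - v (q x)) / (g y - g x)) _
          (hladd _ hgL _ (hlconst (-g x)))) _ (hlconst (v (q x))), ?_, ?_⟩
        · simp [hx]; rfl
        · simp only [ContinuousMap.add_apply, ContinuousMap.smul_apply, ContinuousMap.const_apply,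
            hy, smul_eq_mul, ← sub_eq_add_neg]
          rw [div_mul_cancel₀ _ hne', sub_add_cancel]
          rfl
  obtain ⟨f', rfl⟩ := hlift f hf
  have hc : Continuous fun g : C(Quotient s, ℝ) => g.comp q := ContinuousMap.continuous_precomp q
  have hL : f' ∈ _root_.closure L := by rw [htop]; trivial
  exact map_mem_closure (f := fun g : C(Quotient s, ℝ) => g.comp q) hc hL fun g hg => hg

end Good

/-! ### Existence of a conditional expectation -/

/-- By Zorn's lemma there is a maximal good `Γ`. If its domain were not all of `C(X)`, the means on
the classes of `relOf Γ` would extend it further. -/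
theorem exists_good {a : ℤ → C(X, X)} {b : ℤ → C(Y, Y)} {p : C(X, Y)}
    (ha : ∀ n x, a n x = (T ^ n) x) (hp : Function.Surjective p)
    (hab : ∀ n x, p (a n x) = b n (p x)) (hmin : IsMinimal T)
    (hdist : ∀ x y, p x = p y → Proximal T x y → x = y) :
    ∃ Γ, Good a b p Γ ∧ ∀ f, ∃ h, (f, h) ∈ Γ := by
  have hbase : Good a b p (Set.range fun g : C(Y, ℝ) => (g.comp p, g)) := by
    refine ⟨fun g => ⟨g, rfl⟩, ?_, ?_, ?_, ?_, ?_, ?_⟩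
    · rintro _ g _ g' ⟨_, ⟨⟩⟩ ⟨_, ⟨⟩⟩
      exact ⟨g + g', rfl⟩
    · rintro c _ g ⟨_, ⟨⟩⟩
      exact ⟨c • g, rfl⟩
    · rintro _ g ⟨_, ⟨⟩⟩
      exact ⟨absC.comp g, absC.comp g, rfl⟩
    · rintro n _ g ⟨_, ⟨⟩⟩
      refine ⟨g.comp (b n), Prod.ext ?_ rfl⟩
      ext x
      simp [hab]
    · rintro _ g y ⟨_, ⟨⟩⟩ h
      obtain ⟨x, rfl⟩ := hp y
      exact h x rfl
    · rintro _ g x ⟨_, ⟨⟩⟩ _ h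
      exact h
  obtain ⟨Γ, -, hmax⟩ := zorn_subset_nonempty {Γ | Good a b p Γ} (fun c hc hchain hne => by
    have hdir := hchain.directedOn
    refine ⟨⋃₀ c, ?_, fun s hs => Set.subset_sUnion_of_mem hs⟩
    obtain ⟨Γ₀, h₀⟩ := hne
    refine ⟨fun g => ⟨Γ₀, h₀, (hc h₀).base g⟩, ?_, ?_, ?_, ?_, ?_, ?_⟩
    · rintro f h f' h' ⟨Γ₁, h₁, hf⟩ ⟨Γ₂, h₂, hf'⟩
      obtain ⟨Γ₃, h₃, h13, h23⟩ := hdir Γ₁ h₁ Γ₂ h₂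
      exact ⟨Γ₃, h₃, (hc h₃).add _ _ _ _ (h13 hf) (h23 hf')⟩
    · rintro r f h ⟨Γ₁, h₁, hf⟩
      exact ⟨Γ₁, h₁, (hc h₁).smul r _ _ hf⟩
    · rintro f h ⟨Γ₁, h₁, hf⟩
      obtain ⟨k, hk⟩ := (hc h₁).abs _ _ hf
      exact ⟨k, Γ₁, h₁, hk⟩
    · rintro n f h ⟨Γ₁, h₁, hf⟩
      exact ⟨Γ₁, h₁, (hc h₁).shift n _ _ hf⟩
    · rintro f h y ⟨Γ₁, h₁, hf⟩
      exact (hc h₁).nonneg _ _ y hf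
    · rintro f h x ⟨Γ₁, h₁, hf⟩
      exact (hc h₁).pos _ _ x hf) _ hbase
  have G : Good a b p Γ := hmax.prop
  have hcl : closure Γ = Γ := (hmax.eq_of_subset G.closure subset_closure).symm
  have hdom : ∀ f, Resp (relOf Γ) f → ∃ h, (f, h) ∈ Γ := fun f hf => by
    rw [← hcl]; exact G.exists_mem_closure (G.dense hf)
  refine ⟨Γ, G, ?_⟩
  have S : Sys T (relOf Γ) := G.sys ha hmin hdist
  by_cases htriv : ∀ x y, relOf Γ x y → x = y
  · exact fun f => hdom f fun x y h => congrArg f (htriv x y h)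
  exfalso
  push Not at htriv
  obtain ⟨x, y, hxy, hne⟩ := htriv
  obtain ⟨K, hK, hK0, u, v, huv, hKuv⟩ := S.exists_kernel hxy hne
  obtain ⟨P, hP⟩ := S.exists_proj hK ha
  have hfib : ∀ {x y}, relOf Γ x y → p y = p x := fun h => (G.relOf_base h).symm
  have hfine : ∀ f, Resp (relOf Γ) f → Resp (Dle (relOf Γ) K 0) f := fun f hf x y h => hf x y h.1
  let Γ' : Set (C(X, ℝ) × C(Y, ℝ)) := {q | Resp (Dle (relOf Γ) K 0) q.1 ∧ (P q.1, q.2) ∈ Γ}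
  have G' : Good a b p Γ' := by
    refine ⟨fun g => ?_, ?_, ?_, ?_, ?_, ?_, ?_⟩
    · have h1 : Resp (relOf Γ) (g.comp p) := fun x y h => congrArg g (G.relOf_base h)
      refine ⟨hfine _ h1, ?_⟩
      rw [hP.proj _ h1]
      exact G.base g
    · rintro f h f' h' ⟨hf, hm⟩ ⟨hf', hm'⟩
      refine ⟨fun x y h => ?_, ?_⟩
      · exact congrArg₂ (· + ·) (hf x y h) (hf' x y h)
      · simp only at hf hf' ⊢
        rw [hP.add f f' hf hf']
        exact G.add _ _ _ _ hm hm'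
    · rintro c f h ⟨hf, hm⟩
      refine ⟨fun x y h => congrArg (c * ·) (hf x y h), ?_⟩
      simp only at hf ⊢
      rw [hP.smul c f hf]
      exact G.smul c _ _ hm
    · rintro f h ⟨hf, hm⟩
      have h1 : Resp (Dle (relOf Γ) K 0) (absC.comp f) := fun x y h => congrArg absC (hf x y h)
      obtain ⟨k, hk⟩ := hdom _ (hP.resp _ h1)
      exact ⟨k, h1, hk⟩
    · rintro n f h ⟨hf, hm⟩
      refine ⟨fun x y h => ?_, ?_⟩
      · have := hf _ _ (S.dle_act hK (pure n) h)
        change f (a n x) = f (a n y)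
        simpa only [act_pure, ← ha] using this
      · simp only at hf ⊢
        rw [hP.shift n f hf]
        exact G.shift n _ _ hm
    · rintro f h y ⟨hf, hm⟩ h0
      exact G.nonneg _ _ y hm fun x hx =>
        hP.nonneg f x hf fun z hz => h0 z ((hfib hz).trans hx)
    · rintro f h x ⟨hf, hm⟩ h0 hx
      exact G.pos _ _ x hm
        (fun x' hx' => hP.nonneg f x' hf fun z hz => h0 z ((hfib hz).trans hx'))
        (hP.pos f x hf (fun z hz => h0 z (hfib hz)) hx)
  have hsub : Γ ⊆ Γ' := by
    rintro ⟨f, h⟩ hf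
    have h1 : Resp (relOf Γ) f := fun x y hxy => hxy f h hf
    refine ⟨hfine f h1, ?_⟩
    simp only [hP.proj f h1]
    exact hf
  have hnot : ¬ Dle (relOf Γ) K 0 u v := fun h => by
    have := h.2 v huv
    rw [hKuv, hK0] at this
    norm_num at this
  obtain ⟨f, hf, hf0, hf1⟩ := exists_separating S.fine_equiv (S.dle_closed 0) hnot
  obtain ⟨h, hh⟩ := hdom _ (hP.resp f hf)
  have hmem : (f, h) ∈ Γ := hmax.le_of_ge G' hsub (show (f, h) ∈ Γ' from ⟨hf, hh⟩)
  have := huv f h hmem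
  rw [hf0, hf1] at this
  norm_num at this

end Expectation

/-! ### From conditional expectations to measures -/

section Measure

open scoped CompactlySupported

variable {X Y : Type*} [MetricSpace X] [CompactSpace X] [MeasurableSpace X] [BorelSpace X]
  [MetricSpace Y] [CompactSpace Y]
  {a : ℤ → C(X, X)} {b : ℤ → C(Y, Y)} {p : C(X, Y)} {Γ : Set (C(X, ℝ) × C(Y, ℝ))}

/-- The Riesz–Markov–Kakutani theorem, applied to the positive functional `f ↦ (E f) y`, where `E`
is the conditional expectation with graph `Γ`. -/
theorem Good.exists_measure (G : Good a b p Γ) (hdom : ∀ f, ∃ h, (f, h) ∈ Γ) (y : Y) :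
    ∃ μ : ProbabilityMeasure X, ∀ f h, (f, h) ∈ Γ → ∫ x, f x ∂(μ : Measure X) = h y := by
  choose E hE using hdom
  let Λ : C_c(X, ℝ) →ₚ[ℝ] ℝ := PositiveLinearMap.mk₀
    { toFun := fun f => E f.toContinuousMap y
      map_add' := fun f g => by
        rw [G.unique (hE (f + g).toContinuousMap) (G.add _ _ _ _ (hE f.toContinuousMap)
          (hE g.toContinuousMap))]
        rfl
      map_smul' := fun c f => by
        rw [G.unique (hE (c • f).toContinuousMap) (G.smul c _ _ (hE f.toContinuousMap))]
        rfl }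
    fun f hf => G.nonneg _ _ y (hE f.toContinuousMap) fun x _ => hf x
  have hΛint : ∀ f h, (f, h) ∈ Γ → ∫ x, f x ∂(RealRMK.rieszMeasure Λ) = h y := fun f h hf => by
    have := RealRMK.integral_rieszMeasure Λ
      (CompactlySupportedContinuousMap.continuousMapEquiv f)
    refine this.trans ?_
    rw [← G.unique (hE f) hf]
    rfl
  refine ⟨⟨RealRMK.rieszMeasure Λ, ⟨?_⟩⟩, hΛint⟩
  have h1 := hΛint _ _ (G.const_mem 1)
  simp only [ContinuousMap.const_apply, integral_const, smul_eq_mul, mul_one] at h1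
  rwa [← ENNReal.toReal_eq_one_iff]

/-- The measures given by the Riesz representation theorem form a section of full support. -/
theorem Good.exists_section (G : Good a b p Γ) (hdom : ∀ f, ∃ h, (f, h) ∈ Γ) :
    ∃ lam : Y → ProbabilityMeasure X, Continuous lam ∧
      (∀ y : Y, (lam y : Measure X).map (a 1) = (lam (b 1 y) : Measure X)) ∧
      (∀ y : Y, (lam y : Measure X) (p ⁻¹' {y}) = 1) ∧
      (∀ y : Y, ∀ x : X, p x = y → ∀ U : Set X, IsOpen U → x ∈ U →
        0 < (lam y : Measure X) U) := by
  choose lam hlam using G.exists_measure hdom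
  have hΛint : ∀ (f : C(X, ℝ)) (μ : ProbabilityMeasure X), Integrable f (μ : Measure X) :=
    fun f μ => f.continuous.integrable_of_hasCompactSupport (HasCompactSupport.of_compactSpace f)
  refine ⟨lam, ?_, fun y => ?_, fun y => ?_, ?_⟩
  · rw [ProbabilityMeasure.continuous_iff_forall_continuous_integral]
    intro f
    obtain ⟨h, hh⟩ := hdom f.toContinuousMap
    exact h.continuous.congr fun y => (hlam y _ _ hh).symm
  · have : IsProbabilityMeasure ((lam y : Measure X).map (a 1)) :=
      Measure.isProbabilityMeasure_map (a 1).continuous.aemeasurable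
    refine ext_of_forall_integral_eq_of_IsFiniteMeasure fun f => ?_
    obtain ⟨h, hh⟩ := hdom f.toContinuousMap
    rw [integral_map (a 1).continuous.aemeasurable f.continuous.aestronglyMeasurable]
    exact (hlam y _ _ (G.shift 1 _ _ hh)).trans (hlam (b 1 y) _ _ hh).symm
  · let g : C(Y, ℝ) := ⟨fun z => dist z y, by fun_prop⟩
    have h1 := hlam y _ _ (G.base g)
    have h2 := (integral_eq_zero_iff_of_nonneg (fun x => dist_nonneg) (hΛint (g.comp p) (lam y))).1
      (h1.trans (dist_self y))
    rw [← mem_ae_iff_prob_eq_one (isClosed_singleton.preimage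
      p.continuous).measurableSet]
    filter_upwards [h2] with x hx
    exact dist_eq_zero.1 hx
  · rintro _ x rfl U hU hx
    obtain ⟨r, hr, hrU⟩ := Metric.isOpen_iff.1 hU x hx
    -- a bump function at `x` supported in `U`
    let f : C(X, ℝ) := ⟨fun z => max 0 (r - dist z x), by fun_prop⟩
    obtain ⟨h, hh⟩ := hdom f
    have h1 : 0 < h (p x) := G.pos f h x hh (fun z _ => le_max_left _ _)
      (by simpa [f] using hr)
    refine pos_iff_ne_zero.2 fun h0 => h1.ne' ?_
    rw [← hlam (p x) f h hh]
    refine integral_eq_zero_of_ae ?_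
    have h2 : Uᶜ ∈ ae (lam (p x) : Measure X) := by rwa [mem_ae_iff, compl_compl]
    filter_upwards [h2] with z hz
    have : r ≤ dist z x := not_lt.1 fun hlt => hz (hrU hlt)
    exact max_eq_left (by linarith)

end Measure

theorem continuous_zpow {Z : Type*} [TopologicalSpace Z] {T : Equiv.Perm Z} (hT : Continuous T)
    (hT' : Continuous T.symm) (n : ℤ) : Continuous fun x => (T ^ n) x := by
  induction n with
  | zero => exact continuous_id
  | succ n ih =>
    simp only [zpow_add_one, Equiv.Perm.mul_apply]
    exact ih.comp hT
  | pred n ih =>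
    simp only [zpow_sub_one, Equiv.Perm.mul_apply]
    exact ih.comp hT'

theorem zpow_factor {Z W : Type*} {T : Equiv.Perm Z} {S : Equiv.Perm W} {π : Z → W}
    (hfac : ∀ x, π (T x) = S (π x)) (n : ℤ) (x : Z) : π ((T ^ n) x) = (S ^ n) (π x) := by
  induction n generalizing x with
  | zero => rfl
  | succ n ih => rw [zpow_add_one, zpow_add_one, Equiv.Perm.mul_apply, Equiv.Perm.mul_apply, ih,
      hfac]
  | pred n ih =>
    have h : π (T⁻¹ x) = S⁻¹ (π x) :=
      Equiv.Perm.eq_inv_iff_eq.2 ((hfac _).symm.trans (congrArg π (T.apply_symm_apply x)))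
    rw [zpow_sub_one, zpow_sub_one, Equiv.Perm.mul_apply, Equiv.Perm.mul_apply, ih, h]

end DistalRIM

/-- If `(X, T)` is a minimal t.d.s. and `π : (X,T) → (Y,S)` is a distal
extension, then `π` has a relatively invariant measure with a section `λ : Y → M(X)` of
full support: a continuous map `λ` with `T_* λ_y = λ_{S y}` and `supp λ_y = π⁻¹(y)` for
all `y` (full support is encoded as: `λ_y (π⁻¹ {y}) = 1`, and every point of the fiber
has all its open neighborhoods of positive `λ_y`-measure). -/
theorem distal_ext_has_rim {X Y : Type*}
    [MetricSpace X] [CompactSpace X] [MeasurableSpace X] [BorelSpace X]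
    [MetricSpace Y] [CompactSpace Y]
    (T : Equiv.Perm X) (hT : Continuous T) (hT' : Continuous T.symm)
    (hmin : IsMinimal T)
    (S : Equiv.Perm Y) (hS : Continuous S) (hS' : Continuous S.symm)
    (π : X → Y) (hπc : Continuous π) (hπs : Function.Surjective π)
    (hfac : ∀ x : X, π (T x) = S (π x))
    (hdistal : ∀ x y : X, π x = π y → Proximal T x y → x = y) :
    ∃ lam : Y → ProbabilityMeasure X,
      Continuous lam ∧
      (∀ y : Y, (lam y : Measure X).map T = (lam (S y) : Measure X)) ∧
      (∀ y : Y, (lam y : Measure X) (π ⁻¹' {y}) = 1) ∧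
      (∀ y : Y, ∀ x : X, π x = y → ∀ U : Set X, IsOpen U → x ∈ U →
        0 < (lam y : Measure X) U) := by
  have hab : ∀ (n : ℤ) (x : X), π ((T ^ n) x) = (S ^ n) (π x) := DistalRIM.zpow_factor hfac
  obtain ⟨Γ, G, hdom⟩ := DistalRIM.exists_good
    (a := fun n => ⟨fun x => (T ^ n) x, DistalRIM.continuous_zpow hT hT' n⟩)
    (b := fun n => ⟨fun y => (S ^ n) y, DistalRIM.continuous_zpow hS hS' n⟩)
    (p := ⟨π, hπc⟩) (fun _ _ => rfl) hπs hab hmin hdistal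
  simpa only [ContinuousMap.coe_mk, zpow_one] using G.exists_section hdom
end
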